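/- Let V be a valuation ring containing a field K of characteristic zero. Then V is a filtered union of its smooth K-subalgebras; that is, the set of K-subalgebras of V that are smooth over K is nonempty, directed under inclusion, and its union is all of V. -/

import Mathlib

/-- A commutative ring `S` is a *filtered union* of those of its `R`-subalgebras
satisfying the class (predicate) `C` if the collection of subalgebras satisfying `C`
is nonempty, directed under inclusion, and its union is all of `S`. -/
def Subalgebra.IsFilteredUnion {R S : Type*} [CommSemiring R] [CommSemiring S]
    [Algebra R S] (C : Subalgebra R S → Prop) : Prop :=
  (∃ A, C A) ∧ DirectedOn (· ≤ ·) {A | C A} ∧ ∀ s : S, ∃ A, C A ∧ s ∈ A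

open scoped TensorProduct
open MvPolynomial (aeval)

section LocalUniformization

universe u

namespace LocalUniformization

section Derivations

variable {k P E N : Type*} [CommRing k] [CommRing P] [CommRing E] [Algebra k E]
  [Algebra P E] [AddCommGroup N] [Module k N] [Module P N] [Module E N] [IsScalarTower P E N]

theorem exists_derivation_extension [Algebra k P] [IsScalarTower k P E] [IsScalarTower k P N]
    [IsScalarTower k E N] [Algebra.FormallyEtale P E] (d : Derivation k P N) :
    ∃ d' : Derivation k E N, ∀ p, d' (algebraMap P E p) = d p := by
  have h := KaehlerDifferential.isBaseChange_of_formallyEtale k P E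
  refine ⟨(h.lift d.liftKaehlerDifferential).compDer (KaehlerDifferential.D k E), fun p => ?_⟩
  have := h.lift_eq d.liftKaehlerDifferential (KaehlerDifferential.D k P p)
  simpa using this

theorem derivation_ext_of_formallyUnramified [Algebra.FormallyUnramified P E]
    (d₁ d₂ : Derivation k E N) (h : ∀ p, d₁ (algebraMap P E p) = d₂ (algebraMap P E p)) (e : E) :
    d₁ e = d₂ e := by
  let d : Derivation P E N :=
    { toFun := d₁ - d₂
      map_add' := fun x y => by simp; abel
      map_smul' := fun p e => by
        have := h p
        simp [Algebra.smul_def, Derivation.leibniz, this, smul_sub]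
      map_one_eq_zero' := by simp
      leibniz' := fun a b => by simp [smul_sub]; abel }
  have hd : d = 0 := by
    have : Subsingleton (Derivation P E N) :=
      (KaehlerDifferential.linearMapEquivDerivation P E (M := N)).symm.injective.subsingleton
    exact Subsingleton.elim _ _
  have : d e = 0 := by rw [hd]; rfl
  exact sub_eq_zero.mp this

end Derivations

/-- Derivations of the target of an unramified algebra propagate membership in a submodule. -/
theorem derivation_mem_of_formallyUnramified {P E M : Type*} [CommRing P] [CommRing E]
    [Algebra P E] [CommRing M] [Algebra.FormallyUnramified P E] (φ : E →+* M)
    (N : AddSubgroup M) (hN : ∀ e, ∀ n ∈ N, φ e * n ∈ N) (Δ : Derivation ℤ M M)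
    (h : ∀ p, Δ (φ (algebraMap P E p)) ∈ N) (e : E) : Δ (φ e) ∈ N := by
  let : Algebra E M := φ.toAlgebra
  let : Algebra P M := (φ.comp (algebraMap P E)).toAlgebra
  have : IsScalarTower P E M := IsScalarTower.of_algebraMap_eq' rfl
  let N' : Submodule E M :=
    { N with smul_mem' := fun e n hn => hN e n hn }
  let d : Derivation ℤ E (M ⧸ N') := N'.mkQ.compDer (Δ.compAlgebraMap E)
  have key := derivation_ext_of_formallyUnramified (P := P) d 0 (fun p => by
    have : Δ (φ (algebraMap P E p)) ∈ N' := h p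
    simpa [d, Derivation.compAlgebraMap, RingHom.algebraMap_toAlgebra] using this) e
  have : Δ (φ e) ∈ N' := by
    simpa [d, Derivation.compAlgebraMap, RingHom.algebraMap_toAlgebra] using key
  exact this

/-- The infinitesimal translate `F + η F ∘ d` of a ring homomorphism along a derivation. -/
def translateHom {E C : Type*} [CommRing E] [CommRing C] (F : E →+* C) (d : Derivation ℤ E E)
    (η : C) (hη : η * η = 0) : E →+* C where
  toFun y := F y + η * F (d y)
  map_one' := by simp
  map_zero' := by simp
  map_add' a b := by simp; ring
  map_mul' a b := by
    simp only [Derivation.leibniz, smul_eq_mul, map_add, map_mul]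
    linear_combination (-F (d a) * F (d b)) * hη

theorem existsUnique_lift_of_etale {P E C : Type*} [CommRing P] [CommRing E] [CommRing C]
    (j : P →+* E) (hj : j.Etale) (I : Ideal C) (hI : I ^ 2 = ⊥) (c : P →+* C) (f : E →+* C ⧸ I)
    (h : f.comp j = (Ideal.Quotient.mk I).comp c) :
    ∃! F : E →+* C, F.comp j = c ∧ (Ideal.Quotient.mk I).comp F = f := by
  let : Algebra P E := j.toAlgebra
  let : Algebra P C := c.toAlgebra
  have : Algebra.Etale P E := hj
  let f' : E →ₐ[P] C ⧸ I := { f with commutes' := fun p => RingHom.congr_fun h p }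
  obtain ⟨F, hF, hu⟩ := (Algebra.FormallyEtale.comp_bijective P E I hI).existsUnique f'
  refine ⟨F, ⟨F.comp_algebraMap, ?_⟩, ?_⟩
  · ext e; exact DFunLike.congr_fun hF e
  · rintro G ⟨hG1, hG2⟩
    have := hu { G with commutes' := fun p => RingHom.congr_fun hG1 p }
      (by ext e; exact RingHom.congr_fun hG2 e)
    ext e
    exact DFunLike.congr_fun this e

/-- Étale coordinates may be changed along an element with invertible partial derivative. -/
theorem etale_of_isUnit_derivation {K τ E : Type*} [Field K] [Finite τ] [DecidableEq τ]
    [CommRing E] [Algebra K E] (j j' : MvPolynomial τ K →ₐ[K] E) (hj : j.toRingHom.Etale)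
    (t : τ) (hjj : ∀ s ≠ t, j' (.X s) = j (.X s)) (d : Derivation K E E)
    (hd : ∀ s, d (j (.X s)) = if s = t then 1 else 0) (hu : IsUnit (d (j' (.X t)))) :
    j'.toRingHom.Etale := by
  have hK : Algebra.FinitePresentation K E := by
    let : Algebra (MvPolynomial τ K) E := j.toRingHom.toAlgebra
    have : IsScalarTower K (MvPolynomial τ K) E := IsScalarTower.of_algebraMap_eq' j.comp_algebraMap.symm
    have : Algebra.Etale (MvPolynomial τ K) E := hj
    exact Algebra.FinitePresentation.trans K (MvPolynomial τ K) E
  let dz : Derivation ℤ E E := d.restrictScalars ℤ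
  let : Algebra (MvPolynomial τ K) E := j'.toRingHom.toAlgebra
  have : IsScalarTower K (MvPolynomial τ K) E := IsScalarTower.of_algebraMap_eq' j'.comp_algebraMap.symm
  have hfp : Algebra.FinitePresentation (MvPolynomial τ K) E :=
    Algebra.FinitePresentation.of_restrict_scalars_finitePresentation K _ E
  refine @Algebra.Etale.mk _ _ _ _ _ ?_ hfp
  rw [Algebra.FormallyEtale.iff_comp_bijective]
  intro C _ _ I hI
  have hI' : ∀ a ∈ I, ∀ b ∈ I, a * b = 0 := fun a ha b hb => by
    have : a * b ∈ I ^ 2 := by rw [pow_two]; exact Ideal.mul_mem_mul ha hb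
    rwa [hI] at this
  have hC : ∀ (F : E →+* C) (G : E →+* C) , F.comp (algebraMap _ E) = G.comp (algebraMap (MvPolynomial τ K) E)
      → ∀ a, F (j (.C a)) = G (j (.C a)) := fun F G h a => by
    have h1 := RingHom.congr_fun h (.C a)
    have h2 : j (.C a) = j' (.C a) := by
      rw [← MvPolynomial.algebraMap_eq, AlgHom.commutes, AlgHom.commutes]
    rw [h2]; exact h1
  constructor
  · intro F₁ F₂ h
    replace h : ∀ e, Ideal.Quotient.mk I (F₁ e) = Ideal.Quotient.mk I (F₂ e) := fun e =>
      DFunLike.congr_fun h e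
    have hc : F₁.toRingHom.comp (algebraMap _ E) = F₂.toRingHom.comp (algebraMap (MvPolynomial τ K) E) := by
      exact F₁.comp_algebraMap.trans F₂.comp_algebraMap.symm
    have hc' : ∀ p, F₁ (j' p) = F₂ (j' p) := fun p => RingHom.congr_fun hc p
    set η := F₂ (j (.X t)) - F₁ (j (.X t)) with hη
    have hηI : η ∈ I := by
      rw [← Ideal.Quotient.eq_zero_iff_mem, hη, map_sub, h, sub_self]
    have hη0 : η * η = 0 := hI' _ hηI _ hηI
    let G := translateHom F₁.toRingHom dz η hη0
    have hGdef : ∀ y, G y = F₁ y + η * F₁ (d y) := fun y => rfl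
    have hGF : G.comp j.toRingHom = F₂.toRingHom.comp j.toRingHom := by
      apply MvPolynomial.ringHom_ext
      · intro a
        have h0 : d (j (.C a)) = 0 := by
          rw [← MvPolynomial.algebraMap_eq, AlgHom.commutes]; simp
        have := hC _ _ hc a
        change G (j (.C a)) = F₂ (j (.C a))
        rw [hGdef, h0]
        simpa using this
      · intro s
        change G (j (.X s)) = F₂ (j (.X s))
        rw [hGdef, hd]
        by_cases hs : s = t
        · subst hs; simp [hη]
        · simp only [hs, if_false, map_zero, mul_zero, add_zero, ← hjj s hs, hc']
    have hG : G = F₂.toRingHom := by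
      obtain ⟨H, -, hH⟩ := existsUnique_lift_of_etale j.toRingHom hj I hI (F₂.toRingHom.comp j.toRingHom)
        ((Ideal.Quotient.mk I).comp F₂.toRingHom) rfl
      refine (hH G ⟨hGF, ?_⟩).trans (hH F₂.toRingHom ⟨rfl, rfl⟩).symm
      ext e
      simp only [RingHom.comp_apply, hGdef, map_add, map_mul, Ideal.Quotient.eq_zero_iff_mem.2 hηI,
        zero_mul, add_zero, h]
      rfl
    have hz : η * F₁ (d (j' (.X t))) = 0 := by
      have h1 : G (j' (.X t)) = F₂ (j' (.X t)) := RingHom.congr_fun hG _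
      rw [hGdef, ← hc'] at h1
      simpa using h1
    have hη00 : η = 0 := by
      have := hu.map F₁
      exact (this.mul_left_eq_zero).1 hz
    ext e
    have : G e = F₂ e := RingHom.congr_fun hG e
    rw [← this, hGdef, hη00]; simp
  · intro f
    obtain ⟨z, hz⟩ := Ideal.Quotient.mk_surjective (f (j (.X t)))
    have hf : ∀ p, f (j' p) = Ideal.Quotient.mk I (algebraMap _ C p) := fun p => f.commutes p
    let c : MvPolynomial τ K →+* C := MvPolynomial.eval₂Hom
      ((algebraMap (MvPolynomial τ K) C).comp MvPolynomial.C)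
      (fun s => if s = t then z else algebraMap (MvPolynomial τ K) C (.X s))
    have hjC : ∀ a, j (.C a) = j' (.C a) := fun a => by
      rw [← MvPolynomial.algebraMap_eq, AlgHom.commutes, AlgHom.commutes]
    have hcomp : f.toRingHom.comp j.toRingHom = (Ideal.Quotient.mk I).comp c := by
      apply MvPolynomial.ringHom_ext
      · intro a
        change f (j (.C a)) = _
        rw [hjC, hf]; simp [c]
      · intro s
        change f (j (.X s)) = Ideal.Quotient.mk I (c (.X s))
        by_cases hs : s = t
        · subst hs; simp [c, hz]
        · rw [← hjj s hs, hf]; simp [c, hs]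
    obtain ⟨F, ⟨hF1, hF2⟩, -⟩ := existsUnique_lift_of_etale j.toRingHom hj I hI c f.toRingHom hcomp
    replace hF1 : ∀ p, F (j p) = c p := fun p => RingHom.congr_fun hF1 p
    replace hF2 : ∀ e, Ideal.Quotient.mk I (F e) = f e := fun e => RingHom.congr_fun hF2 e
    obtain ⟨v, hv⟩ := hu.exists_right_inv
    set e := algebraMap (MvPolynomial τ K) C (.X t) - F (j' (.X t)) with he
    have heI : e ∈ I := by
      rw [← Ideal.Quotient.eq_zero_iff_mem, he, map_sub, hF2, hf, sub_self]
    have hηI : e * F v ∈ I := I.mul_mem_right _ heI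
    let G := translateHom F dz (e * F v) (hI' _ hηI _ hηI)
    have hGdef : ∀ y, G y = F y + e * F v * F (d y) := fun y => rfl
    have hGj : G.comp j'.toRingHom = algebraMap (MvPolynomial τ K) C := by
      apply MvPolynomial.ringHom_ext
      · intro a
        have h0 : d (j (.C a)) = 0 := by
          rw [← MvPolynomial.algebraMap_eq, AlgHom.commutes]; simp
        change G (j' (.C a)) = _
        rw [← hjC, hGdef, h0, hF1]; simp [c]
      · intro s
        change G (j' (.X s)) = _
        by_cases hs : s = t
        · subst hs
          have : F v * F (d (j' (.X s))) = 1 := by rw [← map_mul, mul_comm, hv, map_one]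
          rw [hGdef, mul_assoc, this]; simp [he]
        · rw [hjj s hs, hGdef, hd, hF1]; simp [c, hs]
    refine ⟨{ G with commutes' := fun p => RingHom.congr_fun hGj p }, ?_⟩
    ext y
    change Ideal.Quotient.mk I (G y) = f y
    rw [hGdef, map_add, map_mul, Ideal.Quotient.eq_zero_iff_mem.2 hηI, zero_mul, add_zero, hF2]

/-- An étale `P`-algebra `E` with a homomorphism to `M` that extends `i` and has values in `A`. -/
structure IsEtaleModel {P E M : Type*} [CommRing P] [CommRing E] [CommRing M]
    (i : P →+* M) (A : Subring M) (j : P →+* E) (φ : E →+* M) : Prop where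
  etale : j.Etale
  comp_eq : φ.comp j = i
  mem : ∀ e, φ e ∈ A

theorem etale_id (P : Type*) [CommRing P] : (RingHom.id P).Etale :=
  RingHom.Etale.of_bijective Function.bijective_id

theorem etale_comp {P Q R : Type u} [CommRing P] [CommRing Q] [CommRing R] {f : P →+* Q}
    {g : Q →+* R} (hg : g.Etale) (hf : f.Etale) : (g.comp f).Etale :=
  RingHom.Etale.stableUnderComposition _ _ hf hg

theorem exists_etale_pushout {P E₁ E₂ M : Type u} [CommRing P] [CommRing E₁] [CommRing E₂]
    [CommRing M] {A : Subring M} {i : P →+* M} {j : P →+* E₁} {φ₁ : E₁ →+* M}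
    (h : IsEtaleModel i A j φ₁) {φ₂ : E₂ →+* M} (h₂ : ∀ e, φ₂ e ∈ A) (κ : P →+* E₂)
    (hκ : φ₂.comp κ = i) :
    ∃ (E : Type u) (_ : CommRing E) (α₁ : E₁ →+* E) (α₂ : E₂ →+* E) (φ : E →+* M),
      α₂.Etale ∧ φ.comp α₁ = φ₁ ∧ φ.comp α₂ = φ₂ ∧ α₁.comp j = α₂.comp κ ∧ (∀ e, φ e ∈ A) ∧
      (κ.Etale → α₁.Etale) := by
  let : Algebra P E₁ := j.toAlgebra
  let : Algebra P E₂ := κ.toAlgebra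
  let : Algebra P M := i.toAlgebra
  have : Algebra.Etale P E₁ := h.etale
  let φ₁' : E₁ →ₐ[P] M := { φ₁ with commutes' := RingHom.congr_fun h.comp_eq }
  let φ₂' : E₂ →ₐ[P] M := { φ₂ with commutes' := RingHom.congr_fun hκ }
  let φ : E₂ ⊗[P] E₁ →ₐ[P] M := Algebra.TensorProduct.lift φ₂' φ₁' fun _ _ => Commute.all _ _
  refine ⟨E₂ ⊗[P] E₁, inferInstance, (Algebra.TensorProduct.includeRight : E₁ →ₐ[P] _).toRingHom,
    algebraMap _ _, φ.toRingHom, RingHom.etale_algebraMap.2 inferInstance, ?_, ?_, ?_, ?_, ?_⟩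
  · ext e; simp [φ, φ₁']
  · ext e; simp [φ, φ₂', Algebra.TensorProduct.algebraMap_apply]
  · ext p
    exact (Algebra.TensorProduct.includeRight : E₁ →ₐ[P] E₂ ⊗[P] E₁).commutes p
  · intro e
    induction e with
    | zero => simp [A.zero_mem]
    | add x y hx hy => rw [map_add]; exact A.add_mem hx hy
    | tmul x y =>
      have : φ.toRingHom (x ⊗ₜ y) = φ₂ x * φ₁ y := by simp [φ, φ₁', φ₂']
      rw [this]; exact A.mul_mem (h₂ x) (h.mem y)
  · intro hκe
    have : Algebra.Etale P E₂ := hκe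
    have e := (Algebra.TensorProduct.comm P E₂ E₁)
    have h1 : (algebraMap E₁ (E₁ ⊗[P] E₂)).Etale := RingHom.etale_algebraMap.2 inferInstance
    have h2 := etale_comp (RingHom.Etale.of_bijective
      (Algebra.TensorProduct.comm P E₁ E₂).bijective :
        (Algebra.TensorProduct.comm P E₁ E₂).toRingEquiv.toRingHom.Etale) h1
    exact h2

variable {P M : Type u} [CommRing P] [CommRing M]

/-- Two étale models have a common refinement. -/
theorem IsEtaleModel.exists_common {E₁ E₂ : Type u} [CommRing E₁] [CommRing E₂] {i : P →+* M}
    {A : Subring M} {j₁ : P →+* E₁} {φ₁ : E₁ →+* M} (h₁ : IsEtaleModel i A j₁ φ₁)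
    {j₂ : P →+* E₂} {φ₂ : E₂ →+* M} (h₂ : IsEtaleModel i A j₂ φ₂) :
    ∃ (E : Type u) (_ : CommRing E) (j : P →+* E) (φ : E →+* M) (α₁ : E₁ →+* E) (α₂ : E₂ →+* E),
      IsEtaleModel i A j φ ∧ φ.comp α₁ = φ₁ ∧ φ.comp α₂ = φ₂ ∧ α₁.Etale ∧ α₁.comp j₁ = j ∧
      α₂.comp j₂ = j := by
  obtain ⟨E, _, α₁, α₂, φ, h, e₁, e₂, hj, hm, he⟩ :=
    exists_etale_pushout h₁ h₂.mem j₂ h₂.comp_eq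
  exact ⟨E, _, α₂.comp j₂, φ, α₁, α₂, ⟨etale_comp h h₂.etale,
    by rw [← RingHom.comp_assoc, e₂, h₂.comp_eq], hm⟩, e₁, e₂, he h₂.etale, hj, rfl⟩

/-- The elements of `A` that lie in the image of an étale model of `i`. -/
def etaleClosure (i : P →+* M) (A : Subring M) : Subring M where
  carrier := {b | ∃ (E : Type u) (_ : CommRing E) (j : P →+* E) (φ : E →+* M),
    IsEtaleModel i (A ⊔ i.range) j φ ∧ b ∈ Set.range φ}
  zero_mem' := ⟨P, _, RingHom.id P, i, ⟨etale_id P, rfl, fun e =>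
    (le_sup_right : i.range ≤ _) ⟨e, rfl⟩⟩, 0, map_zero _⟩
  one_mem' := ⟨P, _, RingHom.id P, i, ⟨etale_id P, rfl, fun e =>
    (le_sup_right : i.range ≤ _) ⟨e, rfl⟩⟩, 1, map_one _⟩
  add_mem' := by
    rintro _ _ ⟨E₁, _, j₁, φ₁, h₁, a, rfl⟩ ⟨E₂, _, j₂, φ₂, h₂, b, rfl⟩
    obtain ⟨E, _, j, φ, α₁, α₂, h, rfl, rfl, -⟩ := h₁.exists_common h₂
    exact ⟨E, _, j, φ, h, α₁ a + α₂ b, by simp⟩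
  mul_mem' := by
    rintro _ _ ⟨E₁, _, j₁, φ₁, h₁, a, rfl⟩ ⟨E₂, _, j₂, φ₂, h₂, b, rfl⟩
    obtain ⟨E, _, j, φ, α₁, α₂, h, rfl, rfl, -⟩ := h₁.exists_common h₂
    exact ⟨E, _, j, φ, h, α₁ a * α₂ b, by simp⟩
  neg_mem' := by
    rintro _ ⟨E, _, j, φ, h, a, rfl⟩
    exact ⟨E, _, j, φ, h, -a, by simp⟩

theorem mem_etaleClosure_iff {i : P →+* M} {A : Subring M} (hi : ∀ p, i p ∈ A) {b : M} :
    b ∈ etaleClosure i A ↔ ∃ (E : Type u) (_ : CommRing E) (j : P →+* E) (φ : E →+* M),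
      IsEtaleModel i A j φ ∧ b ∈ Set.range φ := by
  have : A ⊔ i.range = A := sup_eq_left.2 (by rintro _ ⟨p, rfl⟩; exact hi p)
  conv_rhs => rw [← this]
  rfl

theorem IsEtaleModel.apply_mem {E : Type u} [CommRing E] {i : P →+* M} {A : Subring M}
    {j : P →+* E} {φ : E →+* M} (h : IsEtaleModel i A j φ) (e : E) :
    φ e ∈ etaleClosure i A :=
  ⟨E, _, j, φ, ⟨h.etale, h.comp_eq, fun e => (le_sup_left : A ≤ _) (h.mem e)⟩, e, rfl⟩

theorem etaleClosure_le {i : P →+* M} {A : Subring M} (hi : ∀ p, i p ∈ A) :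
    etaleClosure i A ≤ A := by
  intro b hb
  obtain ⟨E, _, j, φ, h, e, rfl⟩ := (mem_etaleClosure_iff hi).1 hb
  exact h.mem e

theorem apply_mem_etaleClosure (i : P →+* M) (A : Subring M) (p : P) : i p ∈ etaleClosure i A :=
  ⟨P, _, RingHom.id P, i, ⟨etale_id P, rfl, fun e =>
    (le_sup_right : i.range ≤ _) ⟨e, rfl⟩⟩, p, rfl⟩

theorem etaleClosure_mono (i : P →+* M) {A B : Subring M} (h : A ≤ B) :
    etaleClosure i A ≤ etaleClosure i B := by
  rintro _ ⟨E, _, j, φ, h', e, rfl⟩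
  exact ⟨E, _, j, φ, ⟨h'.etale, h'.comp_eq, fun e => (sup_le_sup_right h _) (h'.mem e)⟩, e, rfl⟩

/-- Finitely many elements of the étale closure lie in the image of a single étale model. -/
theorem exists_etaleModel_of_finset {i : P →+* M} {A : Subring M} (hi : ∀ p, i p ∈ A)
    (s : Finset M) (hs : ∀ b ∈ s, b ∈ etaleClosure i A) :
    ∃ (E : Type u) (_ : CommRing E) (j : P →+* E) (φ : E →+* M),
      IsEtaleModel i A j φ ∧ ∀ b ∈ s, b ∈ Set.range φ := by
  classical
  induction s using Finset.induction_on with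
  | empty => exact ⟨P, _, RingHom.id P, i, ⟨etale_id P, rfl, hi⟩, by simp⟩
  | insert a s _ ih =>
    obtain ⟨E₁, _, j₁, φ₁, h₁, hs₁⟩ := ih fun b hb => hs b (Finset.mem_insert_of_mem hb)
    obtain ⟨E₂, _, j₂, φ₂, h₂, a, rfl⟩ :=
      (mem_etaleClosure_iff hi).1 (hs a (Finset.mem_insert_self _ _))
    obtain ⟨E, _, j, φ, α₁, α₂, h, rfl, rfl, -⟩ := h₁.exists_common h₂
    refine ⟨E, _, j, φ, h, fun b hb => ?_⟩
    rcases Finset.mem_insert.1 hb with rfl | hb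
    · exact ⟨α₂ a, rfl⟩
    · obtain ⟨c, rfl⟩ := hs₁ b hb
      exact ⟨α₁ c, rfl⟩

/-- Étale closures are transitive. -/
theorem etaleClosure_aeval_le {K : Type u} [Field K] [Algebra K M] [Algebra K P] {τ : Type}
    [Finite τ] {A : Subring M} (x : τ → M) (i : P →ₐ[K] M) (hi : ∀ p, i p ∈ A)
    (h : ∀ t, x t ∈ etaleClosure i.toRingHom A) :
    etaleClosure (aeval x : MvPolynomial τ K →ₐ[K] M).toRingHom A ≤
      etaleClosure i.toRingHom A := by
  classical
  have := Fintype.ofFinite τ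
  intro b hb
  have hx : ∀ p, (aeval x : MvPolynomial τ K →ₐ[K] M).toRingHom p ∈ A := by
    intro p
    induction p using MvPolynomial.induction_on with
    | C a =>
      have := hi (algebraMap K P a)
      rw [AlgHom.commutes] at this
      simpa using this
    | add p q hp hq => rw [map_add]; exact A.add_mem hp hq
    | mul_X p t hp =>
      rw [map_mul]
      refine A.mul_mem hp ?_
      simpa using etaleClosure_le (i := i.toRingHom) hi (h t)
  obtain ⟨E₁, _, j₁, φ₁, h₁, b, rfl⟩ := (mem_etaleClosure_iff hx).1 hb
  obtain ⟨E₂, _, j₂, φ₂, h₂, hr⟩ := exists_etaleModel_of_finset (i := i.toRingHom) hi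
    (Finset.univ.image x) (by simpa using h)
  choose e he using fun t => hr (x t) (by simp)
  let : Algebra K E₂ := (j₂.comp (algebraMap K P)).toAlgebra
  obtain ⟨E, _, α₁, α₂, φ, hα, rfl, rfl, -, hm, -⟩ := exists_etale_pushout h₁ h₂.mem
    (aeval e : MvPolynomial τ K →ₐ[K] E₂).toRingHom (by
      apply MvPolynomial.ringHom_ext
      · intro a
        have : φ₂ (j₂ (algebraMap K P a)) = i (algebraMap K P a) := RingHom.congr_fun h₂.comp_eq _
        simpa [RingHom.algebraMap_toAlgebra] using this
      · intro t; simp [he])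
  exact IsEtaleModel.apply_mem (j := α₂.comp j₂) ⟨etale_comp hα h₂.etale,
    by rw [← RingHom.comp_assoc, h₂.comp_eq], hm⟩ (α₁ b)

/-- An étale model may be localized at an element that becomes invertible in `A`. -/
theorem IsEtaleModel.exists_localization {E : Type u} [CommRing E] {i : P →+* M} {A : Subring M}
    {j : P →+* E} {φ : E →+* M} (h : IsEtaleModel i A j φ) {e : E} {b : M} (hb : b ∈ A)
    (hab : φ e * b = 1) :
    ∃ (F : Type u) (_ : CommRing F) (l : E →+* F) (ψ : F →+* M), l.Etale ∧ IsUnit (l e) ∧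
      ψ.comp l = φ ∧ IsEtaleModel i A (l.comp j) ψ := by
  have hu : IsUnit (φ e) := IsUnit.of_mul_eq_one _ hab
  let j' : E →+* Localization.Away e := algebraMap _ _
  let φ' : Localization.Away e →+* M := IsLocalization.Away.lift e hu
  have hj' : j'.Etale := RingHom.etale_algebraMap.2 (Algebra.Etale.of_isLocalizationAway e)
  have hφ' : ∀ y, φ' (j' y) = φ y := fun y => IsLocalization.Away.lift_eq e hu y
  have hinv : ∀ n : ℕ, φ e ^ n * b ^ n = 1 := fun n => by rw [← mul_pow, hab, one_pow]
  refine ⟨_, inferInstance, j', φ', hj', IsLocalization.Away.algebraMap_isUnit e,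
    RingHom.ext hφ', etale_comp hj' h.etale, ?_, fun y => ?_⟩
  · rw [← h.comp_eq]; ext p; simp [hφ']
  · obtain ⟨n, a, ha⟩ := IsLocalization.Away.surj e y
    have : φ' y = φ a * b ^ n := by
      have h1 : φ' (y * j' e ^ n) = φ' (j' a) := congrArg φ' ha
      rw [map_mul, map_pow, hφ', hφ'] at h1
      rw [← h1, mul_assoc, hinv, mul_one]
    rw [this]
    exact A.mul_mem (h.mem a) (A.pow_mem hb n)

/-- The étale closure is closed under inverses that exist in `A`. -/
theorem mem_etaleClosure_of_mul_eq_one {i : P →+* M} {A : Subring M} (hi : ∀ p, i p ∈ A) {a b : M}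
    (ha : a ∈ etaleClosure i A) (hb : b ∈ A) (hab : a * b = 1) : b ∈ etaleClosure i A := by
  obtain ⟨E, _, j, φ, h, e, rfl⟩ := (mem_etaleClosure_iff hi).1 ha
  obtain ⟨F, _, l, ψ, -, ⟨u, hu⟩, rfl, hF⟩ := h.exists_localization hb hab
  have : b = ψ ↑u⁻¹ := by
    calc b = ψ (↑u⁻¹ * u) * b := by simp
      _ = ψ ↑u⁻¹ * ((ψ.comp l) e * b) := by rw [map_mul, hu, mul_assoc]; rfl
      _ = _ := by rw [hab, mul_one]
  rw [this]
  exact hF.apply_mem _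

/-- An étale algebra over a normal domain is, locally at the kernel of a map to a local domain,
embedded by that map. -/
theorem exists_isUnit_mul_eq_zero {P E B : Type*} [CommRing P] [IsDomain P] [IsIntegrallyClosed P]
    [CommRing E] [CommRing B] [IsDomain B] [IsLocalRing B] (j : P →+* E) (hj : j.Etale)
    (φ : E →+* B) (hi : Function.Injective (φ.comp j)) (h : E) (hh : φ h = 0) :
    ∃ s, IsUnit (φ s) ∧ s * h = 0 := by
  let : Algebra P E := j.toAlgebra
  have : Algebra.Etale P E := hj
  let : Algebra P B := (φ.comp j).toAlgebra
  have : FaithfulSMul P B := (faithfulSMul_iff_algebraMap_injective P B).2 hi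
  let q : Ideal E := (IsLocalRing.maximalIdeal B).comap φ
  have : q.IsPrime := inferInstance
  obtain ⟨g, hg, hst⟩ := Algebra.IsEtaleAt.exists_isStandardEtale (R := P) q
  have hug : IsUnit (φ g) := by
    by_contra hc
    exact hg ((IsLocalRing.mem_maximalIdeal _).2 hc)
  let φ' : Localization.Away g →+* B := IsLocalization.Away.lift g hug
  have hφ' : ∀ y, φ' (algebraMap E _ y) = φ y := fun y => IsLocalization.Away.lift_eq g hug y
  let ψ : Localization.Away g →ₐ[P] B := { φ' with
    commutes' := fun p => by
      change φ' _ = φ (j p)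
      rw [IsScalarTower.algebraMap_apply P E (Localization.Away g), hφ']; rfl }
  obtain ⟨⟨S⟩⟩ := hst
  set θ := ψ S.x
  have hf0 : Polynomial.aeval S.x S.f = 0 := S.hasMap.1
  have hintg : IsIntegral P θ := ⟨S.f, S.monic_f, by
    rw [← Polynomial.aeval_def, Polynomial.aeval_algHom_apply, hf0, map_zero]⟩
  obtain ⟨H, hH⟩ : minpoly P θ ∣ S.f := minpoly.isIntegrallyClosed_dvd hintg (by
    rw [Polynomial.aeval_algHom_apply, hf0, map_zero])
  have hHu : IsUnit (Polynomial.aeval θ H) := by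
    have h1 := (S.hasMap.isUnit_derivative_f).map ψ
    rw [← Polynomial.aeval_algHom_apply, hH, Polynomial.derivative_mul, map_add, map_mul, map_mul,
      minpoly.aeval, zero_mul, add_zero] at h1
    exact isUnit_of_mul_isUnit_right h1
  obtain ⟨p, n, hp⟩ := S.exists_mul_aeval_x_g_pow_eq_aeval_x (algebraMap E _ h)
  have hp0 : Polynomial.aeval θ p = 0 := by
    rw [Polynomial.aeval_algHom_apply, ← hp, map_mul]
    change φ' _ * _ = 0
    rw [hφ', hh, zero_mul]
  obtain ⟨r, hr⟩ := minpoly.isIntegrallyClosed_dvd hintg hp0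
  have hz : Polynomial.aeval S.x H * algebraMap E (Localization.Away g) h = 0 := by
    have hgu : IsUnit (Polynomial.aeval S.x S.g ^ n) := S.hasMap.2.pow n
    rw [← hgu.mul_left_eq_zero, mul_assoc, hp, ← map_mul,
      show H * p = S.f * r by rw [hr, hH]; ring, map_mul, hf0, zero_mul]
  obtain ⟨m, a, ha⟩ := IsLocalization.Away.surj g (Polynomial.aeval S.x H)
  have hah : algebraMap E (Localization.Away g) (a * h) = 0 := by
    rw [map_mul, ← ha, mul_right_comm, hz, zero_mul]
  obtain ⟨⟨_, k, rfl⟩, hk⟩ := (IsLocalization.map_eq_zero_iff (Submonoid.powers g) _ _).1 hah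
  refine ⟨g ^ k * a, ?_, by rw [mul_assoc]; exact hk⟩
  rw [map_mul, map_pow]
  refine (hug.pow k).mul ?_
  have h2 : φ a = Polynomial.aeval θ H * φ g ^ m := by
    have := congrArg φ' ha
    rw [hφ', map_mul, map_pow, hφ'] at this
    rw [← this, Polynomial.aeval_algHom_apply]; rfl
  rw [h2]
  exact hHu.mul (hug.pow m)

theorem exists_isUnit_mul_ker_eq_zero {P E B : Type*} [CommRing P] [IsDomain P]
    [IsIntegrallyClosed P] [IsNoetherianRing P]
    [CommRing E] [CommRing B] [IsDomain B] [IsLocalRing B] (j : P →+* E) (hj : j.Etale)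
    (φ : E →+* B) (hi : Function.Injective (φ.comp j)) :
    ∃ s, IsUnit (φ s) ∧ ∀ h, φ h = 0 → s * h = 0 := by
  have : IsNoetherianRing E := by
    let : Algebra P E := j.toAlgebra
    have : Algebra.Etale P E := hj
    exact Algebra.FiniteType.isNoetherianRing P E
  have key : ∀ I : Ideal E, I.FG → I ≤ RingHom.ker φ → ∃ s, IsUnit (φ s) ∧ ∀ h ∈ I, s * h = 0 := by
    intro I hI
    induction I, hI using Submodule.fg_induction with
    | singleton x =>
      intro h
      obtain ⟨s, hs, hs'⟩ := exists_isUnit_mul_eq_zero j hj φ hi x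
        (h (Submodule.mem_span_singleton_self x))
      refine ⟨s, hs, fun y hy => ?_⟩
      obtain ⟨a, rfl⟩ := Submodule.mem_span_singleton.1 hy
      rw [smul_eq_mul, mul_left_comm, hs', mul_zero]
    | sup I₁ I₂ _ _ h₁ h₂ =>
      intro h
      obtain ⟨s₁, hs₁, h₁⟩ := h₁ (le_sup_left.trans h)
      obtain ⟨s₂, hs₂, h₂⟩ := h₂ (le_sup_right.trans h)
      refine ⟨s₁ * s₂, by rw [map_mul]; exact hs₁.mul hs₂, fun y hy => ?_⟩
      obtain ⟨a, ha, b, hb, rfl⟩ := Submodule.mem_sup.1 hy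
      rw [mul_add, mul_right_comm, h₁ a ha, mul_assoc, h₂ b hb]; simp
  exact key _ (IsNoetherian.noetherian _) le_rfl

section Valuation

variable {P E M : Type u} [CommRing P] [CommRing E] [Field M] {𝒪 : ValuationSubring M}

theorem valuation_sum_lt_one {ι : Type*} (s : Finset ι) (f : ι → M)
    (h : ∀ i ∈ s, 𝒪.valuation (f i) < 1) : 𝒪.valuation (∑ i ∈ s, f i) < 1 :=
  Valuation.map_sum_lt _ one_ne_zero h

theorem valuation_eq_one_of_sub {a b : M} (ha : 𝒪.valuation a = 1) (h : 𝒪.valuation (a - b) < 1) :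
    𝒪.valuation b = 1 := by
  rw [← ha] at h ⊢
  exact Valuation.map_eq_of_sub_lt _ (by rwa [Valuation.map_sub_swap] at h)

theorem exists_mul_eq_zero_of_model [IsDomain P] [IsIntegrallyClosed P] {i : P →+* M}
    (hi : Function.Injective i) {A : Subring M} (hA : A ≤ 𝒪.toSubring) {j : P →+* E}
    {φ : E →+* M} (hφ : IsEtaleModel i A j φ) {h : E} (hh : φ h = 0) :
    ∃ s, 𝒪.valuation (φ s) = 1 ∧ s * h = 0 := by
  let φ' : E →+* 𝒪 := φ.codRestrict 𝒪.toSubring fun e => hA (hφ.mem e)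
  have h1 : ∀ p, ((φ'.comp j p : 𝒪) : M) = i p := fun p => by
    rw [← hφ.comp_eq]; rfl
  obtain ⟨s, hs, hs'⟩ := exists_isUnit_mul_eq_zero j hφ.etale φ' (fun p q hpq => hi (by
    rw [← h1, ← h1, hpq])) h (Subtype.ext hh)
  exact ⟨s, (𝒪.valuation_eq_one_iff _).1 hs, hs'⟩

theorem exists_of_flat_of_smul_eq_smul {E F : Type*} [CommRing E] [AddCommGroup F] [Module E F]
    [Module.Flat E F] {f g : E} {s t : F} (h : f • s = g • t) :
    ∃ (n : ℕ) (a b : Fin n → E) (y : Fin n → F), s = ∑ l, a l • y l ∧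
      ∀ l, f * a l = g * b l := by
  have hrel : ∑ k : Fin 2, (![f, -g] k) • (![s, t] k) = 0 := by
    rw [Fin.sum_univ_two]
    simp [h]
  obtain ⟨n, a, y, hay, ha0⟩ := Module.Flat.isTrivialRelation_of_sum_smul_eq_zero hrel
  refine ⟨n, a 0, a 1, y, hay 0, fun l => ?_⟩
  have := ha0 l
  rw [Fin.sum_univ_two] at this
  simp only [Matrix.cons_val_zero, Matrix.cons_val_one] at this
  linear_combination this

theorem exists_of_flat_of_mul_eq_mul {E F : Type*} [CommRing E] [CommRing F] (α : E →+* F)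
    (hα : α.Flat) {f g : E} {s t : F} (h : α f * s = α g * t) :
    ∃ (n : ℕ) (a b : Fin n → E) (y : Fin n → F), s = ∑ l, α (a l) * y l ∧
      ∀ l, f * a l = g * b l := 
  @exists_of_flat_of_smul_eq_smul E F _ _ α.toAlgebra.toModule hα f g s t h

/-- Divisibility descends to étale closures in smaller rings. -/
theorem mem_etaleClosure_of_eq_mul [IsDomain P] [IsIntegrallyClosed P] {i : P →+* M}
    (hi : Function.Injective i) {A B : Subring M} (hAB : A ≤ B) (hB : B ≤ 𝒪.toSubring)
    (hiA : ∀ p, i p ∈ A)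
    (hdiv : ∀ a ∈ A, ∀ b ∈ A, a / b ∈ 𝒪 → a / b ∈ A) {f g h : M} (hf : f ∈ etaleClosure i A)
    (hg : g ∈ etaleClosure i A) (hg0 : g ≠ 0) (hh : h ∈ etaleClosure i B) (hfgh : f = g * h) :
    h ∈ etaleClosure i A := by
  classical
  obtain ⟨E₁, _, j₁, φ₁, h₁, hr⟩ := exists_etaleModel_of_finset hiA {f, g} (by
    simp [hf, hg])
  obtain ⟨f, rfl⟩ := hr f (by simp)
  obtain ⟨g, rfl⟩ := hr g (by simp)
  obtain ⟨E₂, _, j₂, φ₂, h₂, h, rfl⟩ := (mem_etaleClosure_iff fun p => hAB (hiA p)).1 hh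
  have h₁' : IsEtaleModel i B j₁ φ₁ := ⟨h₁.etale, h₁.comp_eq, fun e => hAB (h₁.mem e)⟩
  obtain ⟨E, _, j, φ, α₁, α₂, hE, e₁, e₂, hα, -⟩ := h₁'.exists_common h₂
  have e₁' : ∀ y, φ (α₁ y) = φ₁ y := fun y => RingHom.congr_fun e₁ y
  have e₂' : ∀ y, φ (α₂ y) = φ₂ y := fun y => RingHom.congr_fun e₂ y
  obtain ⟨s, hs, hs0⟩ := exists_mul_eq_zero_of_model hi hB hE (h := α₁ f - α₁ g * α₂ h) (by
    rw [map_sub, map_mul, e₁', e₁', e₂', hfgh, sub_self])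
  obtain ⟨n, a, b, y, hs1, hab⟩ := exists_of_flat_of_mul_eq_mul α₁
    (RingHom.Etale.iff_flat_and_formallyUnramified.1 hα).1 (f := f) (g := g) (s := s)
    (t := s * α₂ h) (by linear_combination hs0)
  obtain ⟨l, hl⟩ : ∃ l, 𝒪.valuation (φ₁ (a l)) = 1 := by
    by_contra! hc
    refine (valuation_sum_lt_one (𝒪 := 𝒪) Finset.univ (fun l => φ (α₁ (a l) * y l)) ?_).ne ?_
    · intro l _
      rw [map_mul, map_mul, e₁']
      refine (mul_le_of_le_one_right' ((𝒪.valuation_le_one_iff _).2 (hB (hE.mem _)))).trans_lt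
        (lt_of_le_of_ne ((𝒪.valuation_le_one_iff _).2 (hB (h₁'.mem _))) (hc l))
    · rw [← map_sum, ← hs1, hs]
  have hl0 : φ₁ (a l) ≠ 0 := fun h0 => by simp [h0] at hl
  have h3 : φ₁ g * (φ₂ h * φ₁ (a l)) = φ₁ g * φ₁ (b l) := by
    have := congrArg φ₁ (hab l)
    rw [map_mul, map_mul, hfgh] at this
    rw [← this]; ring
  have h4 : φ₂ h = φ₁ (b l) * (1 / φ₁ (a l)) := by
    rw [← mul_left_cancel₀ hg0 h3]
    field_simp
  rw [h4]
  have h5 : 1 / φ₁ (a l) ∈ A := hdiv 1 A.one_mem _ (h₁.mem _) (by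
    rw [← 𝒪.valuation_le_one_iff, map_div₀, hl]; simp)
  exact (etaleClosure i A).mul_mem (h₁.apply_mem _)
    (mem_etaleClosure_of_mul_eq_one hiA (h₁.apply_mem (a l)) h5 (mul_one_div_cancel hl0))

/-- Nonzero elements of an étale closure divide nonzero elements of the base. -/
theorem exists_mul_eq_apply [IsDomain P] {i : P →+* M} (hi : Function.Injective i) {A : Subring M}
    (hiA : ∀ p, i p ∈ A) {a : M} (ha : a ∈ etaleClosure i A) (ha0 : a ≠ 0) :
    ∃ b ∈ etaleClosure i A, ∃ N : P, N ≠ 0 ∧ a * b = i N := by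
  obtain ⟨E, _, j, φ, h, e, rfl⟩ := (mem_etaleClosure_iff hiA).1 ha
  let : Algebra P E := j.toAlgebra
  have : Algebra.Etale P E := h.etale
  let F := FractionRing P
  have hfin : Module.Finite F (F ⊗[P] E) := Algebra.FormallyUnramified.finite_of_free F (F ⊗[P] E)
  have hintg : IsAlgebraic F (1 ⊗ₜ e : F ⊗[P] E) :=
    (IsIntegral.of_finite F _).isAlgebraic
  let iF : F →+* M := IsFractionRing.lift hi
  have hiF : ∀ p, iF (algebraMap P F p) = i p := fun p => IsFractionRing.lift_algebraMap hi p
  let : Algebra P M := i.toAlgebra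
  let : Algebra F M := iF.toAlgebra
  have : IsScalarTower P F M := IsScalarTower.of_algebraMap_eq fun p => (hiF p).symm
  let Φ : F ⊗[P] E →ₐ[F] M := Algebra.TensorProduct.lift (Algebra.ofId F M)
    { φ with commutes' := RingHom.congr_fun h.comp_eq } fun _ _ => Commute.all _ _
  have hΦ : Φ (1 ⊗ₜ e) = φ e := by simp [Φ]
  have h1 : IsAlgebraic F (φ e) := hΦ ▸ hintg.algHom Φ
  have h2 : IsAlgebraic P (φ e) := (IsFractionRing.isAlgebraic_iff P F M).2 h1
  let R := etaleClosure i A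
  let iR : P →+* R := i.codRestrict R (apply_mem_etaleClosure i A)
  let : Algebra P R := iR.toAlgebra
  have : IsScalarTower P R M := IsScalarTower.of_algebraMap_eq fun p => rfl
  have h3 : IsAlgebraic P (⟨φ e, ha⟩ : R) :=
    (isAlgebraic_algebraMap_iff (A := M) Subtype.val_injective).1 h2
  obtain ⟨N, hN, b, hb⟩ := h3.exists_nonzero_dvd (mem_nonZeroDivisors_of_ne_zero (by
    intro h0; exact ha0 (congrArg Subtype.val h0)))
  exact ⟨b, b.2, N, hN, (congrArg Subtype.val hb).symm⟩

end Valuation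

section Specialization

/-- Étale algebras specialize along a principal ideal with a section. -/
theorem exists_etale_specialization {P P₀ E : Type u} [CommRing P] [CommRing P₀] [CommRing E]
    {ι : P₀ →+* P} {ε : P →+* P₀} (hε : ε.comp ι = RingHom.id P₀) {z : P}
    (hz : ∀ p, ε p = 0 → z ∣ p) {j : P →+* E} (hj : j.Etale) :
    ∃ (F : Type u) (_ : CommRing F) (j₀ : P₀ →+* F) (q : E →+* F), j₀.Etale ∧
      q.comp j = j₀.comp ε ∧ Function.Surjective q ∧ (∀ e, q e = 0 → j z ∣ e) ∧
      ∀ (B : Type u) [CommRing B] (f : P₀ →+* B) (g : E →+* B), g.comp j = f.comp ε →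
        ∃ h : F →+* B, h.comp j₀ = f ∧ h.comp q = g := by
  let : Algebra P E := j.toAlgebra
  let : Algebra P P₀ := ε.toAlgebra
  have : Algebra.Etale P E := hj
  have hε' : ∀ p, ε (ι p) = p := fun p => RingHom.congr_fun hε p
  have hlift : ∀ (B : Type u) [CommRing B] (f : P₀ →+* B) (g : E →+* B), g.comp j = f.comp ε →
      ∃ h : P₀ ⊗[P] E →+* B, h.comp (algebraMap P₀ _) = f ∧
        h.comp (Algebra.TensorProduct.includeRight : E →ₐ[P] P₀ ⊗[P] E).toRingHom = g := by
    intro B _ f g hfg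
    let : Algebra P B := (g.comp j).toAlgebra
    let h : P₀ ⊗[P] E →ₐ[P] B := Algebra.TensorProduct.lift
      { f with commutes' := fun p => (RingHom.congr_fun hfg p).symm }
      { g with commutes' := fun p => rfl } fun _ _ => Commute.all _ _
    refine ⟨h.toRingHom, ?_, ?_⟩
    · ext p; simp [h, Algebra.TensorProduct.algebraMap_apply]
    · ext p; simp [h]
  refine ⟨P₀ ⊗[P] E, inferInstance, algebraMap _ _,
    (Algebra.TensorProduct.includeRight : E →ₐ[P] P₀ ⊗[P] E).toRingHom,
    RingHom.etale_algebraMap.2 inferInstance, ?_, ?_, ?_, hlift⟩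
  · ext p
    exact (Algebra.TensorProduct.includeRight : E →ₐ[P] P₀ ⊗[P] E).commutes p
  · intro y
    induction y with
    | zero => exact ⟨0, map_zero _⟩
    | add x y hx hy =>
      obtain ⟨a, rfl⟩ := hx
      obtain ⟨b, rfl⟩ := hy
      exact ⟨a + b, map_add _ _ _⟩
    | tmul x y =>
      refine ⟨ι x • y, ?_⟩
      change (1 : P₀) ⊗ₜ[P] (ι x • y) = _
      rw [← TensorProduct.smul_tmul, Algebra.smul_def]
      change (ε (ι x) * 1) ⊗ₜ[P] y = _
      rw [hε', mul_one]
  · intro e he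
    obtain ⟨h, -, hg⟩ := hlift (E ⧸ Ideal.span {j z})
      ((Ideal.Quotient.mk _).comp (j.comp ι)) (Ideal.Quotient.mk _) (by
        ext p
        obtain ⟨c, hc⟩ := hz (p - ι (ε p)) (by simp [hε'])
        simp only [RingHom.comp_apply]
        rw [Ideal.Quotient.eq, ← map_sub, hc, map_mul]
        exact Ideal.mul_mem_right _ _ (Ideal.mem_span_singleton_self _))
    rw [← Ideal.mem_span_singleton, ← Ideal.Quotient.eq_zero_iff_mem, ← hg, RingHom.comp_apply, he,
      map_zero]

/-- Valuation rings of algebraically closed fields are strictly Henselian. -/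
theorem exists_lift_residue {P E M : Type u} [CommRing P] [CommRing E] [Field M] [IsAlgClosed M]
    {𝒪 : ValuationSubring M} {j : P →+* E} (hj : j.Etale) (i : P →+* 𝒪)
    (ρ : E →+* IsLocalRing.ResidueField 𝒪) (hρ : ρ.comp j = (IsLocalRing.residue 𝒪).comp i) :
    ∃ ψ : E →+* 𝒪, ψ.comp j = i ∧ (IsLocalRing.residue 𝒪).comp ψ = ρ := by
  let : Algebra P E := j.toAlgebra
  have : Algebra.Etale P E := hj
  let : Algebra P 𝒪 := i.toAlgebra
  let k := IsLocalRing.ResidueField 𝒪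
  let : Algebra P k := ((IsLocalRing.residue 𝒪).comp i).toAlgebra
  let res : 𝒪 →ₐ[P] k := { IsLocalRing.residue 𝒪 with commutes' := fun p => rfl }
  have hres : ∀ a, res a = IsLocalRing.residue 𝒪 a := fun a => rfl
  let q : Ideal E := RingHom.ker ρ
  have : q.IsPrime := RingHom.ker_isPrime ρ
  obtain ⟨g, hg, hst⟩ := Algebra.IsEtaleAt.exists_isStandardEtale (R := P) q
  have hug : IsUnit (ρ g) := isUnit_iff_ne_zero.2 hg
  let ρ' : Localization.Away g →+* k := IsLocalization.Away.lift g hug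
  have hρ' : ∀ y, ρ' (algebraMap E _ y) = ρ y := fun y => IsLocalization.Away.lift_eq g hug y
  let ρ'' : Localization.Away g →ₐ[P] k := { ρ' with
    commutes' := fun p => by
      change ρ' _ = _
      rw [IsScalarTower.algebraMap_apply P E (Localization.Away g), hρ']
      exact RingHom.congr_fun hρ p }
  obtain ⟨⟨S⟩⟩ := hst
  obtain ⟨r, hr⟩ : ∃ r : 𝒪, Polynomial.aeval r S.f = 0 ∧ res r = ρ'' S.x := by
    obtain ⟨a, ha⟩ := IsLocalRing.residue_surjective (R := 𝒪) (ρ'' S.x)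
    let F : Polynomial 𝒪 := S.f.map i
    have hF : F.Monic := S.monic_f.map i
    have hsp : (F.map (algebraMap 𝒪 M)).Splits := IsAlgClosed.splits _
    have h1 : 𝒪.valuation ((F.map (algebraMap 𝒪 M)).eval (a : M)) < 1 := by
      have h2 : (F.map (algebraMap 𝒪 M)).eval (a : M) = ((F.eval a : 𝒪) : M) := by
        rw [Polynomial.eval_map_algebraMap]
        exact Polynomial.aeval_algebraMap_apply M a F
      rw [h2, ← ValuationSubring.valuation_lt_one_iff, ← IsLocalRing.residue_eq_zero_iff]
      change res (F.eval a) = 0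
      have h3 : F.eval a = Polynomial.aeval a S.f := by
        rw [Polynomial.eval_map]; rfl
      rw [h3, ← Polynomial.aeval_algHom_apply, hres, ha, Polynomial.aeval_algHom_apply,
        S.hasMap.1, map_zero]
    rw [hsp.eval_eq_prod_roots_of_monic (hF.map _), map_multiset_prod, Multiset.map_map] at h1
    obtain ⟨b, hb, hb1⟩ : ∃ b ∈ (F.map (algebraMap 𝒪 M)).roots, 𝒪.valuation ((a : M) - b) < 1 := by
      by_contra! hc
      refine h1.not_ge (Multiset.one_le_prod ?_)
      intro x hx
      obtain ⟨b, hb, rfl⟩ := Multiset.mem_map.1 hx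
      exact hc b hb
    have hbr : (F.map (algebraMap 𝒪 M)).eval b = 0 := (Polynomial.mem_roots'.1 hb).2
    have hintg : IsIntegral 𝒪 b := ⟨F, hF, by rwa [Polynomial.eval_map] at hbr⟩
    obtain ⟨b, rfl⟩ := IsIntegrallyClosed.isIntegral_iff.1 hintg
    refine ⟨b, ?_, ?_⟩
    · rw [Polynomial.eval_map_algebraMap, Polynomial.aeval_algebraMap_apply,
        map_eq_zero_iff _ (IsFractionRing.injective 𝒪 M)] at hbr
      rw [← hbr, Polynomial.aeval_def, Polynomial.aeval_def, Polynomial.eval₂_map]; rfl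
    · have h4 : 𝒪.valuation ((a - b : 𝒪) : M) < 1 := hb1
      rw [← ValuationSubring.valuation_lt_one_iff, ← IsLocalRing.residue_eq_zero_iff, map_sub,
        sub_eq_zero, ha] at h4
      rw [h4]; rfl
  have hmap : S.HasMap r := by
    refine ⟨hr.1, ?_⟩
    have h1 : IsUnit (res (Polynomial.aeval r S.g)) := by
      rw [← Polynomial.aeval_algHom_apply, hr.2, Polynomial.aeval_algHom_apply]
      exact S.hasMap.2.map ρ''
    exact (isUnit_map_iff (IsLocalRing.residue 𝒪) _).1 h1
  let ψ : Localization.Away g →ₐ[P] 𝒪 := (S.lift r hmap).comp S.equivRing.toAlgHom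
  have hψx : ψ S.x = r := by simp [ψ]
  have hψ : res.comp ψ = ρ'' := S.hom_ext (by simp [hψx, hr.2])
  refine ⟨ψ.toRingHom.comp (algebraMap E _), ?_, ?_⟩
  · ext p
    change ((ψ (algebraMap E _ (algebraMap P E p)) : 𝒪) : M) = i p
    rw [← IsScalarTower.algebraMap_apply, ψ.commutes]; rfl
  · refine RingHom.ext fun e => ?_
    rw [← hρ' e]
    exact DFunLike.congr_fun hψ (algebraMap E _ e)

variable {P P₀ E M : Type u} [CommRing P] [CommRing P₀] [CommRing E] [Field M] [IsAlgClosed M]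
  {𝒪 : ValuationSubring M} {i : P →+* M} {ι : P₀ →+* P} {ε : P →+* P₀} {z : P}

theorem IsEtaleModel.exists_specialization (hε : ε.comp ι = RingHom.id P₀)
    (hz : ∀ p, ε p = 0 → z ∣ p) (hi : ∀ p, i p ∈ 𝒪) (hzm : 𝒪.valuation (i z) < 1)
    {j : P →+* E} {φ : E →+* M} (h : IsEtaleModel i 𝒪.toSubring j φ) :
    ∃ (F : Type u) (_ : CommRing F) (j₀ : P₀ →+* F) (q : E →+* F) (ψ : F →+* M),
      IsEtaleModel (i.comp ι) 𝒪.toSubring j₀ ψ ∧ q.comp j = j₀.comp ε ∧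
      Function.Surjective q ∧ (∀ e, q e = 0 → j z ∣ e) ∧ ∀ e, 𝒪.valuation (φ e - ψ (q e)) < 1 := by
  obtain ⟨F, _, j₀, q, hj₀, hq, hqs, hqz, hlift⟩ := exists_etale_specialization hε hz h.etale
  have hε' : ∀ p, ε (ι p) = p := fun p => RingHom.congr_fun hε p
  let i' : P →+* 𝒪 := i.codRestrict 𝒪.toSubring hi
  let φ' : E →+* 𝒪 := φ.codRestrict 𝒪.toSubring h.mem
  have hφ' : φ'.comp j = i' := RingHom.ext fun p => Subtype.ext (RingHom.congr_fun h.comp_eq p)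
  obtain ⟨ρ, hρ, hρq⟩ := hlift _ ((IsLocalRing.residue 𝒪).comp (i'.comp ι))
    ((IsLocalRing.residue 𝒪).comp φ') (by
      rw [RingHom.comp_assoc, hφ']
      refine RingHom.ext fun p => ?_
      obtain ⟨c, hc⟩ := hz (p - ι (ε p)) (by simp [hε'])
      simp only [RingHom.comp_apply]
      rw [← sub_eq_zero, ← map_sub, ← map_sub, hc, map_mul, map_mul]
      have : IsLocalRing.residue 𝒪 (i' z) = 0 := by
        rw [IsLocalRing.residue_eq_zero_iff, ValuationSubring.valuation_lt_one_iff]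
        exact hzm
      rw [this, zero_mul])
  obtain ⟨ψ, hψ, hψρ⟩ := exists_lift_residue hj₀ (i'.comp ι) ρ hρ
  refine ⟨F, _, j₀, q, 𝒪.subtype.comp ψ, ⟨hj₀, ?_, fun e => (ψ e).2⟩, hq, hqs, hqz, fun e => ?_⟩
  · rw [RingHom.comp_assoc, hψ]; rfl
  · have h1 : IsLocalRing.residue 𝒪 (φ' e - ψ (q e)) = 0 := by
      rw [map_sub, sub_eq_zero]
      have h2 := RingHom.congr_fun hψρ (q e)
      rw [RingHom.comp_apply] at h2
      rw [h2]
      exact (RingHom.congr_fun hρq e).symm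
    rw [IsLocalRing.residue_eq_zero_iff, ValuationSubring.valuation_lt_one_iff] at h1
    exact h1

/-- Elements of an étale closure are congruent to elements that do not involve `z`. -/
theorem exists_sub_eq_mul (hε : ε.comp ι = RingHom.id P₀)
    (hz : ∀ p, ε p = 0 → z ∣ p) (hi : ∀ p, i p ∈ 𝒪) (hzm : 𝒪.valuation (i z) < 1) {f : M}
    (hf : f ∈ etaleClosure i 𝒪.toSubring) :
    ∃ a ∈ etaleClosure (i.comp ι) 𝒪.toSubring, ∃ w ∈ etaleClosure i 𝒪.toSubring,
      f = a + i z * w := by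
  obtain ⟨E, _, j, φ, h, e, rfl⟩ := (mem_etaleClosure_iff hi).1 hf
  obtain ⟨F, _, j₀, q, ψ, hψ, hqj, hqs, hqz, hφψ⟩ := h.exists_specialization hε hz hi hzm
  refine ⟨ψ (q e), hψ.apply_mem _, ?_⟩
  have hε' : ∀ p, ε (ι p) = p := fun p => RingHom.congr_fun hε p
  have hqι : (q.comp j).comp ι = j₀ := by
    rw [hqj, RingHom.comp_assoc, hε, RingHom.comp_id]
  let : Algebra P₀ E := (j.comp ι).toAlgebra
  let : Algebra P₀ F := j₀.toAlgebra
  have : Algebra.Etale P₀ F := hψ.etale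
  let : Algebra P₀ M := (i.comp ι).toAlgebra
  let q' : E →ₐ[P₀] F := { q with commutes' := RingHom.congr_fun hqι }
  let φ' : E →ₐ[P₀] M := { φ with commutes' := fun p => RingHom.congr_fun h.comp_eq (ι p) }
  let ψ' : F →ₐ[P₀] M := { ψ with commutes' := fun p => RingHom.congr_fun hψ.comp_eq p }
  let χ : E ⊗[P₀] F →ₐ[P₀] M := Algebra.TensorProduct.lift φ' ψ' fun _ _ => Commute.all _ _
  have hχt : ∀ x y, χ (x ⊗ₜ y) = φ x * ψ y := fun x y => Algebra.TensorProduct.lift_tmul _ _ _ _ _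
  have hχm : ∀ y, χ y ∈ 𝒪.toSubring := by
    intro y
    induction y with
    | zero => rw [map_zero]; exact Subring.zero_mem _
    | add x y hx hy => rw [map_add]; exact Subring.add_mem _ hx hy
    | tmul x y => rw [hχt]; exact Subring.mul_mem _ (h.mem x) (hψ.mem y)
  let Q : E ⊗[P₀] F →ₐ[P₀] F ⊗[P₀] F := Algebra.TensorProduct.map q' (AlgHom.id P₀ F)
  have hQs : Function.Surjective Q := Algebra.TensorProduct.map_surjective _ _ hqs
    Function.surjective_id
  have hχQ : ∀ y, 𝒪.valuation (χ y - ψ (Algebra.TensorProduct.lmul' P₀ (Q y))) < 1 := by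
    intro y
    induction y with
    | zero => simp
    | add x y hx hy =>
      simp only [map_add]
      rw [add_sub_add_comm]
      exact Valuation.map_add_lt _ hx hy
    | tmul x y =>
      rw [hχt]
      have : Algebra.TensorProduct.lmul' P₀ (Q (x ⊗ₜ y)) = q x * y := by simp [Q, q']
      rw [this, map_mul, ← sub_mul, map_mul]
      exact (mul_le_of_le_one_right' ((𝒪.valuation_le_one_iff _).2 (hψ.mem _))).trans_lt (hφψ x)
  have hmodel : IsEtaleModel i 𝒪.toSubring
      ((algebraMap E (E ⊗[P₀] F)).comp j) χ.toRingHom := by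
    refine ⟨etale_comp (RingHom.etale_algebraMap.2 inferInstance) h.etale, ?_, hχm⟩
    rw [← h.comp_eq]
    ext p
    change χ (j p ⊗ₜ 1) = φ (j p)
    rw [hχt, map_one, mul_one]
  obtain ⟨l, hl⟩ := hQs (Algebra.FormallyUnramified.elem P₀ F)
  have hl1 : 𝒪.valuation (χ l) = 1 := by
    refine valuation_eq_one_of_sub (a := 1) (map_one _) ?_
    have := hχQ l
    rwa [hl, Algebra.FormallyUnramified.lmul_elem, map_one, Valuation.map_sub_swap] at this
  have hl0 : χ l ≠ 0 := fun h0 => by simp [h0] at hl1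
  have hker : (e ⊗ₜ 1 - 1 ⊗ₜ q e) * l ∈ RingHom.ker Q := by
    rw [RingHom.mem_ker, map_mul, hl, map_sub]
    have h1 : Q (e ⊗ₜ 1) = q e ⊗ₜ 1 := by simp [Q, q']
    have h2 : Q (1 ⊗ₜ q e) = 1 ⊗ₜ q e := by simp [Q]
    rw [h1, h2, ← neg_sub, neg_mul, Algebra.FormallyUnramified.one_tmul_sub_tmul_one_mul_elem,
      neg_zero]
  rw [Algebra.TensorProduct.rTensor_ker q' hqs] at hker
  have hker' : Ideal.map (Algebra.TensorProduct.includeLeft : E →ₐ[P₀] E ⊗[P₀] F)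
      (RingHom.ker q') ≤ Ideal.span {j z ⊗ₜ 1} := by
    rw [Ideal.map_le_iff_le_comap]
    intro y hy
    obtain ⟨c, rfl⟩ := hqz y hy
    rw [Ideal.mem_comap, map_mul]
    exact Ideal.mul_mem_right _ _ (Ideal.mem_span_singleton_self _)
  obtain ⟨w, hw⟩ := Ideal.mem_span_singleton.1 (hker' hker)
  have h3 : (φ e - ψ (q e)) * χ l = i z * χ w := by
    have := congrArg χ hw
    rw [map_mul, map_mul, map_sub, hχt, hχt, hχt, map_one, map_one, mul_one, one_mul, mul_one]
      at this
    rw [this, ← h.comp_eq]; rfl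
  refine ⟨χ w * (χ l)⁻¹, Subring.mul_mem _ (hmodel.apply_mem w)
    (mem_etaleClosure_of_mul_eq_one hi (hmodel.apply_mem l) ?_ (mul_inv_cancel₀ hl0)), ?_⟩
  · rw [ValuationSubring.mem_toSubring, ← 𝒪.valuation_le_one_iff, map_inv₀, inv_le_one₀]
    · exact hl1.ge
    · rw [hl1]; exact one_pos
  · rw [← mul_assoc, ← h3]
    field_simp
    ring

/-- Nonzero elements that do not involve `z` are not divisible by `z`. -/
theorem eq_zero_of_eq_mul [IsDomain P] [IsDomain P₀] [IsIntegrallyClosed P]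
    (hinj : Function.Injective i) (hε : ε.comp ι = RingHom.id P₀) (hz0 : ε z = 0)
    (hz : ∀ p, ε p = 0 → z ∣ p) (hi : ∀ p, i p ∈ 𝒪) (hzm : 𝒪.valuation (i z) < 1) {a w : M}
    (ha : a ∈ etaleClosure (i.comp ι) 𝒪.toSubring) (hw : w ∈ etaleClosure i 𝒪.toSubring)
    (haw : a = i z * w) : a = 0 := by
  by_contra ha0
  have hε' : ∀ p, ε (ι p) = p := fun p => RingHom.congr_fun hε p
  have hι : Function.Injective ι := fun p p' hp => by rw [← hε' p, hp, hε']
  obtain ⟨b, hb, N, hN, hab⟩ := exists_mul_eq_apply (i := i.comp ι) (hinj.comp hι)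
    (fun p => hi _) ha ha0
  have hb' : b ∈ etaleClosure i 𝒪.toSubring := by
    obtain ⟨F, _, j₀, ψ, hψ, b, rfl⟩ := 
      (mem_etaleClosure_iff (i := i.comp ι) fun p => hi _).1 hb
    obtain ⟨E, _, α₁, α₂, φ, hα, h1, h2, -, hm, -⟩ := exists_etale_pushout hψ (φ₂ := i) hi ι rfl
    rw [← h1]
    exact IsEtaleModel.apply_mem ⟨hα, h2, hm⟩ _
  obtain ⟨E, _, j, φ, h, e, he⟩ := (mem_etaleClosure_iff hi).1 (Subring.mul_mem _ hw hb')
  obtain ⟨F, _, j₀, q, ψ, hψ, hqj, hqs, hqz, hφψ⟩ := h.exists_specialization hε hz hi hzm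
  have hij : ∀ p, φ (j p) = i p := fun p => RingHom.congr_fun h.comp_eq p
  obtain ⟨s, hs, hs0⟩ := exists_mul_eq_zero_of_model hinj le_rfl h (h := j (ι N) - j z * e) (by
    rw [map_sub, map_mul, hij, hij, he]
    change (i.comp ι) N - _ = _
    rw [← hab, haw]; ring)
  have hqj' : ∀ p, q (j p) = j₀ (ε p) := fun p => RingHom.congr_fun hqj p
  have h1 : q s * j₀ N = 0 := by
    have := congrArg q hs0
    rwa [map_mul, map_sub, map_mul, hqj', hqj', hz0, map_zero, zero_mul, sub_zero, hε', map_zero]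
      at this
  have h2 : q s = 0 := by
    let : Algebra P₀ F := j₀.toAlgebra
    have : Algebra.Etale P₀ F := hψ.etale
    have hr : IsSMulRegular F (algebraMap P₀ F N) := (IsSMulRegular.of_right_eq_zero_of_smul fun x hx =>
      (mul_eq_zero.1 hx).resolve_left hN : IsSMulRegular P₀ N).of_flat
    exact hr.right_eq_zero_of_smul (by rw [mul_comm] at h1; exact h1)
  have h3 := hφψ s
  rw [h2, map_zero, sub_zero, hs] at h3
  exact lt_irrefl _ h3

end Specialization

section Coordinates

set_option linter.unusedSectionVars false

variable {K M : Type u} [Field K] [Field M] [Algebra K M] {σ : Type} [DecidableEq σ]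

theorem derivation_aeval {x : σ → M} {i : σ} {D : Derivation K M M}
    (hD : ∀ j, D (x j) = if i = j then 1 else 0) (p : MvPolynomial σ K) :
    D (aeval x p) = aeval x (MvPolynomial.pderiv i p) := by
  induction p using MvPolynomial.induction_on with
  | C a => simp
  | add p q hp hq => simp [hp, hq]
  | mul_X p j hp =>
    rw [map_mul, Derivation.leibniz, hp, MvPolynomial.aeval_X, hD, Derivation.leibniz,
      MvPolynomial.pderiv_X]
    by_cases h : i = j
    · subst h; simp
    · simp [h]

/-- Functions with dual derivations are algebraically independent. -/
theorem algebraicIndependent_of_derivation [CharZero K] {x : σ → M} {D : σ → Derivation K M M}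
    (hD : ∀ i j, D i (x j) = if i = j then 1 else 0) : AlgebraicIndependent K x := by
  rw [algebraicIndependent_iff]
  have key : ∀ (n : ℕ) (p : MvPolynomial σ K), (∀ m : σ →₀ ℕ, n ≤ m.degree → p.coeff m = 0) →
      aeval x p = 0 → p = 0 := by
    intro n
    induction n with
    | zero => exact fun p hp _ => MvPolynomial.ext _ _ fun m => by simp [hp m]
    | succ n ih =>
      intro p hp h0
      have h1 : ∀ i, MvPolynomial.pderiv i p = 0 := fun i => by
        refine ih _ (fun m hm => ?_) (by rw [← derivation_aeval (hD i), h0, map_zero])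
        rw [MvPolynomial.coeff_pderiv, hp _ (by simpa using hm), zero_mul]
      have h2 : p = MvPolynomial.C (p.coeff 0) := by
        ext m
        rw [MvPolynomial.coeff_C]
        split_ifs with hm
        · rw [hm]
        · obtain ⟨i, hi⟩ := Finsupp.ne_iff.1 (Ne.symm hm)
          have h3 := MvPolynomial.coeff_pderiv (i := i) p (m - Finsupp.single i 1)
          rw [h1, MvPolynomial.coeff_zero, tsub_add_cancel_of_le
            (by simpa [Nat.one_le_iff_ne_zero] using hi)] at h3
          exact (mul_eq_zero.1 h3.symm).resolve_right (by norm_cast)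
      rw [h2, MvPolynomial.aeval_C] at h0
      rw [h2, (map_eq_zero (algebraMap K M)).1 h0, map_zero]
  intro p
  refine key (p.totalDegree + 1) p fun m hm => ?_
  by_contra hc
  have := MvPolynomial.le_totalDegree (MvPolynomial.mem_support_iff.2 hc)
  change m.degree ≤ _ at this
  omega

variable (𝒪 : ValuationSubring M) (L : IntermediateField K M)

/-- The valuation ring induced on the subfield `L`. -/
def valRing : Subring M := 𝒪.toSubring ⊓ L.toSubfield.toSubring

variable {𝒪 L}

theorem mem_valRing {a : M} : a ∈ valRing 𝒪 L ↔ a ∈ 𝒪 ∧ a ∈ L := Iff.rfl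

theorem valRing_le : valRing 𝒪 L ≤ 𝒪.toSubring := inf_le_left

theorem valRing_mono {L' : IntermediateField K M} (h : L ≤ L') : valRing 𝒪 L ≤ valRing 𝒪 L' :=
  fun _ ha => ⟨ha.1, h ha.2⟩

theorem valRing_top : valRing 𝒪 (⊤ : IntermediateField K M) = 𝒪.toSubring :=
  le_antisymm valRing_le fun _ ha => ⟨ha, trivial⟩

theorem div_mem_valRing {a b : M} (ha : a ∈ valRing 𝒪 L) (hb : b ∈ valRing 𝒪 L) (h : a / b ∈ 𝒪) :
    a / b ∈ valRing 𝒪 L := ⟨h, L.div_mem ha.2 hb.2⟩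

variable (𝒪 L)

/-- The étale neighbourhoods of the valuation in the affine space with coordinates `x t`, `t ∈ T`,
that are defined over `L`. -/
noncomputable def coordRing (x : σ → M) (T : Finset σ) : Subring M :=
  etaleClosure (aeval (fun t : T => x t) : MvPolynomial T K →ₐ[K] M).toRingHom (valRing 𝒪 L)

/-- Elements `x` of the valuation ring with a dual family of derivations. -/
structure IsCoordSystem (x : σ → M) (D : σ → Derivation K M M) : Prop where
  algebraMap_mem : ∀ c : K, algebraMap K M c ∈ 𝒪
  mem : ∀ i, x i ∈ valRing 𝒪 L
  apply_eq : ∀ i j, D i (x j) = if i = j then 1 else 0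

variable {𝒪 L}

variable {x y : σ → M} {D : σ → Derivation K M M} {S T : Finset σ}

namespace IsCoordSystem

theorem of_le (hx : IsCoordSystem 𝒪 L x D) {L' : IntermediateField K M} (h : L ≤ L') :
    IsCoordSystem 𝒪 L' x D :=
  ⟨hx.algebraMap_mem, fun i => valRing_mono h (hx.mem i), hx.apply_eq⟩

theorem aeval_mem (hx : IsCoordSystem 𝒪 L x D) (p : MvPolynomial T K) :
    (aeval (fun t : T => x t) : MvPolynomial T K →ₐ[K] M).toRingHom p ∈ valRing 𝒪 L := by
  induction p using MvPolynomial.induction_on with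
  | C a => simpa using ⟨hx.algebraMap_mem a, L.algebraMap_mem a⟩
  | add p q hp hq => rw [map_add]; exact Subring.add_mem _ hp hq
  | mul_X p i hp =>
    rw [map_mul]
    exact Subring.mul_mem _ hp (by simpa using hx.mem i)

theorem algebraicIndependent [CharZero K] (hx : IsCoordSystem 𝒪 L x D) :
    AlgebraicIndependent K x := algebraicIndependent_of_derivation hx.apply_eq

theorem injective [CharZero K] (hx : IsCoordSystem 𝒪 L x D) :
    Function.Injective (aeval (fun t : T => x t) : MvPolynomial T K →ₐ[K] M).toRingHom :=
  hx.algebraicIndependent.comp _ Subtype.val_injective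

theorem ne_zero (hx : IsCoordSystem 𝒪 L x D) (i : σ) : x i ≠ 0 := fun h => by
  have := hx.apply_eq i i
  simp [h] at this

theorem coordRing_le (hx : IsCoordSystem 𝒪 L x D) : coordRing 𝒪 L x T ≤ valRing 𝒪 L :=
  etaleClosure_le hx.aeval_mem

theorem mem_of_mem (hx : IsCoordSystem 𝒪 L x D) {a : M} (h : a ∈ coordRing 𝒪 L x T) : a ∈ 𝒪 :=
  (hx.coordRing_le h).1

theorem valuation_le_one (hx : IsCoordSystem 𝒪 L x D) {a : M} (h : a ∈ coordRing 𝒪 L x T) :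
    𝒪.valuation a ≤ 1 := (𝒪.valuation_le_one_iff _).2 (hx.mem_of_mem h)

end IsCoordSystem

theorem apply_mem_coordRing {t : σ} (ht : t ∈ T) : x t ∈ coordRing 𝒪 L x T := by
  have := apply_mem_etaleClosure (aeval (fun t : T => x t) : MvPolynomial T K →ₐ[K] M).toRingHom
    (valRing 𝒪 L) (.X ⟨t, ht⟩)
  rwa [AlgHom.toRingHom_eq_coe, AlgHom.coe_toRingHom, MvPolynomial.aeval_X] at this

theorem aeval_mem_coordRing (p : MvPolynomial T K) :
    aeval (fun t : T => x t) p ∈ coordRing 𝒪 L x T :=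
  apply_mem_etaleClosure (aeval (fun t : T => x t) : MvPolynomial T K →ₐ[K] M).toRingHom
    (valRing 𝒪 L) p

theorem algebraMap_mem_coordRing (c : K) : algebraMap K M c ∈ coordRing 𝒪 L x T := by
  simpa using aeval_mem_coordRing (𝒪 := 𝒪) (L := L) (x := x) (T := T) (.C c)

theorem coordRing_mono {L' : IntermediateField K M} (h : L ≤ L') :
    coordRing 𝒪 L x T ≤ coordRing 𝒪 L' x T :=
  etaleClosure_mono _ (valRing_mono h)

theorem coordRing_le_top : coordRing 𝒪 L x T ≤ coordRing 𝒪 (⊤ : IntermediateField K M) x T :=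
  coordRing_mono le_top

theorem coordRing_congr (h : ∀ t ∈ T, x t = y t) : coordRing 𝒪 L x T = coordRing 𝒪 L y T := by
  have : (fun t : T => x t) = fun t : T => y t := funext fun t => h t t.2
  rw [coordRing, coordRing, this]

theorem IsCoordSystem.coordRing_le_coordRing {y : σ → M} {D' : σ → Derivation K M M}
    (hy : IsCoordSystem 𝒪 L y D') (h : ∀ t ∈ S, x t ∈ coordRing 𝒪 L y T) :
    coordRing 𝒪 L x S ≤ coordRing 𝒪 L y T :=
  etaleClosure_aeval_le _ _ hy.aeval_mem fun t => h t t.2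

theorem IsCoordSystem.coordRing_subset (hx : IsCoordSystem 𝒪 L x D) (h : S ⊆ T) :
    coordRing 𝒪 L x S ≤ coordRing 𝒪 L x T :=
  hx.coordRing_le_coordRing fun _ ht => apply_mem_coordRing (h ht)

theorem IsCoordSystem.inv_mem (hx : IsCoordSystem 𝒪 L x D) {a : M} (ha : a ∈ coordRing 𝒪 L x T)
    (h : 𝒪.valuation a = 1) : a⁻¹ ∈ coordRing 𝒪 L x T := by
  have ha0 : a ≠ 0 := fun h0 => by simp [h0] at h
  refine mem_etaleClosure_of_mul_eq_one hx.aeval_mem ha ⟨?_, ?_⟩ (mul_inv_cancel₀ ha0)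
  · exact (𝒪.valuation_le_one_iff _).1 (by rw [map_inv₀, h, inv_one])
  · exact L.inv_mem (hx.coordRing_le ha).2

/-- A derivation maps a coordinate ring into every module that contains the derivatives of the
coordinates. -/
theorem IsCoordSystem.derivation_mem (hx : IsCoordSystem 𝒪 L x D) (N : AddSubgroup M)
    (hN : ∀ a ∈ coordRing 𝒪 L x T, ∀ n ∈ N, a * n ∈ N) (Δ : Derivation K M M)
    (h : ∀ t ∈ T, Δ (x t) ∈ N) {a : M} (ha : a ∈ coordRing 𝒪 L x T) : Δ a ∈ N := by
  obtain ⟨E, _, j, φ, hφ, e, rfl⟩ := (mem_etaleClosure_iff hx.aeval_mem).1 ha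
  let : Algebra (MvPolynomial T K) E := j.toAlgebra
  have : Algebra.Etale (MvPolynomial T K) E := hφ.etale
  refine derivation_mem_of_formallyUnramified (P := MvPolynomial T K) φ N
    (fun e n hn => hN _ (hφ.apply_mem e) n hn) (Δ.restrictScalars ℤ) (fun p => ?_) e
  have h1 : φ (algebraMap (MvPolynomial T K) E p) = aeval (fun t : T => x t) p :=
    RingHom.congr_fun hφ.comp_eq p
  rw [h1]
  change Δ _ ∈ N
  induction p using MvPolynomial.induction_on with
  | C a => simp [N.zero_mem]
  | add p q hp hq =>
    rw [map_add, map_add]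
    exact N.add_mem (hp (RingHom.congr_fun hφ.comp_eq p)) (hq (RingHom.congr_fun hφ.comp_eq q))
  | mul_X p t hp =>
    rw [map_mul, Derivation.leibniz, MvPolynomial.aeval_X, smul_eq_mul, smul_eq_mul]
    exact N.add_mem (hN _ (aeval_mem_coordRing p) _ (h t t.2))
      (hN _ (apply_mem_coordRing t.2) _ (hp (RingHom.congr_fun hφ.comp_eq p)))

theorem IsCoordSystem.apply_mem (hx : IsCoordSystem 𝒪 L x D) {a : M}
    (ha : a ∈ coordRing 𝒪 L x T) (i : σ) : D i a ∈ coordRing 𝒪 L x T :=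
  hx.derivation_mem (coordRing 𝒪 L x T).toAddSubgroup
    (fun _ ha _ hn => (coordRing 𝒪 L x T).mul_mem ha hn) (D i) (fun t _ => by
      rw [hx.apply_eq]
      split_ifs
      exacts [Subring.one_mem _, Subring.zero_mem _]) ha

theorem IsCoordSystem.iterate_mem (hx : IsCoordSystem 𝒪 L x D) {a : M}
    (ha : a ∈ coordRing 𝒪 L x T) (i : σ) (n : ℕ) : (D i)^[n] a ∈ coordRing 𝒪 L x T := by
  induction n with
  | zero => exact ha
  | succ n ih => rw [Function.iterate_succ_apply']; exact hx.apply_mem ih i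

theorem IsCoordSystem.apply_eq_zero (hx : IsCoordSystem 𝒪 L x D) {a : M}
    (ha : a ∈ coordRing 𝒪 L x T) {i : σ} (hi : i ∉ T) : D i a = 0 := by
  have := hx.derivation_mem ⊥ (fun a _ n hn => by simp_all) (D i) (fun t ht => by
      have : i ≠ t := fun h => hi (h ▸ ht)
      rw [hx.apply_eq, if_neg this]; exact AddSubgroup.zero_mem _) ha
  simpa using this

section Division

variable [CharZero K]

theorem IsCoordSystem.mem_of_eq_mul (hx : IsCoordSystem 𝒪 L x D) {f g h : M}
    (hf : f ∈ coordRing 𝒪 L x T) (hg : g ∈ coordRing 𝒪 L x T) (hg0 : g ≠ 0)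
    (hh : h ∈ coordRing 𝒪 (⊤ : IntermediateField K M) x T) (hfgh : f = g * h) : h ∈ coordRing 𝒪 L x T :=
  mem_etaleClosure_of_eq_mul hx.injective (valRing_mono le_top) valRing_le hx.aeval_mem
    (fun _ ha _ hb h => div_mem_valRing ha hb h) hf hg hg0 hh hfgh

theorem IsCoordSystem.exists_mul_eq_aeval (hx : IsCoordSystem 𝒪 L x D) {a : M}
    (ha : a ∈ coordRing 𝒪 L x T) (ha0 : a ≠ 0) :
    ∃ b ∈ coordRing 𝒪 L x T, ∃ N : MvPolynomial T K, N ≠ 0 ∧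
      a * b = aeval (fun t : T => x t) N :=
  exists_mul_eq_apply hx.injective hx.aeval_mem ha ha0

end Division

end Coordinates

section Divisors

set_option linter.unusedSectionVars false

variable {K M : Type u} [Field K] [CharZero K] [Field M] [Algebra K M] {σ : Type} [DecidableEq σ]
  {𝒪 : ValuationSubring M} {L : IntermediateField K M}
  {x : σ → M} {D : σ → Derivation K M M} {S T : Finset σ}

theorem X_dvd_of_killCompl_eq_zero {i : σ} (hi : i ∈ T)
    (p : MvPolynomial T K) (hp : MvPolynomial.killCompl
      (Set.inclusion_injective (Finset.coe_subset.2 (T.erase_subset i))) p = 0) :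
    MvPolynomial.X ⟨i, hi⟩ ∣ p := by
  set f := Set.inclusion (Finset.coe_subset.2 (T.erase_subset i))
  have hf : Function.Injective f := Set.inclusion_injective _
  have key : ∀ p : MvPolynomial T K, MvPolynomial.X ⟨i, hi⟩ ∣
      p - MvPolynomial.rename f (MvPolynomial.killCompl hf p) := by
    intro p
    induction p using MvPolynomial.induction_on with
    | C a => simp
    | add p q hp hq =>
      rw [map_add, map_add, add_sub_add_comm]
      exact dvd_add hp hq
    | mul_X p t hp =>
      by_cases ht : (t : σ) = i
      · have : t = ⟨i, hi⟩ := Subtype.ext ht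
        have h0 : MvPolynomial.killCompl hf (.X t : MvPolynomial T K) = 0 := by
          rw [MvPolynomial.killCompl, MvPolynomial.aeval_X, dif_neg]
          rintro ⟨s, hs⟩
          have h1 := congrArg Subtype.val hs
          exact Finset.ne_of_mem_erase s.2 (h1.trans ht)
        rw [map_mul, h0, mul_zero, map_zero, sub_zero, this]
        exact dvd_mul_left _ _
      · obtain ⟨s, rfl⟩ : ∃ s, f s = t := ⟨⟨t, Finset.mem_erase.2 ⟨ht, t.2⟩⟩, rfl⟩
        have h0 : MvPolynomial.killCompl hf (.X (f s) : MvPolynomial T K) = .X s := by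
          rw [← MvPolynomial.rename_X, MvPolynomial.killCompl_rename_app]
        rw [map_mul, map_mul, h0, MvPolynomial.rename_X, ← sub_mul]
        exact Dvd.dvd.mul_right hp _
  simpa [hp] using key p

namespace IsCoordSystem

section

variable [IsAlgClosed M]

theorem exists_eq_add_mul (hx : IsCoordSystem 𝒪 L x D) {i : σ} (hi : i ∈ T)
    (hm : 𝒪.valuation (x i) < 1) {f : M} (hf : f ∈ coordRing 𝒪 (⊤ : IntermediateField K M) x T) :
    ∃ a ∈ coordRing 𝒪 (⊤ : IntermediateField K M) x (T.erase i),
      ∃ w ∈ coordRing 𝒪 (⊤ : IntermediateField K M) x T, f = a + x i * w := by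
  have hx' := hx.of_le (L' := ⊤) le_top
  have hf' := Set.inclusion_injective (Finset.coe_subset.2 (T.erase_subset i))
  have := exists_sub_eq_mul (𝒪 := 𝒪) (z := MvPolynomial.X ⟨i, hi⟩)
    (i := (aeval (fun t : T => x t) : MvPolynomial T K →ₐ[K] M).toRingHom)
    (ι := (MvPolynomial.rename (Set.inclusion (Finset.coe_subset.2 (T.erase_subset i))) :
      MvPolynomial (T.erase i : Finset σ) K →ₐ[K] MvPolynomial T K).toRingHom)
    (ε := (MvPolynomial.killCompl hf').toRingHom)
    (congrArg AlgHom.toRingHom (MvPolynomial.killCompl_comp_rename hf'))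
    (X_dvd_of_killCompl_eq_zero hi) (fun p => (hx.aeval_mem p).1) (by simpa using hm)
    (f := f) (by rw [← valRing_top (K := K)]; exact hf)
  obtain ⟨a, ha, w, hw, h⟩ := this
  refine ⟨a, ?_, w, ?_, by simpa using h⟩
  · rw [coordRing, valRing_top]
    convert ha
    apply MvPolynomial.ringHom_ext
    · intro; simp
    · intro t; simp
  · rw [coordRing, valRing_top]
    exact hw

theorem eq_zero_of_eq_mul (hx : IsCoordSystem 𝒪 L x D) {i : σ} (hi : i ∈ T)
    (hm : 𝒪.valuation (x i) < 1) {a w : M}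
    (ha : a ∈ coordRing 𝒪 (⊤ : IntermediateField K M) x (T.erase i))
    (hw : w ∈ coordRing 𝒪 (⊤ : IntermediateField K M) x T) (h : a = x i * w) : a = 0 := by
  have hf' := Set.inclusion_injective (Finset.coe_subset.2 (T.erase_subset i))
  refine LocalUniformization.eq_zero_of_eq_mul (𝒪 := 𝒪) (z := MvPolynomial.X ⟨i, hi⟩)
    (i := (aeval (fun t : T => x t) : MvPolynomial T K →ₐ[K] M).toRingHom)
    (ι := (MvPolynomial.rename (Set.inclusion (Finset.coe_subset.2 (T.erase_subset i))) :
      MvPolynomial (T.erase i : Finset σ) K →ₐ[K] MvPolynomial T K).toRingHom)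
    (ε := (MvPolynomial.killCompl hf').toRingHom) hx.injective
    (congrArg AlgHom.toRingHom (MvPolynomial.killCompl_comp_rename hf')) ?_
    (X_dvd_of_killCompl_eq_zero hi) (fun p => (hx.aeval_mem p).1) (by simpa using hm)
    (a := a) (w := w) ?_ (by rw [← valRing_top (K := K)]; exact hw) (by simpa using h)
  · change MvPolynomial.killCompl _ _ = 0
    rw [MvPolynomial.killCompl, MvPolynomial.aeval_X, dif_neg]
    rintro ⟨s, hs⟩
    exact Finset.ne_of_mem_erase s.2 (congrArg Subtype.val hs)
  · rw [coordRing, valRing_top] at ha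
    convert ha
    apply MvPolynomial.ringHom_ext
    · intro; simp
    · intro t; simp

/-- Coordinates of positive value are prime. -/
theorem exists_eq_mul_of_mul_eq_mul (hx : IsCoordSystem 𝒪 L x D) {i : σ} (hi : i ∈ T)
    (hm : 𝒪.valuation (x i) < 1) {a b c : M} (ha : a ∈ coordRing 𝒪 L x T)
    (hb : b ∈ coordRing 𝒪 L x T) (hc : c ∈ coordRing 𝒪 L x T) (h : a * b = x i * c) :
    (∃ a' ∈ coordRing 𝒪 L x T, a = x i * a') ∨ ∃ b' ∈ coordRing 𝒪 L x T, b = x i * b' := by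
  have hx' := hx.of_le (L' := ⊤) le_top
  have ht := coordRing_le_top (𝒪 := 𝒪) (L := L) (x := x) (T := T)
  obtain ⟨a₀, ha₀, a₁, ha₁, ea⟩ := hx.exists_eq_add_mul hi hm (ht ha)
  obtain ⟨b₀, hb₀, b₁, hb₁, eb⟩ := hx.exists_eq_add_mul hi hm (ht hb)
  have hs := hx'.coordRing_subset (T.erase_subset i)
  have h0 : a₀ * b₀ = 0 := by
    refine hx.eq_zero_of_eq_mul hi hm (Subring.mul_mem _ ha₀ hb₀)
      (w := c - a₁ * b₀ - a * b₁) ?_ ?_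
    · exact Subring.sub_mem _ (Subring.sub_mem _ (ht hc) (Subring.mul_mem _ ha₁ (hs hb₀)))
        (Subring.mul_mem _ (ht ha) hb₁)
    · rw [mul_sub, mul_sub, ← h, ea, eb]; ring
  rcases mul_eq_zero.1 h0 with h0 | h0
  · rw [h0, zero_add] at ea
    exact Or.inl ⟨a₁, hx.mem_of_eq_mul ha (apply_mem_coordRing hi) (hx.ne_zero i) ha₁ ea, ea⟩
  · rw [h0, zero_add] at eb
    exact Or.inr ⟨b₁, hx.mem_of_eq_mul hb (apply_mem_coordRing hi) (hx.ne_zero i) hb₁ eb, eb⟩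

end

end IsCoordSystem

/-- The Laurent monomial in the elements `x i`, `i ∈ S`, with exponents `a`. -/
def mon (x : σ → M) (S : Finset σ) (a : σ → ℤ) : M := ∏ i ∈ S, x i ^ a i

theorem mon_ne_zero (hx : ∀ i ∈ S, x i ≠ 0) (a : σ → ℤ) : mon x S a ≠ 0 :=
  Finset.prod_ne_zero_iff.2 fun i hi => zpow_ne_zero _ (hx i hi)

theorem mon_add (hx : ∀ i ∈ S, x i ≠ 0) (a b : σ → ℤ) :
    mon x S (a + b) = mon x S a * mon x S b := by
  rw [mon, mon, mon, ← Finset.prod_mul_distrib]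
  exact Finset.prod_congr rfl fun i hi => zpow_add₀ (hx i hi) _ _

theorem mon_neg (a : σ → ℤ) : mon x S (-a) = (mon x S a)⁻¹ := by
  simp [mon]

theorem mon_sub (hx : ∀ i ∈ S, x i ≠ 0) (a b : σ → ℤ) :
    mon x S (a - b) = mon x S a / mon x S b := by
  rw [sub_eq_add_neg, mon_add hx, mon_neg, div_eq_mul_inv]

theorem mon_zero : mon x S 0 = 1 := by simp [mon]

theorem mon_congr {y : σ → M} {a b : σ → ℤ} (hxy : ∀ i ∈ S, x i = y i) (h : ∀ i ∈ S, a i = b i) :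
    mon x S a = mon y S b :=
  Finset.prod_congr rfl fun i hi => by rw [h i hi, hxy i hi]

theorem mon_single {i : σ} (hi : i ∈ S) (n : ℤ) : mon x S (Pi.single i n) = x i ^ n := by
  rw [mon, Finset.prod_eq_single_of_mem i hi]
  · simp
  · intro j _ hj; simp [hj]

theorem mon_mem {R : Subring M} (hx : ∀ i ∈ S, x i ∈ R) {a : σ → ℤ} (ha : ∀ i ∈ S, 0 ≤ a i) :
    mon x S a ∈ R := by
  refine Subring.prod_mem _ fun i hi => ?_
  obtain ⟨n, hn⟩ := Int.eq_ofNat_of_zero_le (ha i hi)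
  rw [hn, zpow_natCast]
  exact R.pow_mem (hx i hi) n

/-- Divisors of monomials are monomials up to units. -/
theorem IsCoordSystem.exists_eq_mul_mon [IsAlgClosed M] (hx : IsCoordSystem 𝒪 L x D) (hST : S ⊆ T)
    (hm : ∀ i ∈ S, 𝒪.valuation (x i) < 1) {α : σ → ℤ} (hα : ∀ i ∈ S, 0 ≤ α i) {a b c : M}
    (ha : a ∈ coordRing 𝒪 L x T) (hb : b ∈ coordRing 𝒪 L x T) (hc : c ∈ coordRing 𝒪 L x T)
    (hc1 : 𝒪.valuation c = 1) (h : a * b = c * mon x S α) :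
    ∃ β : σ → ℤ, (∀ i ∈ S, 0 ≤ β i) ∧ ∃ ε ∈ coordRing 𝒪 L x T, 𝒪.valuation ε = 1 ∧
      a = ε * mon x S β := by
  have hne : ∀ i ∈ S, x i ≠ 0 := fun i _ => hx.ne_zero i
  obtain ⟨n, hn⟩ : ∃ n : ℕ, ∑ i ∈ S, α i = n :=
    Int.eq_ofNat_of_zero_le (Finset.sum_nonneg hα)
  induction n generalizing α a b with
  | zero =>
    have h0 : ∀ i ∈ S, α i = 0 := (Finset.sum_eq_zero_iff_of_nonneg hα).1 (by simpa using hn)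
    have : mon x S α = 1 := by rw [← mon_zero (x := x) (S := S)]; exact mon_congr (fun _ _ => rfl) h0
    rw [this, mul_one] at h
    refine ⟨0, fun i _ => le_rfl, a, ha, ?_, by rw [mon_zero, mul_one]⟩
    refine le_antisymm (hx.valuation_le_one ha) ?_
    rw [← hc1, ← h, map_mul]
    exact mul_le_of_le_one_right' (hx.valuation_le_one hb)
  | succ n ih =>
    obtain ⟨i, hi, hi0⟩ : ∃ i ∈ S, α i ≠ 0 := by
      by_contra! hc
      rw [Finset.sum_eq_zero hc] at hn
      norm_cast at hn
    have hα' : ∀ k ∈ S, 0 ≤ (α - Pi.single i 1 : σ → ℤ) k := by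
      intro k hk
      by_cases hki : k = i
      · subst hki
        have := hα k hk
        simp only [Pi.sub_apply, Pi.single_eq_same]
        omega
      · simp [hki, hα k hk]
    have hn' : ∑ k ∈ S, (α - Pi.single i 1 : σ → ℤ) k = n := by
      have : ∑ k ∈ S, (Pi.single i 1 : σ → ℤ) k = 1 := by
        rw [Finset.sum_eq_single_of_mem i hi]
        · simp
        · intro j _ hj; simp [hj]
      simp only [Pi.sub_apply]
      rw [Finset.sum_sub_distrib, this, hn]; push_cast; ring
    have hmon : mon x S α = x i * mon x S (α - Pi.single i 1) := by
      rw [mon_sub hne, mon_single hi, zpow_one, mul_div_cancel₀ _ (hx.ne_zero i)]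
    have hcm : c * mon x S (α - Pi.single i 1) ∈ coordRing 𝒪 L x T :=
      Subring.mul_mem _ hc (mon_mem (fun k hk => apply_mem_coordRing (hST hk)) hα')
    have h' : a * b = x i * (c * mon x S (α - Pi.single i 1)) := by rw [h, hmon]; ring
    rcases hx.exists_eq_mul_of_mul_eq_mul (hST hi) (hm i hi) ha hb hcm h' with
      ⟨a', ha', rfl⟩ | ⟨b', hb', rfl⟩
    · obtain ⟨β, hβ, ε, hε, hε1, e⟩ := ih hα' ha' hb
        (mul_left_cancel₀ (hx.ne_zero i) (by rw [← mul_assoc, h'])) hn'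
      refine ⟨β + Pi.single i 1, fun k hk => ?_, ε, hε, hε1, ?_⟩
      · have := hβ k hk
        by_cases hki : k = i
        · subst hki; simp only [Pi.add_apply, Pi.single_eq_same]; omega
        · simp [hki, this]
      · rw [mon_add hne, mon_single hi, zpow_one, e]; ring
    · exact ih hα' ha hb' (mul_left_cancel₀ (hx.ne_zero i) (by rw [← h']; ring)) hn'

end Divisors

section ChangeOfCoordinates

set_option linter.unusedSectionVars false

variable {K M : Type u} [Field K] [CharZero K] [Field M] [Algebra K M] {σ : Type} [DecidableEq σ]
  {𝒪 : ValuationSubring M} {L : IntermediateField K M}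
  {x : σ → M} {D : σ → Derivation K M M} {S T : Finset σ}

/-- The derivations dual to the coordinates in which `x j` is replaced by `w`. -/
noncomputable def updateDer (D : σ → Derivation K M M) (j : σ) (w : M) (k : σ) : Derivation K M M :=
  if k = j then (D j w)⁻¹ • D j else D k - (D k w / D j w) • D j

namespace IsCoordSystem

theorem update (hx : IsCoordSystem 𝒪 L x D) {j : σ} {w : M} (hw : w ∈ valRing 𝒪 L)
    (h : D j w ≠ 0) : IsCoordSystem 𝒪 L (Function.update x j w) (updateDer D j w) := by
  refine ⟨hx.algebraMap_mem, fun i => ?_, fun i k => ?_⟩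
  · by_cases hij : i = j
    · subst hij; simpa using hw
    · simpa [hij] using hx.mem i
  · by_cases hij : i = j
    · subst hij
      by_cases hk : k = i
      · subst hk; simp [updateDer, h]
      · simp [updateDer, hk, hx.apply_eq, Ne.symm hk]
    · by_cases hk : k = j
      · subst hk; simp [updateDer, h, hij]
      · simp [updateDer, hk, hx.apply_eq, hij, Ne.symm hk]

theorem update_mem (hx : IsCoordSystem 𝒪 L x D) {j : σ} (hj : j ∈ T) {w : M}
    (hw : w ∈ coordRing 𝒪 L x T) (h : 𝒪.valuation (D j w) = 1) :
    x j ∈ coordRing 𝒪 L (Function.update x j w) T := by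
  have h0 : D j w ≠ 0 := fun h0 => by simp [h0] at h
  have hx' := hx.update (hx.coordRing_le hw) h0
  obtain ⟨E, _, i, φ, hφ, e, he⟩ := (mem_etaleClosure_iff hx.aeval_mem).1 hw
  let P := MvPolynomial T K
  let t : T := ⟨j, hj⟩
  let : Algebra P E := i.toAlgebra
  have : Algebra.Etale P E := hφ.etale
  let : Algebra K E := (i.comp (algebraMap K P)).toAlgebra
  have : IsScalarTower K P E := IsScalarTower.of_algebraMap_eq' rfl
  let : Algebra E M := φ.toAlgebra
  have : IsScalarTower K E M := IsScalarTower.of_algebraMap_eq fun c => by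
    have := RingHom.congr_fun hφ.comp_eq (MvPolynomial.C c)
    simp only [AlgHom.toRingHom_eq_coe, RingHom.coe_comp, Function.comp_apply, RingHom.coe_coe,
      MvPolynomial.aeval_C] at this
    exact this.symm
  obtain ⟨d, hd⟩ := exists_derivation_extension (k := K) (P := P) (E := E)
    ((Algebra.linearMap P E).compDer (MvPolynomial.pderiv t))
  have hφd : ∀ e, φ (d e) = D j (φ e) := by
    let : Algebra P M := (aeval (fun t : T => x t) : MvPolynomial T K →ₐ[K] M).toRingHom.toAlgebra
    have : IsScalarTower P E M := IsScalarTower.of_algebraMap_eq' hφ.comp_eq.symm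
    refine derivation_ext_of_formallyUnramified (P := P) ((Algebra.linearMap E M).compDer d)
      ((D j).compAlgebraMap E) fun p => ?_
    have h1 : φ (algebraMap P E p) = aeval (fun t : T => x t) p := RingHom.congr_fun hφ.comp_eq p
    change φ (d _) = D j (φ _)
    have h2 : ∀ s : T, D j (x s) = if t = s then 1 else 0 := fun s => by
      rw [hx.apply_eq]
      exact if_congr ⟨fun h => Subtype.ext h, fun h => congrArg Subtype.val h⟩ rfl rfl
    rw [hd, h1, derivation_aeval h2]
    exact RingHom.congr_fun hφ.comp_eq _
  obtain ⟨F, _, l, ψ, hl, hu, hψ, hF⟩ := hφ.exists_localization (e := d e) (b := (D j w)⁻¹)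
    (hx.coordRing_le (hx.inv_mem (hx.apply_mem hw j) h)) (by rw [hφd, he, mul_inv_cancel₀ h0])
  let : Algebra E F := l.toAlgebra
  have : Algebra.Etale E F := hl
  let : Algebra K F := (l.comp (algebraMap K E)).toAlgebra
  have : IsScalarTower K E F := IsScalarTower.of_algebraMap_eq' rfl
  obtain ⟨d', hd'⟩ := exists_derivation_extension (k := K) (P := E) (E := F)
    ((Algebra.linearMap E F).compDer d)
  let j₁ : P →ₐ[K] F := { l.comp i with commutes' := fun _ => rfl }
  let j₂ : P →ₐ[K] F := aeval fun s => if s = t then l e else j₁ (.X s)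
  have h₂ : j₂.toRingHom.Etale := by
    refine etale_of_isUnit_derivation j₁ j₂ hF.etale t (fun s hs => (MvPolynomial.aeval_X _ _).trans (if_neg hs)) d'
      (fun s => ?_) ?_
    · refine (hd' (i (.X s))).trans ((congrArg l (hd (.X s))).trans ?_)
      change l (i (MvPolynomial.pderiv t (.X s))) = _
      rw [MvPolynomial.pderiv_X]
      by_cases hst : s = t
      · subst hst; simp
      · simp [hst]
    · have h1 : j₂ (.X t) = l e := (MvPolynomial.aeval_X _ _).trans (if_pos rfl)
      rw [h1]
      exact (hd' e).symm ▸ hu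
  have h₃ : IsEtaleModel (aeval (fun t : T => Function.update x j w t) :
      MvPolynomial T K →ₐ[K] M).toRingHom (valRing 𝒪 L) j₂.toRingHom ψ := by
    refine ⟨h₂, ?_, hF.mem⟩
    apply MvPolynomial.ringHom_ext
    · intro c
      have := RingHom.congr_fun hF.comp_eq (.C c)
      simp only [AlgHom.toRingHom_eq_coe, RingHom.coe_comp, Function.comp_apply, RingHom.coe_coe,
        MvPolynomial.aeval_C] at this ⊢
      rw [← this]
      exact congrArg ψ (j₂.commutes c)
    · intro s
      have := RingHom.congr_fun hF.comp_eq (.X s)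
      simp only [AlgHom.toRingHom_eq_coe, RingHom.coe_comp, Function.comp_apply, RingHom.coe_coe,
        MvPolynomial.aeval_X] at this ⊢
      by_cases hst : s = t
      · have h1 : (s : σ) = j := congrArg Subtype.val hst
        rw [h1, Function.update_self, MvPolynomial.aeval_X, if_pos hst, ← he]
        exact RingHom.congr_fun hψ e
      · have h1 : (s : σ) ≠ j := fun h1 => hst (Subtype.ext h1)
        rw [Function.update_of_ne h1, MvPolynomial.aeval_X, if_neg hst, ← this]
        rfl
  have := RingHom.congr_fun hF.comp_eq (.X t)
  simp only [AlgHom.toRingHom_eq_coe, RingHom.coe_comp, Function.comp_apply, RingHom.coe_coe,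
    MvPolynomial.aeval_X] at this
  have h4 := h₃.apply_mem (l (i (.X t)))
  rwa [this] at h4

/-- The coordinate ring does not change when a coordinate is replaced by a function with
invertible partial derivative. -/
theorem coordRing_update (hx : IsCoordSystem 𝒪 L x D) {j : σ} (hj : j ∈ T) {w : M}
    (hw : w ∈ coordRing 𝒪 L x T) (h : 𝒪.valuation (D j w) = 1) :
    coordRing 𝒪 L (Function.update x j w) T = coordRing 𝒪 L x T := by
  have h0 : D j w ≠ 0 := fun h0 => by simp [h0] at h
  refine le_antisymm (hx.coordRing_le_coordRing fun t ht => ?_)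
    ((hx.update (hx.coordRing_le hw) h0).coordRing_le_coordRing fun t ht => ?_)
  · by_cases htj : t = j
    · subst htj; simpa using hw
    · simpa [htj] using apply_mem_coordRing ht
  · by_cases htj : t = j
    · subst htj; exact hx.update_mem hj hw h
    · rw [← Function.update_of_ne htj w x]
      exact apply_mem_coordRing ht

end IsCoordSystem

end ChangeOfCoordinates

section Perron

set_option linter.unusedSectionVars false

/-- Perron's algorithm: a vector of integers can be made one-signed by adding entries of opposite
sign to each other, even if an adversary chooses which one of the two entries is changed. -/
theorem perron_induction {X σ : Type*} [DecidableEq σ] (S : Finset σ) (Q : X → (σ → ℤ) → Prop)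
    (hneg : ∀ s a, Q s (-a) → Q s a) (hnn : ∀ s a, (∀ i ∈ S, 0 ≤ a i) → Q s a)
    (hstep : ∀ s, ∀ i ∈ S, ∀ j ∈ S, i ≠ j → (∀ a, Q s a) ∨
      (∃ s', ∀ a, Q s' (a + Pi.single i (a j)) → Q s a) ∨
      ∃ s', ∀ a, Q s' (a + Pi.single j (a i)) → Q s a) (s : X) (a : σ → ℤ) : Q s a := by
  have key : ∀ (B : ℕ) s (a : σ → ℤ), (∀ k ∈ S, |a k| ≤ B) → Q s a := by
    intro B
    induction B with
    | zero => exact fun s a h => hnn s a fun k hk => (abs_nonpos_iff.1 (h k hk)).ge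
    | succ B ihB =>
      have key2 : ∀ (c : ℕ) s (a : σ → ℤ), (∀ k ∈ S, |a k| ≤ B + 1) →
          (S.filter fun k => |a k| = B + 1).card ≤ c → Q s a := by
        intro c
        induction c with
        | zero =>
          intro s a h hc
          refine ihB s a fun k hk => Int.lt_add_one_iff.1 (lt_of_le_of_ne (h k hk) fun h0 => ?_)
          have := Finset.card_eq_zero.1 (Nat.le_zero.1 hc)
          exact Finset.filter_eq_empty_iff.1 this hk h0
        | succ c ihc =>
          have key3 : ∀ (n : ℕ) s (a : σ → ℤ) i, i ∈ S → a i = B + 1 → (∀ k ∈ S, |a k| ≤ B + 1) →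
              (S.filter fun k => |a k| = B + 1).card ≤ c + 1 →
              (S.filter fun k => a k < 0).card ≤ n → Q s a := by
            intro n
            induction n with
            | zero =>
              intro s a i _ _ _ _ hn
              refine hnn s a fun k hk => ?_
              by_contra! h0
              have := Finset.card_eq_zero.1 (Nat.le_zero.1 hn)
              exact Finset.filter_eq_empty_iff.1 this hk h0
            | succ n ihn =>
              intro s a i hi hai h hc hn
              by_cases hj : ∃ j ∈ S, a j < 0
              swap
              · push Not at hj; exact hnn s a hj
              obtain ⟨j, hj, haj⟩ := hj
              have hij : i ≠ j := fun hij => by subst hij; omega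
              have hj' := abs_le.1 (h j hj)
              rcases hstep s i hi j hj hij with hs | ⟨s', hs⟩ | ⟨s', hs⟩
              · exact hs a
              · refine hs a (ihc s' _ (fun k hk => ?_) ?_)
                · by_cases hk' : k = i
                  · subst hk'; simp only [Pi.add_apply, Pi.single_eq_same]
                    rw [abs_le]; omega
                  · simpa [hk'] using h k hk
                · refine Nat.lt_add_one_iff.1 (lt_of_lt_of_le (Finset.card_lt_card ?_) hc)
                  refine (Finset.ssubset_iff_of_subset fun k hk => ?_).2 ⟨i, ?_, ?_⟩
                  · rw [Finset.mem_filter] at hk ⊢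
                    by_cases hk' : k = i
                    · subst hk'; exact ⟨hi, by rw [hai, abs_of_nonneg (by positivity)]⟩
                    · simpa [hk'] using hk
                  · exact Finset.mem_filter.2 ⟨hi, by rw [hai, abs_of_nonneg (by positivity)]⟩
                  · simp only [Finset.mem_filter, Pi.add_apply, Pi.single_eq_same, not_and]
                    intro _
                    rw [abs_of_nonneg (by omega)]; omega
              · refine hs a (ihn s' _ i hi ?_ (fun k hk => ?_) ?_ ?_)
                · simpa [hij] using hai
                · by_cases hk' : k = j
                  · subst hk'; simp only [Pi.add_apply, Pi.single_eq_same]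
                    rw [abs_le]; omega
                  · simpa [hk'] using h k hk
                · refine (Finset.card_le_card fun k hk => ?_).trans hc
                  rw [Finset.mem_filter] at hk ⊢
                  by_cases hk' : k = j
                  · subst hk'
                    simp only [Pi.add_apply, Pi.single_eq_same] at hk
                    rw [abs_of_nonneg (by omega)] at hk; omega
                  · simpa [hk'] using hk
                · refine Nat.lt_add_one_iff.1 (lt_of_lt_of_le (Finset.card_lt_card ?_) hn)
                  refine (Finset.ssubset_iff_of_subset fun k hk => ?_).2 ⟨j, ?_, ?_⟩
                  · rw [Finset.mem_filter] at hk ⊢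
                    by_cases hk' : k = j
                    · subst hk'; exact ⟨hj, haj⟩
                    · simpa [hk'] using hk
                  · exact Finset.mem_filter.2 ⟨hj, haj⟩
                  · simp only [Finset.mem_filter, Pi.add_apply, Pi.single_eq_same, not_and]
                    intro _; omega
          intro s a h hc
          by_cases hi : ∃ i ∈ S, |a i| = B + 1
          · obtain ⟨i, hi, hai⟩ := hi
            rcases (abs_eq (by positivity)).1 hai with hai | hai
            · exact key3 _ s a i hi hai h hc le_rfl
            · exact hneg s a (key3 _ s (-a) i hi (by simp [hai]) (by simpa using h)
                (by simpa using hc) le_rfl)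
          · push Not at hi
            exact ihB s a fun k hk => Int.lt_add_one_iff.1 (lt_of_le_of_ne (h k hk) (hi k hk))
      exact fun s a h => key2 _ s a (by exact_mod_cast h) le_rfl
  refine key (∑ k ∈ S, (a k).natAbs) s a fun k hk => ?_
  rw [Int.abs_eq_natAbs]
  exact_mod_cast Finset.single_le_sum (f := fun k => (a k).natAbs) (fun _ _ => Nat.zero_le _) hk

variable {K M : Type u} [Field K] [CharZero K] [Field M] [Algebra K M] {σ : Type} [DecidableEq σ]
  {𝒪 : ValuationSubring M} {L : IntermediateField K M}
  {x y z : σ → M} {D : σ → Derivation K M M} {S T : Finset σ} {e : (σ → ℤ) ≃+ (σ → ℤ)}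

/-- A monomial change of the coordinates in `S` under which the old coordinates are monomials in
the new ones. -/
structure IsToric (S : Finset σ) (x y : σ → M) (e : (σ → ℤ) ≃+ (σ → ℤ)) : Prop where
  mon_eq : ∀ a, mon x S a = mon y S (e a)
  nonneg : ∀ a, (∀ i ∈ S, 0 ≤ a i) → ∀ i ∈ S, 0 ≤ e a i
  apply_of_notMem : ∀ a, ∀ k ∉ S, e a k = a k
  eq_zero : ∀ a, (∀ i ∈ S, a i = 0) → ∀ i ∈ S, e a i = 0
  eq_of_notMem : ∀ k ∉ S, y k = x k

namespace IsToric

theorem refl (S : Finset σ) (x : σ → M) : IsToric S x x (AddEquiv.refl _) :=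
  ⟨fun _ => rfl, fun _ h => h, fun _ _ _ => rfl, fun _ h => h, fun _ _ => rfl⟩

theorem trans {e' : (σ → ℤ) ≃+ (σ → ℤ)} (h : IsToric S x y e) (h' : IsToric S y z e') :
    IsToric S x z (e.trans e') where
  mon_eq a := (h.mon_eq a).trans (h'.mon_eq _)
  nonneg a ha := h'.nonneg _ (h.nonneg a ha)
  apply_of_notMem a k hk := (h'.apply_of_notMem _ k hk).trans (h.apply_of_notMem a k hk)
  eq_zero a ha := h'.eq_zero _ (h.eq_zero a ha)
  eq_of_notMem k hk := (h'.eq_of_notMem k hk).trans (h.eq_of_notMem k hk)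

theorem mono (hST : S ⊆ T) (h : IsToric S x y e) : IsToric T x y e where
  mon_eq a := by
    rw [mon, mon, ← Finset.prod_sdiff hST, ← Finset.prod_sdiff hST]
    congr 1
    · refine Finset.prod_congr rfl fun k hk => ?_
      have hk := (Finset.mem_sdiff.1 hk).2
      rw [h.apply_of_notMem a k hk, h.eq_of_notMem k hk]
    · exact h.mon_eq a
  nonneg a ha k hk := by
    by_cases hkS : k ∈ S
    · exact h.nonneg a (fun i hi => ha i (hST hi)) k hkS
    · rw [h.apply_of_notMem a k hkS]; exact ha k hk
  apply_of_notMem a k hk := h.apply_of_notMem a k fun hkS => hk (hST hkS)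
  eq_zero a ha k hk := by
    by_cases hkS : k ∈ S
    · exact h.eq_zero a (fun i hi => ha i (hST hi)) k hkS
    · rw [h.apply_of_notMem a k hkS]; exact ha k hk
  eq_of_notMem k hk := h.eq_of_notMem k fun hkS => hk (hST hkS)

theorem congr (h : IsToric S x y e) {a b : σ → ℤ} (hab : ∀ i ∈ S, a i = b i) :
    ∀ i ∈ S, e a i = e b i := fun i hi => by
  have := h.eq_zero (a - b) (fun i hi => by simp [hab i hi]) i hi
  rw [map_sub, Pi.sub_apply] at this
  omega

theorem apply_eq (h : IsToric S x y e) {i : σ} (hi : i ∈ S) :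
    x i = mon y S (e (Pi.single i 1)) := by
  rw [← h.mon_eq, mon_single hi, zpow_one]

theorem apply_mem (h : IsToric S x y e) (hST : S ⊆ T) {i : σ} (hi : i ∈ T) :
    x i ∈ coordRing 𝒪 L y T := by
  by_cases hiS : i ∈ S
  · rw [h.apply_eq hiS]
    refine mon_mem (fun k hk => apply_mem_coordRing (hST hk)) (h.nonneg _ fun k _ => ?_)
    by_cases hk : k = i
    · subst hk; simp
    · simp [hk]
  · rw [← h.eq_of_notMem i hiS]; exact apply_mem_coordRing hi

end IsToric

/-- The effect on exponents of replacing `x j` by `x j / x i`. -/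
def shear {i j : σ} (hij : i ≠ j) : (σ → ℤ) ≃+ (σ → ℤ) where
  toFun a := a + Pi.single i (a j)
  invFun a := a - Pi.single i (a j)
  left_inv a := by ext k; by_cases hk : k = i <;> simp [hij.symm]
  right_inv a := by ext k; by_cases hk : k = i <;> simp [hij.symm]
  map_add' a b := by ext k; by_cases hk : k = i <;> simp [hk]; abel

theorem shear_apply {i j : σ} (hij : i ≠ j) (a : σ → ℤ) : shear hij a = a + Pi.single i (a j) := rfl

theorem mon_update {j : σ} (hj : j ∈ S) (w : M) (a : σ → ℤ) :
    mon (Function.update x j w) S a * x j ^ a j = w ^ a j * mon x S a := by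
  rw [mon, mon, ← Finset.mul_prod_erase S _ hj, ← Finset.mul_prod_erase S _ hj,
    Function.update_self, Finset.prod_congr rfl fun k hk => by
      rw [Function.update_of_ne (Finset.ne_of_mem_erase hk)]]
  ring

theorem IsCoordSystem.isToric_update (hx : IsCoordSystem 𝒪 L x D) {i j : σ} (hi : i ∈ S)
    (hj : j ∈ S) (hij : i ≠ j) :
    IsToric S x (Function.update x j (x j / x i)) (shear hij) where
  mon_eq a := by
    have hxi := hx.ne_zero i
    have hxj := hx.ne_zero j
    have hne : ∀ k ∈ S, Function.update x j (x j / x i) k ≠ 0 := fun k _ => by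
      by_cases hk : k = j
      · subst hk; simp [hxi, hxj]
      · simp [hk, hx.ne_zero k]
    rw [shear_apply, mon_add hne, mon_single hi, Function.update_of_ne hij]
    refine mul_right_cancel₀ (zpow_ne_zero (a j) hxj) ?_
    rw [mul_right_comm, mon_update hj, div_zpow]
    have := zpow_ne_zero (a j) hxi
    field_simp
  nonneg a ha k hk := by
    by_cases hki : k = i
    · subst hki; simpa [shear_apply] using add_nonneg (ha k hk) (ha j hj)
    · simpa [shear_apply, hki] using ha k hk
  apply_of_notMem a k hk := by
    have : k ≠ i := fun h => hk (h ▸ hi)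
    simp [shear_apply, this]
  eq_zero a ha k hk := by simp [shear_apply, ha k hk, ha j hj]
  eq_of_notMem k hk := Function.update_of_ne (fun h : k = j => hk (h ▸ hj)) _ _

theorem IsCoordSystem.blowup (hx : IsCoordSystem 𝒪 L x D) {i j : σ} (hij : i ≠ j)
    (h : 𝒪.valuation (x j) ≤ 𝒪.valuation (x i)) :
    IsCoordSystem 𝒪 L (Function.update x j (x j / x i)) (updateDer D j (x j / x i)) := by
  have hxi := hx.ne_zero i
  refine hx.update (div_mem_valRing (hx.mem j) (hx.mem i) ((𝒪.valuation_le_one_iff _).1 ?_)) ?_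
  · rw [map_div₀]; exact div_le_one_of_le₀ h zero_le
  · have h1 : D j (x j) = D j (x j / x i * x i) := by rw [div_mul_cancel₀ _ hxi]
    rw [Derivation.leibniz, hx.apply_eq, hx.apply_eq, if_pos rfl, if_neg hij.symm, smul_zero,
      zero_add] at h1
    exact fun h0 => by simp [h0] at h1

/-- Either the exponents `a` can be made one-signed or two coordinates acquire the same value. -/
theorem IsCoordSystem.perron (hx : IsCoordSystem 𝒪 L x D) (hm : ∀ i ∈ S, 𝒪.valuation (x i) < 1)
    (a : σ → ℤ) : ∃ y D' e, IsCoordSystem 𝒪 L y D' ∧ IsToric S x y e ∧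
      (∀ i ∈ S, 𝒪.valuation (y i) < 1) ∧ ((∀ i ∈ S, 0 ≤ e a i) ∨ (∀ i ∈ S, e a i ≤ 0) ∨
        ∃ i ∈ S, ∃ j ∈ S, i ≠ j ∧ 𝒪.valuation (y i) = 𝒪.valuation (y j)) := by
  let X := {p : (σ → M) × (σ → Derivation K M M) //
    IsCoordSystem 𝒪 L p.1 p.2 ∧ ∀ i ∈ S, 𝒪.valuation (p.1 i) < 1}
  refine perron_induction (X := X) S (fun s a => ∃ y D' e, IsCoordSystem 𝒪 L y D' ∧
    IsToric S s.1.1 y e ∧ (∀ i ∈ S, 𝒪.valuation (y i) < 1) ∧ ((∀ i ∈ S, 0 ≤ e a i) ∨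
      (∀ i ∈ S, e a i ≤ 0) ∨
        ∃ i ∈ S, ∃ j ∈ S, i ≠ j ∧ 𝒪.valuation (y i) = 𝒪.valuation (y j))) ?_ ?_ ?_
    ⟨(x, D), hx, hm⟩ a
  · rintro s a ⟨y, D', e, hy, he, hm, h⟩
    refine ⟨y, D', e, hy, he, hm, ?_⟩
    simp only [map_neg, Pi.neg_apply, Int.neg_nonneg, Left.neg_nonpos_iff] at h
    tauto
  · exact fun s a ha => ⟨_, _, _, s.2.1, .refl S _, s.2.2, .inl ha⟩
  · have key : ∀ s : X, ∀ i ∈ S, ∀ j ∈ S, ∀ hij : i ≠ j,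
        𝒪.valuation (s.1.1 j) < 𝒪.valuation (s.1.1 i) → ∃ s' : X,
          IsToric S s.1.1 s'.1.1 (shear hij) := by
      rintro ⟨⟨x, D⟩, hx, hm⟩ i hi j hj hij h
      refine ⟨⟨(Function.update x j (x j / x i), updateDer D j (x j / x i)), hx.blowup hij h.le,
        fun k hk => ?_⟩, hx.isToric_update hi hj hij⟩
      change 𝒪.valuation (Function.update x j (x j / x i) k) < 1
      by_cases hkj : k = j
      · subst hkj
        rw [Function.update_self, map_div₀]
        exact (div_lt_one₀ ((Valuation.pos_iff _).2 (hx.ne_zero i))).2 h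
      · simpa [hkj] using hm k hk
    intro s i hi j hj hij
    rcases lt_trichotomy (𝒪.valuation (s.1.1 i)) (𝒪.valuation (s.1.1 j)) with h | h | h
    · obtain ⟨s', hs⟩ := key s j hj i hi hij.symm h
      right; right
      refine ⟨s', fun a ⟨y, D', e, hy, he, hm, h⟩ => ⟨y, D', _, hy, hs.trans he, hm, h⟩⟩
    · exact .inl fun a => ⟨_, _, _, s.2.1, .refl S _, s.2.2, .inr (.inr ⟨i, hi, j, hj, hij, h⟩)⟩
    · obtain ⟨s', hs⟩ := key s i hi j hj hij h
      right; left
      refine ⟨s', fun a ⟨y, D', e, hy, he, hm, h⟩ => ⟨y, D', _, hy, hs.trans he, hm, h⟩⟩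

/-- Elements of positive and rationally independent values. -/
structure IsBlock (𝒪 : ValuationSubring M) (S : Finset σ) (x : σ → M) : Prop where
  lt_one : ∀ i ∈ S, 𝒪.valuation (x i) < 1
  eq_zero : ∀ a, 𝒪.valuation (mon x S a) = 1 → ∀ i ∈ S, a i = 0

theorem IsBlock.toric (hb : IsBlock 𝒪 S x) (h : IsToric S x y e)
    (hy : ∀ i ∈ S, 𝒪.valuation (y i) < 1) : IsBlock 𝒪 S y := by
  refine ⟨hy, fun a ha => ?_⟩
  have h1 : mon x S (e.symm a) = mon y S a := by rw [h.mon_eq, e.apply_symm_apply]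
  have := h.eq_zero _ (hb.eq_zero (e.symm a) (by rw [h1, ha]))
  rwa [e.apply_symm_apply] at this

theorem IsBlock.ne (hb : IsBlock 𝒪 S x) (hx : ∀ i ∈ S, x i ≠ 0) {i j : σ} (hi : i ∈ S) (hj : j ∈ S)
    (hij : i ≠ j) : 𝒪.valuation (x i) ≠ 𝒪.valuation (x j) := fun h => by
  have := hb.eq_zero (Pi.single i 1 - Pi.single j 1) (by
    rw [mon_sub hx, mon_single hi, mon_single hj, map_div₀, zpow_one, zpow_one, h,
      div_self ((Valuation.ne_zero_iff _).2 (hx j hj))]) i hi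
  simp [hij] at this

theorem valuation_mon_lt_one (hm : ∀ i ∈ S, 𝒪.valuation (x i) < 1) {a : σ → ℤ}
    (ha : ∀ i ∈ S, 0 ≤ a i) {i : σ} (hi : i ∈ S) (hai : a i ≠ 0) :
    𝒪.valuation (mon x S a) < 1 := by
  rw [mon, map_prod, ← Finset.mul_prod_erase S _ hi]
  refine mul_lt_one_of_lt_of_le ?_ (Finset.prod_le_one' fun k hk => ?_)
  · obtain ⟨n, hn⟩ := Int.eq_ofNat_of_zero_le (ha i hi)
    have : n ≠ 0 := by rintro rfl; exact hai hn
    rw [hn, zpow_natCast, map_pow]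
    exact pow_lt_one₀ zero_le (hm i hi) this
  · have hk := Finset.mem_of_mem_erase hk
    obtain ⟨n, hn⟩ := Int.eq_ofNat_of_zero_le (ha k hk)
    rw [hn, zpow_natCast, map_pow]
    exact pow_le_one₀ zero_le (hm k hk).le

/-- The exponents of finitely many monomials in a block become totally ordered. -/
theorem IsCoordSystem.perron_block (hx : IsCoordSystem 𝒪 L x D) (hb : IsBlock 𝒪 S x)
    (B : Finset (σ → ℤ)) : ∃ y D' e, IsCoordSystem 𝒪 L y D' ∧ IsToric S x y e ∧ IsBlock 𝒪 S y ∧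
      ∀ a ∈ B, (∀ i ∈ S, 0 ≤ e a i) ∨ ∀ i ∈ S, e a i ≤ 0 := by
  classical
  induction B using Finset.induction_on with
  | empty => exact ⟨x, D, _, hx, .refl S x, hb, by simp⟩
  | insert b B _ ih =>
    obtain ⟨y, D', e, hy, he, hyb, hB⟩ := ih
    obtain ⟨z, D'', e', hz, he', hm, h⟩ := hy.perron hyb.lt_one (e b)
    have hzb := hyb.toric he' hm
    refine ⟨z, D'', _, hz, he.trans he', hzb, fun a ha => ?_⟩
    rcases Finset.mem_insert.1 ha with rfl | ha
    · rcases h with h | h | ⟨i, hi, j, hj, hij, h⟩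
      · exact .inl h
      · exact .inr h
      · exact absurd h (hzb.ne (fun k _ => hz.ne_zero k) hi hj hij)
    · rcases hB a ha with h | h
      · exact .inl (he'.nonneg _ h)
      · right
        intro i hi
        have := he'.nonneg (-e a) (fun i hi => by simpa using h i hi) i hi
        rw [map_neg, Pi.neg_apply] at this
        exact Int.neg_nonneg.1 this

/-- In suitable coordinates one of finitely many monomials in a block divides the others. -/
theorem IsCoordSystem.exists_forall_le (hx : IsCoordSystem 𝒪 L x D) (hb : IsBlock 𝒪 S x)
    {ι : Type*} (I : Finset ι) (hI : I.Nonempty) (α : ι → σ → ℤ) :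
    ∃ y D' e, IsCoordSystem 𝒪 L y D' ∧ IsToric S x y e ∧ IsBlock 𝒪 S y ∧
      ∃ k₀ ∈ I, ∀ k ∈ I, ∀ i ∈ S, e (α k₀) i ≤ e (α k) i := by
  classical
  obtain ⟨y, D', e, hy, he, hyb, h⟩ := hx.perron_block hb ((I ×ˢ I).image fun p => α p.1 - α p.2)
  obtain ⟨k₀, hk₀, hmax⟩ := Finset.exists_max_image I (fun k => 𝒪.valuation (mon x S (α k))) hI
  refine ⟨y, D', e, hy, he, hyb, k₀, hk₀, fun k hk => ?_⟩
  rcases h (α k - α k₀) (Finset.mem_image.2 ⟨(k, k₀), Finset.mk_mem_product hk hk₀, rfl⟩) with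
    h | h
  · intro i hi
    have := h i hi
    rw [map_sub, Pi.sub_apply] at this
    omega
  · intro i hi
    by_contra! hlt
    have h1 := valuation_mon_lt_one hyb.lt_one (a := e (α k₀ - α k)) (fun i hi => by
      have := h i hi
      rw [map_sub, Pi.sub_apply] at this ⊢
      omega) hi (by rw [map_sub, Pi.sub_apply]; omega)
    have hne : ∀ i ∈ S, x i ≠ 0 := fun i _ => hx.ne_zero i
    rw [← he.mon_eq, mon_sub hne, map_div₀, div_lt_one₀
      ((Valuation.pos_iff _).2 (mon_ne_zero hne _))] at h1
    exact absurd (hmax k hk) (not_le.2 h1)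

end Perron

section Dependent

set_option linter.unusedSectionVars false

variable {K M : Type u} [Field K] [CharZero K] [Field M] [Algebra K M] {σ : Type} [DecidableEq σ]
  {𝒪 : ValuationSubring M} {L : IntermediateField K M}
  {x y : σ → M} {D : σ → Derivation K M M} {S T : Finset σ} {e : (σ → ℤ) ≃+ (σ → ℤ)}

theorem mon_zsmul (n : ℤ) (a : σ → ℤ) : mon x S (n • a) = mon x S a ^ n := by
  simp only [mon, ← Finset.prod_zpow]
  exact Finset.prod_congr rfl fun i _ => by rw [Pi.smul_apply, smul_eq_mul, mul_comm, zpow_mul]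

theorem mon_erase {j : σ} (hj : j ∈ S) (a : σ → ℤ) :
    mon x S a = x j ^ a j * mon x (S.erase j) a := (Finset.mul_prod_erase S _ hj).symm

theorem mon_insert {j : σ} (hj : j ∉ S) (a : σ → ℤ) :
    mon x (insert j S) a = x j ^ a j * mon x S a := Finset.prod_insert hj

theorem IsToric.eq_zero_of_apply_eq_zero (h : IsToric S x y e) {a : σ → ℤ}
    (ha : ∀ i ∈ S, e a i = 0) : ∀ i ∈ S, a i = 0 := by
  let b : σ → ℤ := fun i => if i ∈ S then a i else 0
  have hb : e b = 0 := by
    ext i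
    by_cases hi : i ∈ S
    · rw [h.congr (b := a) (fun i hi => by simp [b, hi]) i hi, ha i hi]; rfl
    · rw [h.apply_of_notMem b i hi]; simp [b, hi]
  have hb0 : b = 0 := by simpa using hb
  intro i hi
  have := congrFun hb0 i
  simpa [b, hi] using this

/-- If a coordinate of positive value depends on a block, then it can be traded for a unit. -/
theorem IsCoordSystem.exists_block_of_dependent (hx : IsCoordSystem 𝒪 L x D) (hb : IsBlock 𝒪 S x)
    {z : σ} (hz : z ∉ S) (hxz : 𝒪.valuation (x z) < 1) (hbz : ¬ IsBlock 𝒪 (insert z S) x) :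
    ∃ y D' e, IsCoordSystem 𝒪 L y D' ∧ IsToric (insert z S) x y e ∧ ∃ j ∈ insert z S,
      𝒪.valuation (y j) = 1 ∧ IsBlock 𝒪 ((insert z S).erase j) y := by
  set S' := insert z S with hS'
  have hm : ∀ i ∈ S', 𝒪.valuation (x i) < 1 := fun i hi => by
    rcases Finset.mem_insert.1 hi with rfl | hi
    exacts [hxz, hb.lt_one i hi]
  obtain ⟨a, ha, i₀, hi₀, hai₀⟩ : ∃ a, 𝒪.valuation (mon x S' a) = 1 ∧ ∃ i ∈ S', a i ≠ 0 := by
    by_contra! h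
    exact hbz ⟨hm, h⟩
  obtain ⟨y, D', e, hy, he, hmy, h⟩ := hx.perron hm a
  obtain ⟨i₁, hi₁, hai₁⟩ : ∃ i ∈ S', e a i ≠ 0 := by
    by_contra! h
    exact hai₀ (he.eq_zero_of_apply_eq_zero h i₀ hi₀)
  obtain ⟨i, hi, j, hj, hij, hv⟩ : ∃ i ∈ S', ∃ j ∈ S', i ≠ j ∧
      𝒪.valuation (y i) = 𝒪.valuation (y j) := by
    rcases h with h | h | h
    · have := valuation_mon_lt_one hmy h hi₁ hai₁
      rw [← he.mon_eq, ha] at this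
      exact absurd this (lt_irrefl _)
    · have := valuation_mon_lt_one hmy (a := -e a) (fun i hi => by simpa using h i hi) hi₁
        (by simpa using hai₁)
      rw [mon_neg, ← he.mon_eq, map_inv₀, ha, inv_one] at this
      exact absurd this (lt_irrefl _)
    · exact h
  have hw := hy.blowup hij hv.ge
  have hew := he.trans (hy.isToric_update hi hj hij)
  set w := Function.update y j (y j / y i)
  set e' := e.trans (shear hij)
  have hwj : 𝒪.valuation (w j) = 1 := by
    simp only [w, Function.update_self, map_div₀, hv]
    exact div_self ((Valuation.ne_zero_iff _).2 (hy.ne_zero j))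
  refine ⟨w, _, e', hw, hew, j, hj, hwj, ⟨fun k hk => ?_, fun r hr => ?_⟩⟩
  · have hk := Finset.mem_erase.1 hk
    simpa [w, hk.1] using hmy k hk.2
  · have hxne : ∀ i ∈ S', x i ≠ 0 := fun i _ => hx.ne_zero i
    have hrel : ∀ ρ : σ → ℤ, 𝒪.valuation (mon x S' ρ) = 1 → ρ z = 0 → ∀ i ∈ S', ρ i = 0 := by
      intro ρ hρ hρz i hi
      rw [mon_insert hz, hρz, zpow_zero, one_mul] at hρ
      rcases Finset.mem_insert.1 hi with rfl | hi
      exacts [hρz, hb.eq_zero ρ hρ i hi]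
    have htr : ∀ b, 𝒪.valuation (mon w S' b) = 1 → 𝒪.valuation (mon x S' (e'.symm b)) = 1 := by
      intro b hb
      rw [hew.mon_eq, e'.apply_symm_apply, hb]
    have hγ := htr (Pi.single j 1) (by rw [mon_single hj, zpow_one, hwj])
    set γ := e'.symm (Pi.single j 1)
    have hγz : γ z ≠ 0 := fun h0 => by
      have := hew.eq_zero γ (hrel γ hγ h0) j hj
      simp [γ] at this
    set r' : σ → ℤ := Function.update r j 0
    have hρ := htr r' (by
      rw [mon_erase hj, show r' j = 0 from Function.update_self _ _ _, zpow_zero, one_mul, ← hr]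
      refine congrArg _ (mon_congr (fun _ _ => rfl) fun k hk => ?_)
      exact Function.update_of_ne (Finset.ne_of_mem_erase hk) _ _)
    set ρ := e'.symm r'
    have h0 := hew.eq_zero _ (hrel (γ z • ρ - ρ z • γ) (by
      rw [mon_sub hxne, mon_zsmul, mon_zsmul, map_div₀, map_zpow₀, map_zpow₀, hρ, hγ, one_zpow,
        one_zpow, div_one]) (by simp [mul_comm]))
    intro k hk
    have hk' := Finset.mem_erase.1 hk
    have := h0 k hk'.2
    simp only [map_sub, map_zsmul, ρ, γ, AddEquiv.apply_symm_apply, Pi.sub_apply, Pi.smul_apply,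
      Pi.single_eq_of_ne hk'.1, smul_eq_mul, mul_zero, sub_zero, r',
      Function.update_of_ne hk'.1] at this
    exact (mul_eq_zero.1 this).resolve_left hγz

end Dependent

section Monomialization

set_option linter.unusedSectionVars false

variable {K M : Type u} [Field K] [CharZero K] [Field M] [Algebra K M] {σ : Type} [DecidableEq σ]
  {𝒪 : ValuationSubring M} {L : IntermediateField K M}
  {x y : σ → M} {D : σ → Derivation K M M} {S T : Finset σ} {e : (σ → ℤ) ≃+ (σ → ℤ)} {f g : M}

/-- After a change of the coordinates in `T` that enlarges the coordinate ring, `f` becomes a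
monomial in a block, up to a unit. -/
def IsMonomializable (𝒪 : ValuationSubring M) (L : IntermediateField K M) (T : Finset σ) (x : σ → M)
    (f : M) : Prop :=
  ∃ y D', IsCoordSystem 𝒪 L y D' ∧ (∀ i ∉ T, y i = x i) ∧ (∀ i ∈ T, x i ∈ coordRing 𝒪 L y T) ∧
    ∃ S ⊆ T, IsBlock 𝒪 S y ∧ ∃ α : σ → ℤ, (∀ i ∈ S, 0 ≤ α i) ∧ ∃ ε ∈ coordRing 𝒪 L y T,
      𝒪.valuation ε = 1 ∧ f = ε * mon y S α

theorem IsMonomializable.of_change (hxy : ∀ i ∉ T, y i = x i) (hx : ∀ i ∈ T, x i ∈ coordRing 𝒪 L y T)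
    (h : IsMonomializable 𝒪 L T y f) : IsMonomializable 𝒪 L T x f := by
  obtain ⟨z, D', hz, h1, h2, h3⟩ := h
  exact ⟨z, D', hz, fun i hi => (h1 i hi).trans (hxy i hi),
    fun i hi => hz.coordRing_le_coordRing h2 (hx i hi), h3⟩

theorem IsMonomializable.unit_mul {c : M} (hc : c ∈ coordRing 𝒪 L x T) (hc1 : 𝒪.valuation c = 1)
    (h : IsMonomializable 𝒪 L T x f) : IsMonomializable 𝒪 L T x (c * f) := by
  obtain ⟨z, D', hz, h1, h2, S, hS, hb, α, hα, ε, hε, hε1, rfl⟩ := h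
  exact ⟨z, D', hz, h1, h2, S, hS, hb, α, hα, c * ε,
    Subring.mul_mem _ (hz.coordRing_le_coordRing h2 hc) hε, by rw [map_mul, hc1, hε1, one_mul],
    by rw [mul_assoc]⟩

theorem IsMonomializable.of_mul [IsAlgClosed M] (hf : f ∈ coordRing 𝒪 L x T)
    (hg : g ∈ coordRing 𝒪 L x T) (h : IsMonomializable 𝒪 L T x (f * g)) :
    IsMonomializable 𝒪 L T x f := by
  obtain ⟨z, D', hz, h1, h2, S, hS, hb, α, hα, ε, hε, hε1, h⟩ := h
  have hle := hz.coordRing_le_coordRing h2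
  obtain ⟨β, hβ, ε', hε', hε1', h'⟩ := hz.exists_eq_mul_mon hS hb.lt_one hα (hle hf) (hle hg) hε hε1 h
  exact ⟨z, D', hz, h1, h2, S, hS, hb, β, hβ, ε', hε', hε1', h'⟩

theorem IsMonomializable.of_erase {i : σ} (hi : i ∈ T) (h : IsMonomializable 𝒪 L (T.erase i) x f) :
    IsMonomializable 𝒪 L T x f := by
  obtain ⟨z, D', hz, h1, h2, S, hS, hb, α, hα, ε, hε, hε1, h⟩ := h
  have hsub := hz.coordRing_subset (T.erase_subset i)
  refine ⟨z, D', hz, fun k hk => h1 k fun h => hk (Finset.mem_of_mem_erase h), fun k hk => ?_, S,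
    hS.trans (T.erase_subset i), hb, α, hα, ε, hsub hε, hε1, h⟩
  by_cases hki : k = i
  · subst hki
    rw [← h1 k (Finset.notMem_erase k T)]
    exact apply_mem_coordRing hk
  · exact hsub (h2 k (Finset.mem_erase.2 ⟨hki, hk⟩))

end Monomialization

section Tschirnhausen

set_option linter.unusedSectionVars false

variable {K M : Type u} [Field K] [CharZero K] [Field M] [Algebra K M] {𝒪 : ValuationSubring M}
  {R R₀ : Subring M} {D : Derivation K M M} {z f : M}

theorem iterate_derivation_mul {a : M} (ha : D a = 0) (b : M) (n : ℕ) :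
    D^[n] (a * b) = a * D^[n] b := by
  induction n with
  | zero => rfl
  | succ n ih =>
    rw [Function.iterate_succ_apply', ih, Function.iterate_succ_apply', Derivation.leibniz, ha]
    simp

theorem iterate_derivation_sum {ι : Type*} (s : Finset ι) (b : ι → M) (n : ℕ) :
    D^[n] (∑ k ∈ s, b k) = ∑ k ∈ s, D^[n] (b k) := by
  have h : ∀ a, D^[n] a = ((D : M →ₗ[K] M) ^ n) a := fun a => by rw [Module.End.pow_apply]; rfl
  simp only [h, map_sum]

theorem iterate_derivation_add (a b : M) (n : ℕ) : D^[n] (a + b) = D^[n] a + D^[n] b :=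
  iterate_map_add D n a b

theorem exists_iterate_derivation_eq (hD : ∀ a ∈ R, D a ∈ R) (hz : z ∈ R) {F : M} (hF : F ∈ R)
    (m k : ℕ) : ∃ G ∈ R, D^[k] (F * z ^ (m + k)) =
      (m + k).descFactorial k * D z ^ k * F * z ^ m + z ^ (m + 1) * G := by
  induction k generalizing m with
  | zero => exact ⟨0, R.zero_mem, by simp⟩
  | succ k ih =>
    obtain ⟨G, hG, h⟩ := ih (m + 1)
    have hh := hD z hz
    refine ⟨(m + 1 + k).descFactorial k * D (D z ^ k * F) + (m + 2) * D z * G + z * D G, ?_, ?_⟩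
    · have h1 := hD _ (R.mul_mem (R.pow_mem hh k) hF)
      have h2 : ((m : M) + 2) ∈ R := by exact_mod_cast natCast_mem R (m + 2)
      exact R.add_mem (R.add_mem (R.mul_mem (natCast_mem R _) h1) (R.mul_mem (R.mul_mem h2 hh) hG))
        (R.mul_mem hz (hD G hG))
    · rw [Function.iterate_succ_apply', show m + (k + 1) = m + 1 + k by ring, h, mul_assoc _ _ F,
        mul_assoc]
      simp only [map_add, Derivation.leibniz, Derivation.leibniz_pow, Derivation.map_natCast,
        smul_eq_mul, nsmul_eq_mul, Nat.descFactorial_succ]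
      rw [show m + 1 + k - k = m + 1 by omega]
      push_cast
      ring

theorem valuation_natCast_eq_one (hK : ∀ c : K, algebraMap K M c ∈ 𝒪) {n : ℕ} (hn : n ≠ 0) :
    𝒪.valuation (n : M) = 1 := by
  have h1 : (n : K) ≠ 0 := by exact_mod_cast hn
  have h2 := (𝒪.valuation_le_one_iff _).2 (hK n)
  have h3 := (𝒪.valuation_le_one_iff _).2 (hK (n : K)⁻¹)
  have h4 : 𝒪.valuation (algebraMap K M n) ≠ 0 := (Valuation.ne_zero_iff _).2 ((map_ne_zero _).2 h1)
  rw [map_inv₀, map_inv₀] at h3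
  have := le_antisymm h2 ((inv_le_one₀ (zero_lt_iff.2 h4)).1 h3)
  simpa using this

theorem exists_expansion
    (he : ∀ f ∈ R, ∃ a ∈ R₀, ∃ w ∈ R, f = a + z * w) (hf : f ∈ R) (m : ℕ) :
    ∃ a : ℕ → M, (∀ k, a k ∈ R₀) ∧ ∃ w ∈ R, f = ∑ k ∈ Finset.range m, a k * z ^ k + w * z ^ m := by
  induction m with
  | zero => exact ⟨0, fun _ => R₀.zero_mem, f, hf, by simp⟩
  | succ m ih =>
    obtain ⟨a, ha, w, hw, h⟩ := ih
    obtain ⟨b, hb, w', hw', h'⟩ := he w hw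
    refine ⟨Function.update a m b, fun k => ?_, w', hw', ?_⟩
    · by_cases hk : k = m
      · subst hk; simpa using hb
      · simpa [hk] using ha k
    · have : ∑ k ∈ Finset.range m, Function.update a m b k * z ^ k =
          ∑ k ∈ Finset.range m, a k * z ^ k := Finset.sum_congr rfl fun k hk => by
        rw [Function.update_of_ne (Finset.mem_range.1 hk).ne]
      rw [h, Finset.sum_range_succ, Function.update_self, h', this]
      ring

/-- A function of order `n + 1` in the direction of `D` is a polynomial in its `n`-th derivative
without term of degree `n`, up to units. -/
theorem exists_tschirnhausen (hK : ∀ c : K, algebraMap K M c ∈ 𝒪)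
    (hR : ∀ a ∈ R, 𝒪.valuation a ≤ 1) (hR₀ : R₀ ≤ R)
    (hinv : ∀ a ∈ R, 𝒪.valuation a = 1 → a⁻¹ ∈ R) (hD : ∀ a ∈ R, D a ∈ R) (hD₀ : ∀ a ∈ R₀, D a = 0)
    (hf : f ∈ R) (n : ℕ) (hn : ∀ k ≤ n, 𝒪.valuation (D^[k] f) < 1)
    (hn1 : 𝒪.valuation (D^[n + 1] f) = 1)
    (he : ∀ g ∈ R, ∃ a ∈ R₀, ∃ w ∈ R, g = a + D^[n] f * w) :
    ∃ a c : ℕ → M, (∀ k, a k ∈ R₀) ∧ (∀ k, c k ∈ R) ∧ (∀ k ≤ n + 1, k ≠ n → 𝒪.valuation (c k) = 1) ∧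
      f = ∑ k ∈ Finset.range n, c k * (a k * (D^[n] f) ^ k) + c (n + 1) * (D^[n] f) ^ (n + 1) := by
  have hit : ∀ k, ∀ a ∈ R, D^[k] a ∈ R := by
    intro k
    induction k with
    | zero => exact fun a ha => ha
    | succ k ih => exact fun a ha => by rw [Function.iterate_succ_apply']; exact hD _ (ih a ha)
  have hz : D^[n] f ∈ R := hit n f hf
  have hvz := hn n le_rfl
  have hDz : D (D^[n] f) = D^[n + 1] f := (Function.iterate_succ_apply' _ _ _).symm
  rw [← hDz] at hn1
  obtain ⟨a, ha, w, hw, h⟩ := exists_expansion he hf (n + 1)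
  set z := D^[n] f with hzdef
  have hh := hD z hz
  have hmulR : ∀ {a b : M}, 𝒪.valuation a < 1 → b ∈ R → 𝒪.valuation (a * b) < 1 := by
    intro a b ha hb
    rw [map_mul]
    exact mul_lt_one_of_lt_of_le ha (hR b hb)
  have haR : ∀ k, a k ∈ R := fun k => hR₀ (ha k)
  have hup : ∀ i m, ∀ F ∈ R, i < m → 𝒪.valuation (D^[i] (F * z ^ m)) < 1 := by
    intro i m F hF him
    obtain ⟨k, rfl⟩ : ∃ k, m = k + 1 + i := ⟨m - i - 1, by omega⟩
    obtain ⟨G, hG, hG'⟩ := exists_iterate_derivation_eq hD hz hF (k + 1) i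
    rw [hG', show ((k + 1 + i).descFactorial i : M) * D z ^ i * F * z ^ (k + 1) +
      z ^ (k + 1 + 1) * G = z * ((k + 1 + i).descFactorial i * D z ^ i * F * z ^ k +
        z ^ (k + 1) * G) by ring]
    exact hmulR hvz (R.add_mem (R.mul_mem (R.mul_mem (R.mul_mem (natCast_mem R _)
      (R.pow_mem hh _)) hF) (R.pow_mem hz _)) (R.mul_mem (R.pow_mem hz _) hG))
  have hdiag : ∀ i, ∀ F ∈ R, ∃ G ∈ R, D^[i] (F * z ^ i) = i.factorial * D z ^ i * F + z * G := by
    intro i F hF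
    obtain ⟨G, hG, hG'⟩ := exists_iterate_derivation_eq hD hz hF 0 i
    refine ⟨G, hG, ?_⟩
    simpa [Nat.descFactorial_self] using hG'
  have hfac : ∀ i : ℕ, 𝒪.valuation ((i.factorial : M) * D z ^ i) = 1 := fun i => by
    rw [map_mul, map_pow, hn1, one_pow, mul_one, valuation_natCast_eq_one hK i.factorial_ne_zero]
  have hexp : ∀ i, D^[i] f = ∑ k ∈ Finset.range (n + 1), a k * D^[i] (z ^ k) +
      D^[i] (w * z ^ (n + 1)) := by
    intro i
    conv_lhs => rw [h]
    rw [iterate_derivation_add, iterate_derivation_sum]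
    simp only [iterate_derivation_mul (hD₀ _ (ha _))]
  have hva : ∀ i, i ≤ n → 𝒪.valuation (a i) < 1 := by
    intro i
    induction i using Nat.strong_induction_on with
    | _ i ih =>
      intro hi
      have hi' : i ∈ Finset.range (n + 1) := Finset.mem_range.2 (by omega)
      have h1 := hn i hi
      rw [hexp, ← Finset.add_sum_erase _ _ hi'] at h1
      have h2 : 𝒪.valuation (∑ k ∈ (Finset.range (n + 1)).erase i, a k * D^[i] (z ^ k)) < 1 := by
        refine valuation_sum_lt_one _ _ fun k hk => ?_
        obtain ⟨hki, hk⟩ := Finset.mem_erase.1 hk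
        have hk := Finset.mem_range.1 hk
        rcases lt_or_gt_of_ne hki with hki | hki
        · exact hmulR (ih k hki (by omega)) (hit i _ (R.pow_mem hz _))
        · have := hup i k 1 R.one_mem hki
          rw [one_mul] at this
          rw [mul_comm]
          exact hmulR this (haR k)
      have h3 := hup i (n + 1) w hw (by omega)
      obtain ⟨G, hG, hG'⟩ := hdiag i (a i) (haR i)
      rw [← iterate_derivation_mul (hD₀ _ (ha i)), hG'] at h1
      have h4 := hmulR hvz hG
      have h5 : 𝒪.valuation ((i.factorial : M) * D z ^ i * a i) < 1 := by
        have := Valuation.map_sub_lt _ (Valuation.map_sub_lt _ (Valuation.map_sub_lt _ h1 h3) h2) h4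
        convert this using 2; ring
      rwa [map_mul, hfac, one_mul] at h5
  have hw1 : 𝒪.valuation (D z - (n + 1).factorial * D z ^ (n + 1) * w) < 1 := by
    obtain ⟨G, hG, hG'⟩ := hdiag (n + 1) w hw
    have h1 := hexp (n + 1)
    rw [← hDz, hG'] at h1
    have h2 : 𝒪.valuation (∑ k ∈ Finset.range (n + 1), a k * D^[n + 1] (z ^ k)) < 1 :=
      valuation_sum_lt_one _ _ fun k hk => hmulR (hva k (Nat.lt_add_one_iff.1 (Finset.mem_range.1 hk)))
        (hit _ _ (R.pow_mem hz _))
    have := Valuation.map_add_lt _ h2 (hmulR hvz hG)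
    convert this using 2
    linear_combination h1
  have hvw : 𝒪.valuation w = 1 := by
    have := valuation_eq_one_of_sub hn1 hw1
    rwa [map_mul, hfac, one_mul] at this
  have hDz0 : D z ≠ 0 := fun h0 => by simp [h0] at hn1
  obtain ⟨G, hG, hG'⟩ := hdiag n 1 R.one_mem
  obtain ⟨G₁, hG₁, hG₁'⟩ := exists_iterate_derivation_eq hD hz hw 1 n
  rw [one_mul, mul_one] at hG'
  set U := (n.factorial : M) * D z ^ n + z * G
  have hU : U ∈ R := R.add_mem (R.mul_mem (natCast_mem R _) (R.pow_mem hh _)) (R.mul_mem hz hG)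
  have hU1 : 𝒪.valuation U = 1 := by
    refine valuation_eq_one_of_sub (hfac n) ?_
    rw [show (n.factorial : M) * D z ^ n - U = -(z * G) by simp [U], Valuation.map_neg]
    exact hmulR hvz hG
  have hU0 : U ≠ 0 := fun h0 => by simp [h0] at hU1
  have hdf : (1 + n).descFactorial n = (n + 1).factorial := by
    have := Nat.descFactorial_succ (n + 1) n
    rw [Nat.descFactorial_self] at this
    rw [add_comm 1 n, this, Nat.add_sub_cancel_left, one_mul]
  set μ := 1 - (n + 1).factorial * D z ^ n * w - z * G₁ with hμdef
  have hμ : 𝒪.valuation μ < 1 := by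
    refine Valuation.map_sub_lt _ ?_ (hmulR hvz hG₁)
    rw [show (1 : M) - (n + 1).factorial * D z ^ n * w =
      (D z - (n + 1).factorial * D z ^ (n + 1) * w) * (D z)⁻¹ by field_simp; ring]
    exact hmulR hw1 (hinv _ hh hn1)
  have hμR : μ ∈ R := R.sub_mem (R.sub_mem R.one_mem (R.mul_mem (R.mul_mem (natCast_mem R _)
    (R.pow_mem hh _)) hw)) (R.mul_mem hz hG₁)
  have han : a n = U⁻¹ * (z * μ - ∑ k ∈ Finset.range n, a k * D^[n] (z ^ k)) := by
    have h1 := hexp n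
    rw [Finset.sum_range_succ, hG', ← hzdef, add_comm n 1, hG₁', hdf, pow_one] at h1
    rw [eq_inv_mul_iff_mul_eq₀ hU0, hμdef]
    linear_combination -h1
  refine ⟨a, fun k => if k = n + 1 then w + U⁻¹ * μ else 1 - U⁻¹ * D^[n] (z ^ k) * z ^ (n - k), ha,
    fun k => ?_, fun k hk hkn => ?_, ?_⟩
  · have hUi := hinv U hU hU1
    dsimp only
    split_ifs
    · exact R.add_mem hw (R.mul_mem hUi hμR)
    · exact R.sub_mem R.one_mem (R.mul_mem (R.mul_mem hUi (hit _ _ (R.pow_mem hz _)))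
        (R.pow_mem hz _))
  · have hUi := hinv U hU hU1
    dsimp only
    split_ifs with hk1
    · refine valuation_eq_one_of_sub hvw ?_
      rw [sub_add_cancel_left, Valuation.map_neg, mul_comm]
      exact hmulR hμ hUi
    · refine valuation_eq_one_of_sub (map_one _) ?_
      obtain ⟨m, hm⟩ : ∃ m, n - k = m + 1 := ⟨n - k - 1, by omega⟩
      rw [sub_sub_cancel, hm, pow_succ', mul_left_comm]
      exact hmulR hvz (R.mul_mem (R.mul_mem hUi (hit _ _ (R.pow_mem hz _))) (R.pow_mem hz _))
  · dsimp only
    rw [if_pos rfl]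
    conv_lhs => rw [h, Finset.sum_range_succ, han]
    have h1 : ∑ k ∈ Finset.range n, (if k = n + 1 then w + U⁻¹ * μ else
        1 - U⁻¹ * D^[n] (z ^ k) * z ^ (n - k)) * (a k * z ^ k) =
        ∑ k ∈ Finset.range n, a k * z ^ k -
          U⁻¹ * (∑ k ∈ Finset.range n, a k * D^[n] (z ^ k)) * z ^ n := by
      rw [Finset.mul_sum, Finset.sum_mul, ← Finset.sum_sub_distrib]
      refine Finset.sum_congr rfl fun k hk => ?_
      have hk := Finset.mem_range.1 hk
      rw [if_neg (by omega)]
      have : z ^ n = z ^ (n - k) * z ^ k := by rw [← pow_add]; congr 1; omega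
      rw [this]; ring
    rw [h1]; ring

end Tschirnhausen

section EulerOperator

set_option linter.unusedSectionVars false

variable {K M : Type u} [Field K] [CharZero K] [Field M] [Algebra K M] {𝒪 : ValuationSubring M}
  {D : Derivation K M M} {u : M}

theorem iterate_euler_operator (hu : D u = 1) (g : M) (e : ℤ) (s : ℕ) :
    D^[s] (u * D g - e * g) = u * D^[s + 1] g + (s - e) * D^[s] g := by
  induction s with
  | zero => simp [sub_eq_add_neg]
  | succ s ih =>
    rw [Function.iterate_succ_apply', ih, Function.iterate_succ_apply' D (s + 1),
      Function.iterate_succ_apply' D s]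
    simp only [map_add, map_sub, Derivation.leibniz, Derivation.map_natCast, Derivation.map_intCast,
      smul_eq_mul, hu]
    push_cast
    ring

theorem valuation_intCast_le_one (n : ℤ) : 𝒪.valuation (n : M) ≤ 1 :=
  (𝒪.valuation_le_one_iff _).2 (intCast_mem 𝒪.toSubring n)

theorem valuation_intCast_eq_one (hK : ∀ c : K, algebraMap K M c ∈ 𝒪) {n : ℤ} (hn : n ≠ 0) :
    𝒪.valuation (n : M) = 1 := by
  obtain h | h := Int.natAbs_eq n
  · rw [h, Int.cast_natCast, valuation_natCast_eq_one hK (Int.natAbs_ne_zero.2 hn)]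
  · rw [h, Int.cast_neg, Valuation.map_neg, Int.cast_natCast,
      valuation_natCast_eq_one hK (Int.natAbs_ne_zero.2 hn)]

/-- A sum of eigenvectors (modulo `J`) of the Euler operator `u * D` with `n` distinct eigenvalues
has order less than `n` in the direction of `D`. -/
theorem exists_iterate_derivation_valuation_eq_one {ι : Type*} [DecidableEq ι]
    (hK : ∀ c : K, algebraMap K M c ∈ 𝒪) (hu : D u = 1)
    (hu1 : 𝒪.valuation u ≤ 1) {J : AddSubgroup M} (hJ1 : ∀ g ∈ J, 𝒪.valuation g < 1)
    (hJu : ∀ g ∈ J, u * D g ∈ J) {I : Finset ι} {f : M} {F : ι → M} {e : ι → ℤ} {i : ι} (hi : i ∈ I)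
    (hF : ∀ k ∈ I, u * D (F k) - e k * F k ∈ J) (he : Set.InjOn e I) (hf : f - ∑ k ∈ I, F k ∈ J)
    (hle : ∀ s, 𝒪.valuation (D^[s] f) ≤ 1) (h1 : 𝒪.valuation (F i) = 1) :
    ∃ s < I.card, 𝒪.valuation (D^[s] f) = 1 := by
  by_contra! H
  have hlt : ∀ s < I.card, 𝒪.valuation (D^[s] f) < 1 := fun s hs => lt_of_le_of_ne (hle s) (H s hs)
  have hJz : ∀ (n : ℤ), ∀ g ∈ J, (n : M) * g ∈ J := fun n g hg => by
    rw [← zsmul_eq_mul]; exact J.zsmul_mem hg n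
  have key : ∀ Q : Finset ι, Q ⊆ I → ∃ g : M,
      (∀ s, s + Q.card < I.card → 𝒪.valuation (D^[s] g) < 1) ∧
      g - ∑ k ∈ I, ((∏ q ∈ Q, (e k - e q) : ℤ) : M) * F k ∈ J := by
    intro Q
    induction Q using Finset.induction_on with
    | empty => exact fun _ => ⟨f, by simpa using hlt, by simpa using hf⟩
    | insert q Q hq ih =>
      intro hQ
      obtain ⟨g, hg, hgJ⟩ := ih fun a ha => hQ (Finset.mem_insert_of_mem ha)
      refine ⟨u * D g - e q * g, fun s hs => ?_, ?_⟩
      · rw [Finset.card_insert_of_notMem hq] at hs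
        rw [iterate_euler_operator hu]
        refine Valuation.map_add_lt _ ?_ ?_
        · rw [map_mul]
          rw [mul_comm]
          exact mul_lt_one_of_lt_of_le (hg _ (by omega)) hu1
        · rw [map_mul]
          rw [mul_comm]
          refine mul_lt_one_of_lt_of_le (hg _ (by omega)) ?_
          exact_mod_cast valuation_intCast_le_one (s - e q)
      · have h2 := J.sub_mem (hJu _ hgJ) (hJz (e q) _ hgJ)
        have h3 : ∑ k ∈ I, ((∏ q ∈ Q, (e k - e q) : ℤ) : M) * (u * D (F k) - e k * F k) ∈ J :=
          J.sum_mem fun k hk => hJz _ _ (hF k hk)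
        convert J.add_mem h2 h3 using 1
        simp only [map_sub, map_sum, Derivation.leibniz, Derivation.map_intCast, smul_eq_mul,
          mul_zero, add_zero, Finset.prod_insert hq, Int.cast_mul, Int.cast_sub, mul_sub, sub_mul,
          Finset.sum_sub_distrib, Finset.mul_sum]
        have h4 : ∀ k, u * (((∏ q ∈ Q, (e k - e q) : ℤ) : M) * D (F k)) =
          ((∏ q ∈ Q, (e k - e q) : ℤ) : M) * (u * D (F k)) := fun k => by ring
        have h5 : ∀ k, ((∏ q ∈ Q, (e k - e q) : ℤ) : M) * (e k * F k) =
          e k * ((∏ q ∈ Q, (e k - e q) : ℤ) : M) * F k := fun k => by ring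
        simp only [h4, h5, mul_assoc]
        ring
  obtain ⟨g, hg, hgJ⟩ := key (I.erase i) (Finset.erase_subset _ _)
  have hc : 0 + (I.erase i).card < I.card := by
    rw [zero_add]; exact Finset.card_erase_lt_of_mem hi
  rw [Finset.sum_eq_single_of_mem i hi fun k hk hki => by
    rw [Finset.prod_eq_zero (Finset.mem_erase.2 ⟨hki, hk⟩) (sub_self _), Int.cast_zero,
      zero_mul]] at hgJ
  have h2 := Valuation.map_sub_lt _ (hg 0 hc) (hJ1 _ hgJ)
  rw [Function.iterate_zero_apply, sub_sub_cancel, map_mul, h1, mul_one,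
    valuation_intCast_eq_one hK] at h2
  · exact lt_irrefl _ h2
  · refine Finset.prod_ne_zero_iff.2 fun q hq => sub_ne_zero.2 fun h => ?_
    obtain ⟨hqi, hq⟩ := Finset.mem_erase.1 hq
    exact hqi (he hi hq h).symm

end EulerOperator

section MonomialSum

set_option linter.unusedSectionVars false

variable {K M : Type u} [Field K] [CharZero K] [Field M] [Algebra K M] {σ : Type} [DecidableEq σ]
  {𝒪 : ValuationSubring M} {L : IntermediateField K M} {x y : σ → M} {D D' : σ → Derivation K M M}
  {S T : Finset σ} {e : (σ → ℤ) ≃+ (σ → ℤ)} {f g : M}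

theorem mon_mem_coordRing (hST : S ⊆ T) {a : σ → ℤ} (ha : ∀ i ∈ S, 0 ≤ a i) :
    mon x S a ∈ coordRing 𝒪 L x T :=
  mon_mem (fun _ hi => apply_mem_coordRing (hST hi)) ha

theorem IsToric.coordRing_le (ht : IsToric S x y e) (hy : IsCoordSystem 𝒪 L y D') (hST : S ⊆ T) :
    coordRing 𝒪 L x T ≤ coordRing 𝒪 L y T :=
  hy.coordRing_le_coordRing fun _ hi => ht.apply_mem hST hi

theorem isMonomializable_of_eq_sum (hx : IsCoordSystem 𝒪 L x D) (hST : S ⊆ T) (hb : IsBlock 𝒪 S x)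
    {ι : Type*} [DecidableEq ι] {I : Finset ι} (hI : I.Nonempty) {c : ι → M} {α : ι → σ → ℤ}
    (hc : ∀ k ∈ I, c k ∈ coordRing 𝒪 (⊤ : IntermediateField K M) x T)
    (hc1 : ∀ k ∈ I, 𝒪.valuation (c k) = 1) (hα : ∀ k ∈ I, ∀ i ∈ S, 0 ≤ α k i)
    (hinj : ∀ k ∈ I, ∀ l ∈ I, (∀ i ∈ S, α k i = α l i) → k = l)
    (hf : f ∈ coordRing 𝒪 L x T) (hfe : f = ∑ k ∈ I, c k * mon x S (α k)) {β : σ → ℤ}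
    (hβ : ∀ i ∈ S, 0 ≤ β i) : IsMonomializable 𝒪 L T x (f * mon x S β) := by
  obtain ⟨y, D', e, hy, ht, hby, k₀, hk₀, hmin⟩ := hx.exists_forall_le hb I hI α
  have hne : ∀ i ∈ S, y i ≠ 0 := fun i _ => hy.ne_zero i
  have hytop := hy.of_le (le_top : L ≤ ⊤)
  set f' := ∑ k ∈ I, c k * mon y S (e (α k) - e (α k₀))
  have hff' : f = mon y S (e (α k₀)) * f' := by
    rw [hfe, Finset.mul_sum]
    refine Finset.sum_congr rfl fun k _ => ?_
    rw [ht.mon_eq, mon_sub hne]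
    have := mon_ne_zero hne (e (α k₀))
    field_simp
  have hc' : ∀ k ∈ I, c k ∈ coordRing 𝒪 (⊤ : IntermediateField K M) y T := fun k hk =>
    ht.coordRing_le hytop hST (hc k hk)
  have hf'top : f' ∈ coordRing 𝒪 (⊤ : IntermediateField K M) y T :=
    Subring.sum_mem _ fun k hk => Subring.mul_mem _ (hc' k hk)
      (mon_mem_coordRing hST fun i hi => sub_nonneg.2 (hmin k hk i hi))
  have hm0 : mon y S (e (α k₀)) ∈ coordRing 𝒪 L y T :=
    mon_mem_coordRing hST (ht.nonneg _ (hα k₀ hk₀))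
  have hf' : f' ∈ coordRing 𝒪 L y T :=
    hy.mem_of_eq_mul (ht.coordRing_le hy hST hf) hm0 (mon_ne_zero hne _) hf'top hff'
  have hf'1 : 𝒪.valuation f' = 1 := by
    refine valuation_eq_one_of_sub (hc1 k₀ hk₀) ?_
    rw [Valuation.map_sub_swap]
    have : f' - c k₀ = ∑ k ∈ I.erase k₀, c k * mon y S (e (α k) - e (α k₀)) := by
      simp only [f']
      rw [← Finset.add_sum_erase _ _ hk₀, sub_self, mon_zero]
      ring
    rw [this]
    refine valuation_sum_lt_one _ _ fun k hk => ?_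
    obtain ⟨hkk, hk⟩ := Finset.mem_erase.1 hk
    rw [map_mul, hc1 k hk, one_mul]
    obtain ⟨i, hi, hne⟩ : ∃ i ∈ S, (e (α k) - e (α k₀)) i ≠ 0 := by
      by_contra! h
      rw [← map_sub] at h
      exact hkk (hinj k hk k₀ hk₀ fun i hi => sub_eq_zero.1 (ht.eq_zero_of_apply_eq_zero h i hi))
    exact valuation_mon_lt_one hby.lt_one (fun i hi => sub_nonneg.2 (hmin k hk i hi)) hi hne
  refine IsMonomializable.of_change (y := y)
    (fun i hi => ht.eq_of_notMem i fun h => hi (hST h)) (fun i hi => ht.apply_mem hST hi) ?_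
  refine ⟨y, D', hy, fun _ _ => rfl, fun i hi => apply_mem_coordRing hi, S, hST, hby,
    e (α k₀) + e β, fun i hi => add_nonneg (ht.nonneg _ (hα k₀ hk₀) i hi) (ht.nonneg _ hβ i hi),
    f', hf', hf'1, ?_⟩
  rw [hff', mon_add hne, ← ht.mon_eq β]
  ring

theorem exists_mon_mul_of_eq_sum (hx : IsCoordSystem 𝒪 L x D) (hy : IsCoordSystem 𝒪 L y D')
    (ht : IsToric S x y e) (hST : S ⊆ T) (hm : ∀ i ∈ S, 𝒪.valuation (x i) < 1) {j : σ} (hj : j ∈ S)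
    (hyj : 𝒪.valuation (y j) = 1) (hb : IsBlock 𝒪 (S.erase j) y)
    {ι : Type*} [DecidableEq ι] {I : Finset ι} {c : ι → M} {α : ι → σ → ℤ}
    (hc : ∀ k ∈ I, c k ∈ coordRing 𝒪 (⊤ : IntermediateField K M) x T)
    (hc1 : ∀ k ∈ I, 𝒪.valuation (c k) = 1) (hα : ∀ k ∈ I, ∀ i ∈ S, 0 ≤ α k i)
    (hinj : ∀ k ∈ I, ∀ l ∈ I, (∀ i ∈ S, α k i = α l i) → k = l)
    (hf : f ∈ coordRing 𝒪 L x T) (hfe : f = ∑ k ∈ I, c k * mon x S (α k))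
    {k₀ : ι} (hk₀ : k₀ ∈ I) (hmin : ∀ k ∈ I, ∀ i ∈ S.erase j, e (α k₀) i ≤ e (α k) i) :
    ∃ f' ∈ coordRing 𝒪 L y T, f = mon y (S.erase j) (e (α k₀)) * f' ∧
      ∃ s < I.card, 𝒪.valuation ((D' j)^[s] f') = 1 := by
  have hne : ∀ i ∈ S.erase j, y i ≠ 0 := fun i _ => hy.ne_zero i
  have hytop := hy.of_le (le_top : L ≤ ⊤)
  have hxtop := hx.of_le (le_top : L ≤ ⊤)
  have hST' : S.erase j ⊆ T := (S.erase_subset j).trans hST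
  have hSTj : S.erase j ⊆ T.erase j := Finset.erase_subset_erase j hST
  set R := coordRing 𝒪 (⊤ : IntermediateField K M) y T with hR
  have hle : coordRing 𝒪 (⊤ : IntermediateField K M) x T ≤ R := ht.coordRing_le hytop hST
  have hyR : y j ∈ R := apply_mem_coordRing (hST hj)
  have hnn : ∀ k ∈ I, ∀ i ∈ S, 0 ≤ e (α k) i := fun k hk => ht.nonneg _ (hα k hk)
  have hpow : ∀ n : ℤ, 0 ≤ n → y j ^ n ∈ R := fun n hn => by
    lift n to ℕ using hn
    rw [zpow_natCast]
    exact R.pow_mem hyR n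
  set m : ι → M := fun k => mon y (S.erase j) (e (α k) - e (α k₀)) with hmdef
  have hmR : ∀ k ∈ I, m k ∈ R := fun k hk =>
    mon_mem_coordRing hST' fun i hi => sub_nonneg.2 (hmin k hk i hi)
  set f' := ∑ k ∈ I, m k * (c k * y j ^ e (α k) j) with hf'def
  have hff' : f = mon y (S.erase j) (e (α k₀)) * f' := by
    rw [hfe, Finset.mul_sum]
    refine Finset.sum_congr rfl fun k _ => ?_
    simp only [hmdef]
    rw [ht.mon_eq, mon_erase hj, mon_sub hne]
    have := mon_ne_zero hne (e (α k₀))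
    field_simp
  have hFR : ∀ k ∈ I, c k * y j ^ e (α k) j ∈ R := fun k hk =>
    R.mul_mem (hle (hc k hk)) (hpow _ (hnn k hk j hj))
  have hf'top : f' ∈ R := R.sum_mem fun k hk => R.mul_mem (hmR k hk) (hFR k hk)
  have hf' : f' ∈ coordRing 𝒪 L y T :=
    hy.mem_of_eq_mul (ht.coordRing_le hy hST hf)
      (mon_mem_coordRing hST' fun i hi => hnn k₀ hk₀ i (Finset.mem_of_mem_erase hi))
      (mon_ne_zero hne _) hf'top hff'
  refine ⟨f', hf', hff', ?_⟩
  set J : AddSubgroup M := AddSubgroup.closure {b | ∃ r ∈ R, ∃ i ∈ S.erase j, b = r * y i} with hJ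
  have hJR : ∀ r ∈ R, ∀ b ∈ J, r * b ∈ J := by
    intro r hr b hb
    induction hb using AddSubgroup.closure_induction with
    | mem b hb =>
      obtain ⟨r', hr', i, hi, rfl⟩ := hb
      exact AddSubgroup.subset_closure ⟨r * r', R.mul_mem hr hr', i, hi, (mul_assoc _ _ _).symm⟩
    | zero => simp
    | add a b _ _ ha hb => rw [mul_add]; exact J.add_mem ha hb
    | neg a _ ha => rw [mul_neg]; exact J.neg_mem ha
  have hJD : ∀ b ∈ J, D' j b ∈ J := by
    intro b hb
    induction hb using AddSubgroup.closure_induction with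
    | mem b hb =>
      obtain ⟨r, hr, i, hi, rfl⟩ := hb
      rw [Derivation.leibniz, hy.apply_eq, if_neg (Finset.ne_of_mem_erase hi).symm, smul_zero,
        zero_add, smul_eq_mul, mul_comm]
      exact AddSubgroup.subset_closure ⟨_, hytop.apply_mem hr j, i, hi, rfl⟩
    | zero => simp
    | add a b _ _ ha hb => rw [map_add]; exact J.add_mem ha hb
    | neg a _ ha => rw [map_neg]; exact J.neg_mem ha
  have hJ1 : ∀ b ∈ J, 𝒪.valuation b < 1 := by
    intro b hb'
    induction hb' using AddSubgroup.closure_induction with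
    | mem b hb' =>
      obtain ⟨r, hr, i, hi, rfl⟩ := hb'
      rw [mul_comm, map_mul]
      exact mul_lt_one_of_lt_of_le (hb.lt_one i hi) (hytop.valuation_le_one hr)
    | zero => simp
    | add a b _ _ ha hb => exact Valuation.map_add_lt _ ha hb
    | neg a _ ha => rwa [Valuation.map_neg]
  have hJm : ∀ a : σ → ℤ, (∀ i ∈ S.erase j, 0 ≤ a i) → (∃ i ∈ S.erase j, a i ≠ 0) →
      mon y (S.erase j) a ∈ J := by
    rintro a ha ⟨i, hi, hai⟩
    refine AddSubgroup.subset_closure ⟨mon y (S.erase j) (a - Pi.single i 1),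
      mon_mem_coordRing hST' fun k hk => ?_, i, hi, ?_⟩
    · have h1 := ha k hk
      by_cases hki : k = i
      · subst hki
        simp only [Pi.sub_apply, Pi.single_eq_same]
        omega
      · simpa [hki] using h1
    · rw [mon_sub hne, mon_single hi, zpow_one, div_mul_cancel₀ _ (hne i hi)]
  have hJx : ∀ t ∈ T, D' j (x t) ∈ J := by
    intro t htT
    by_cases htS : t ∈ S
    · have hnn1 : ∀ i ∈ S, 0 ≤ e (Pi.single t 1) i := ht.nonneg _ fun i _ => by
        by_cases hit : i = t
        · subst hit; simp
        · simp [hit]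
      have hmT : mon y (S.erase j) (e (Pi.single t 1)) ∈ coordRing 𝒪 L y (T.erase j) :=
        mon_mem_coordRing hSTj fun i hi => hnn1 i (Finset.mem_of_mem_erase hi)
      rw [ht.apply_eq htS, mon_erase hj, Derivation.leibniz,
        hy.apply_eq_zero hmT (T.notMem_erase j), smul_zero, zero_add, smul_eq_mul, mul_comm]
      refine hJR _ (hytop.apply_mem (hpow _ (hnn1 j hj)) j) _
        (hJm _ (fun i hi => hnn1 i (Finset.mem_of_mem_erase hi)) ?_)
      by_contra! h0
      have h1 := hm t htS
      rw [ht.apply_eq htS, mon_erase hj, map_mul, map_zpow₀, hyj, one_zpow, one_mul,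
        mon_congr (b := 0) (fun _ _ => rfl) h0, mon_zero, map_one] at h1
      exact lt_irrefl _ h1
    · rw [← ht.eq_of_notMem t htS, hy.apply_eq, if_neg (by rintro rfl; exact htS hj)]
      exact J.zero_mem
  have hJc : ∀ k ∈ I, D' j (c k) ∈ J := fun k hk =>
    hxtop.derivation_mem J (fun a ha b hb => hJR a (hle ha) b hb) (D' j) hJx (hc k hk)
  set I₀ := I.filter fun k => ∀ i ∈ S.erase j, e (α k) i = e (α k₀) i with hI₀
  have hsub : I₀ ⊆ I := Finset.filter_subset _ _
  have hu : D' j (y j) = 1 := by rw [hy.apply_eq, if_pos rfl]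
  suffices h : ∃ s < I₀.card, 𝒪.valuation ((D' j)^[s] f') = 1 by
    obtain ⟨s, hs, hs1⟩ := h
    exact ⟨s, hs.trans_le (Finset.card_le_card hsub), hs1⟩
  refine exists_iterate_derivation_valuation_eq_one (D := D' j) (u := y j) (J := J)
    (I := I₀) (f := f') (F := fun k => c k * y j ^ e (α k) j) (e := fun k => e (α k) j) (i := k₀)
    hy.algebraMap_mem hu hyj.le hJ1 (fun b hb => hJR _ hyR _ (hJD b hb))
    (Finset.mem_filter.2 ⟨hk₀, fun _ _ => rfl⟩) ?_ ?_ ?_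
    (fun s => hytop.valuation_le_one (hytop.iterate_mem hf'top j s)) ?_
  · intro k hk
    have hk := hsub hk
    have h0 : y j ≠ 0 := hy.ne_zero j
    have : y j * D' j (c k * y j ^ e (α k) j) - (e (α k) j : ℤ) * (c k * y j ^ e (α k) j) =
        y j * y j ^ e (α k) j * D' j (c k) := by
      rw [Derivation.leibniz, Derivation.leibniz_zpow, hu, zpow_sub_one₀ h0]
      simp only [smul_eq_mul, zsmul_eq_mul, mul_one]
      field_simp
      ring
    rw [this]
    exact hJR _ (R.mul_mem hyR (hpow _ (hnn k hk j hj))) _ (hJc k hk)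
  · intro k hk l hl hkl
    obtain ⟨hk, hk'⟩ := Finset.mem_filter.1 hk
    obtain ⟨hl, hl'⟩ := Finset.mem_filter.1 hl
    refine hinj k hk l hl fun i hi => sub_eq_zero.1 ?_
    refine ht.eq_zero_of_apply_eq_zero (a := α k - α l) (fun i hi => ?_) i hi
    rw [map_sub, Pi.sub_apply, sub_eq_zero]
    by_cases hij : i = j
    · subst hij; exact hkl
    · have hi' := Finset.mem_erase.2 ⟨hij, hi⟩
      rw [hk' i hi', hl' i hi']
  · rw [hf'def, ← Finset.sum_filter_add_sum_filter_not I
      fun k => ∀ i ∈ S.erase j, e (α k) i = e (α k₀) i, ← hI₀, add_sub_right_comm,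
      ← Finset.sum_sub_distrib]
    refine J.add_mem (J.sum_mem fun k hk => ?_) (J.sum_mem fun k hk => ?_)
    · have : m k = 1 := by
        simp only [hmdef]
        rw [mon_congr (b := 0) (fun _ _ => rfl) fun i hi => by
          simpa [sub_eq_zero] using (Finset.mem_filter.1 hk).2 i hi, mon_zero]
      rw [this, one_mul, sub_self]
      exact J.zero_mem
    · obtain ⟨hk, hk'⟩ := Finset.mem_filter.1 hk
      push Not at hk'
      obtain ⟨i, hi, hne'⟩ := hk'
      rw [mul_comm]
      exact hJR _ (hFR k hk) _ (hJm _ (fun i hi => sub_nonneg.2 (hmin k hk i hi))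
        ⟨i, hi, sub_ne_zero.2 hne'⟩)
  · rw [map_mul, hc1 k₀ hk₀, map_zpow₀, hyj, one_zpow, one_mul]

end MonomialSum

section Order

set_option linter.unusedSectionVars false

variable {K M : Type u} [Field K] [CharZero K] [Field M] [Algebra K M] {σ : Type} [DecidableEq σ]
  {𝒪 : ValuationSubring M} {L : IntermediateField K M} {x y : σ → M} {D D' : σ → Derivation K M M}
  {S T : Finset σ} {e : (σ → ℤ) ≃+ (σ → ℤ)} {f g : M}

/-- Every product of a function of order `d` in some coordinate direction with a function of the
remaining coordinates is monomializable. -/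
def IsMonomializableOfOrder (𝒪 : ValuationSubring M) (L : IntermediateField K M) (T : Finset σ)
    (d : ℕ) : Prop :=
  ∀ ⦃x : σ → M⦄ ⦃D : σ → Derivation K M M⦄, IsCoordSystem 𝒪 L x D → ∀ ⦃i⦄, i ∈ T →
    ∀ f ∈ coordRing 𝒪 L x T, ∀ g ∈ coordRing 𝒪 L x (T.erase i), g ≠ 0 →
      𝒪.valuation ((D i)^[d] f) = 1 → IsMonomializable 𝒪 L T x (f * g)

theorem isMonomializable_of_eq_sum_pow (hx : IsCoordSystem 𝒪 L x D) {i : σ} (hi : i ∈ T)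
    (hiS : i ∉ S) (hST : S ⊆ T) (hb : IsBlock 𝒪 S x) (hxi : 𝒪.valuation (x i) < 1) {I : Finset ℕ}
    (hI : I.Nonempty) (hP : ∀ s < I.card, IsMonomializableOfOrder 𝒪 L T s) {c : ℕ → M}
    {α : ℕ → σ → ℤ}
    (hc : ∀ k ∈ I, c k ∈ coordRing 𝒪 (⊤ : IntermediateField K M) x T)
    (hc1 : ∀ k ∈ I, 𝒪.valuation (c k) = 1) (hα : ∀ k ∈ I, ∀ i ∈ S, 0 ≤ α k i)
    (hf : f ∈ coordRing 𝒪 L x T) (hfe : f = ∑ k ∈ I, c k * (mon x S (α k) * x i ^ k)) {β : σ → ℤ}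
    (hβ : ∀ i ∈ S, 0 ≤ β i) : IsMonomializable 𝒪 L T x (f * mon x S β) := by
  have hmon : ∀ (a : σ → ℤ) (n : ℕ), mon x (insert i S) (Function.update a i n) =
      mon x S a * x i ^ n := fun a n => by
    rw [mon_insert hiS, Function.update_self, zpow_natCast, mul_comm]
    congr 1
    exact mon_congr (fun _ _ => rfl) fun k hk =>
      Function.update_of_ne (by rintro rfl; exact hiS hk) _ _
  have hnn : ∀ (a : σ → ℤ) (n : ℕ), (∀ k ∈ S, 0 ≤ a k) → ∀ k ∈ insert i S,
      0 ≤ Function.update a i (n : ℤ) k := by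
    intro a n ha k hk
    by_cases hki : k = i
    · subst hki; simp
    · simpa [hki] using ha k (Finset.mem_of_mem_insert_of_ne hk hki)
  have hST' : insert i S ⊆ T := Finset.insert_subset hi hST
  set α' : ℕ → σ → ℤ := fun k => Function.update (α k) i k with hα'
  have hα'nn : ∀ k ∈ I, ∀ l ∈ insert i S, 0 ≤ α' k l := fun k hk => hnn _ _ (hα k hk)
  have hinj : ∀ k ∈ I, ∀ l ∈ I, (∀ t ∈ insert i S, α' k t = α' l t) → k = l := by
    intro k _ l _ h
    have := h i (Finset.mem_insert_self i S)
    simpa [hα'] using this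
  have hfe' : f = ∑ k ∈ I, c k * mon x (insert i S) (α' k) := by
    rw [hfe]; exact Finset.sum_congr rfl fun k _ => by rw [hα', hmon]
  have hβ' := hnn β 0 hβ
  have hmβ := hmon β 0
  rw [pow_zero, mul_one] at hmβ
  set β' := Function.update β i ((0 : ℕ) : ℤ)
  rw [← hmβ]
  by_cases hbi : IsBlock 𝒪 (insert i S) x
  · exact isMonomializable_of_eq_sum hx hST' hbi hI hc hc1 hα'nn hinj hf hfe' hβ'
  obtain ⟨y, D₁, e₁, hy, ht₁, j, hj, hyj, hby⟩ := hx.exists_block_of_dependent hb hiS hxi hbi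
  obtain ⟨w, D₂, e₂, hw, ht₂, hbw, k₀, hk₀, hmin⟩ := hy.exists_forall_le hby I hI fun k => e₁ (α' k)
  have ht := ht₁.trans (ht₂.mono (Finset.erase_subset j _))
  set e := e₁.trans e₂
  have hwj : 𝒪.valuation (w j) = 1 := by
    rw [ht₂.eq_of_notMem j (Finset.notMem_erase j _), hyj]
  have hm : ∀ t ∈ insert i S, 𝒪.valuation (x t) < 1 := by
    intro t ht
    rcases Finset.mem_insert.1 ht with rfl | ht
    · exact hxi
    · exact hb.lt_one t ht
  obtain ⟨f', hf', hff', s, hs, hs1⟩ := exists_mon_mul_of_eq_sum hx hw ht hST' hm hj hwj hbw hc hc1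
    hα'nn hinj hf hfe' hk₀ hmin
  have hne : ∀ t ∈ (insert i S).erase j, w t ≠ 0 := fun t _ => hw.ne_zero t
  have hg := hP s hs hw (hST' hj) f' hf' (mon w ((insert i S).erase j) (e (α' k₀) + e β'))
    (mon_mem_coordRing (Finset.erase_subset_erase j hST') fun t htj => add_nonneg
      (ht.nonneg _ (hα'nn k₀ hk₀) t (Finset.mem_of_mem_erase htj))
      (ht.nonneg _ hβ' t (Finset.mem_of_mem_erase htj))) (mon_ne_zero hne _) hs1
  refine IsMonomializable.of_change (y := w)
    (fun t htT => ht.eq_of_notMem t fun h => htT (hST' h)) (fun t htT => ht.apply_mem hST' htT) ?_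
  have hpos : 0 ≤ e β' j := ht.nonneg _ hβ' j hj
  have hu : w j ^ e β' j ∈ coordRing 𝒪 L w T := by
    lift e β' j to ℕ using hpos with n
    rw [zpow_natCast]
    exact Subring.pow_mem _ (apply_mem_coordRing (hST' hj)) n
  convert hg.unit_mul hu (by rw [map_zpow₀, hwj, one_zpow]) using 1
  rw [hff', ht.mon_eq, mon_erase hj, mon_add hne]
  ring

theorem exists_tschirnhausen_sum [IsAlgClosed M] (hx : IsCoordSystem 𝒪 L x D) {i : σ} (hi : i ∈ T)
    (hf : f ∈ coordRing 𝒪 L x T) (n : ℕ) (hn : ∀ k ≤ n, 𝒪.valuation ((D i)^[k] f) < 1)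
    (hn1 : 𝒪.valuation ((D i)^[n + 1] f) = 1) :
    ∃ (I : Finset ℕ) (a c : ℕ → M), I.Nonempty ∧ I.card ≤ n + 1 ∧
      (∀ k ∈ I, a k ∈ coordRing 𝒪 (⊤ : IntermediateField K M) x (T.erase i) ∧ a k ≠ 0 ∧
        c k ∈ coordRing 𝒪 (⊤ : IntermediateField K M) x T ∧ 𝒪.valuation (c k) = 1) ∧
      f = ∑ k ∈ I, c k * (a k * ((D i)^[n] f) ^ k) := by
  classical
  have hxtop := hx.of_le (le_top : L ≤ ⊤)
  have hftop := coordRing_le_top hf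
  have hz := hxtop.iterate_mem hftop i n
  have hDz : D i ((D i)^[n] f) = (D i)^[n + 1] f := (Function.iterate_succ_apply' _ _ _).symm
  have hDz1 : 𝒪.valuation (D i ((D i)^[n] f)) = 1 := by rw [hDz, hn1]
  have hx' := hxtop.update (j := i) (w := (D i)^[n] f) (hxtop.coordRing_le hz) fun h0 => by
    simp [h0] at hDz1
  have hR := hxtop.coordRing_update hi hz hDz1
  have hR₀ : coordRing 𝒪 (⊤ : IntermediateField K M) (Function.update x i ((D i)^[n] f)) (T.erase i) =
      coordRing 𝒪 (⊤ : IntermediateField K M) x (T.erase i) :=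
    coordRing_congr fun t ht => Function.update_of_ne (Finset.ne_of_mem_erase ht) _ _
  obtain ⟨a, c, ha, hc, hc1, hfe⟩ := exists_tschirnhausen (D := D i) hx.algebraMap_mem
    (fun a ha => hxtop.valuation_le_one ha) (hxtop.coordRing_subset (T.erase_subset i))
    (fun a ha h => hxtop.inv_mem ha h) (fun a ha => hxtop.apply_mem ha i)
    (fun a ha => hxtop.apply_eq_zero ha (T.notMem_erase i)) hftop n hn hn1 fun g hg => by
      rw [← hR] at hg
      obtain ⟨a, ha, w, hw, h⟩ := hx'.exists_eq_add_mul hi (by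
        rw [Function.update_self]; exact hn n le_rfl) hg
      rw [Function.update_self] at h
      exact ⟨a, hR₀ ▸ ha, w, hR ▸ hw, h⟩
  have hmem : ∀ k, k ∈ (Finset.range n).filter (fun k => a k ≠ 0) ↔ k < n ∧ a k ≠ 0 := by simp
  have hnot : n + 1 ∉ (Finset.range n).filter (fun k => a k ≠ 0) := by simp
  refine ⟨insert (n + 1) ((Finset.range n).filter fun k => a k ≠ 0), Function.update a (n + 1) 1, c,
    Finset.insert_nonempty _ _, ?_, fun k hk => ?_, ?_⟩
  · rw [Finset.card_insert_of_notMem hnot]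
    exact Nat.succ_le_succ ((Finset.card_filter_le _ _).trans (Finset.card_range n).le)
  · rcases Finset.mem_insert.1 hk with rfl | hk
    · rw [Function.update_self]
      exact ⟨Subring.one_mem _, one_ne_zero, hc _, hc1 _ le_rfl (by omega)⟩
    · obtain ⟨hkn, hk0⟩ := (hmem k).1 hk
      rw [Function.update_of_ne (by omega)]
      exact ⟨ha k, hk0, hc k, hc1 k (by omega) (by omega)⟩
  · conv_lhs => rw [hfe]
    rw [Finset.sum_insert hnot, Function.update_self, one_mul, add_comm, Finset.sum_filter]
    congr 1
    refine Finset.sum_congr rfl fun k hk => ?_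
    have hk := Finset.mem_range.1 hk
    rw [Function.update_of_ne (by omega)]
    split_ifs with h
    · rfl
    · rw [not_not.1 h]; simp

/-- Finitely many nonzero functions can be monomialized simultaneously. -/
theorem IsCoordSystem.exists_simultaneous [IsAlgClosed M]
    (hM : ∀ f ∈ coordRing 𝒪 L x T, f ≠ 0 → IsMonomializable 𝒪 L T x f)
    (hx : IsCoordSystem 𝒪 L x D) {ι : Type} (I : Finset ι) {a : ι → M}
    (ha : ∀ k ∈ I, a k ∈ coordRing 𝒪 (⊤ : IntermediateField K M) x T ∧ a k ≠ 0)
    (hg : g ∈ coordRing 𝒪 L x T) (hg0 : g ≠ 0) :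
    ∃ y D', IsCoordSystem 𝒪 L y D' ∧ (∀ i ∉ T, y i = x i) ∧ (∀ i ∈ T, x i ∈ coordRing 𝒪 L y T) ∧
      ∃ S ⊆ T, IsBlock 𝒪 S y ∧
        (∃ β : σ → ℤ, (∀ i ∈ S, 0 ≤ β i) ∧ ∃ ε ∈ coordRing 𝒪 L y T, 𝒪.valuation ε = 1 ∧
          g = ε * mon y S β) ∧
        ∃ (α : ι → σ → ℤ) (ε : ι → M), ∀ k ∈ I, (∀ i ∈ S, 0 ≤ α k i) ∧
          ε k ∈ coordRing 𝒪 (⊤ : IntermediateField K M) y T ∧ 𝒪.valuation (ε k) = 1 ∧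
          a k = ε k * mon y S (α k) := by
  classical
  have hxtop := hx.of_le (le_top : L ≤ ⊤)
  have hN : ∀ k, ∃ b ∈ coordRing 𝒪 (⊤ : IntermediateField K M) x T, ∃ N : MvPolynomial T K, N ≠ 0 ∧
      (k ∈ I → a k * b = aeval (fun t : T => x t) N) := by
    intro k
    by_cases hk : k ∈ I
    · obtain ⟨b, hb, N, hN, h⟩ := hxtop.exists_mul_eq_aeval (ha k hk).1 (ha k hk).2
      exact ⟨b, hb, N, hN, fun _ => h⟩
    · exact ⟨0, Subring.zero_mem _, 1, one_ne_zero, fun h => absurd h hk⟩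
  choose b hb N hN hab using hN
  set P := ∏ k ∈ I, aeval (fun t : T => x t) (N k) with hP
  have hPL : P ∈ coordRing 𝒪 L x T := Subring.prod_mem _ fun k _ => aeval_mem_coordRing (N k)
  have hN0 : ∀ k, aeval (fun t : T => x t) (N k) ≠ 0 := fun k h =>
    hN k ((injective_iff_map_eq_zero _).1 hx.injective _ h)
  have hP0 : P ≠ 0 := Finset.prod_ne_zero_iff.2 fun k _ => hN0 k
  obtain ⟨y, D', hy, hyx, hxy, S, hST, hbS, α, hα, ε, hε, hε1, h⟩ :=
    hM (P * g) (Subring.mul_mem _ hPL hg) (mul_ne_zero hP0 hg0)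
  have hle := hy.coordRing_le_coordRing hxy
  have hytop := hy.of_le (le_top : L ≤ ⊤)
  have hletop : coordRing 𝒪 (⊤ : IntermediateField K M) x T ≤
      coordRing 𝒪 (⊤ : IntermediateField K M) y T :=
    hytop.coordRing_le_coordRing fun t ht => coordRing_le_top (hxy t ht)
  refine ⟨y, D', hy, hyx, hxy, S, hST, hbS,
    hy.exists_eq_mul_mon hST hbS.lt_one hα (hle hg) (hle hPL) hε hε1 (by rw [mul_comm, h]), ?_⟩
  have hex : ∀ k, ∃ (β : σ → ℤ) (η : M), k ∈ I → (∀ i ∈ S, 0 ≤ β i) ∧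
      η ∈ coordRing 𝒪 (⊤ : IntermediateField K M) y T ∧ 𝒪.valuation η = 1 ∧
      a k = η * mon y S β := by
    intro k
    by_cases hk : k ∈ I
    · obtain ⟨β, hβ, η, hη, hη1, hη'⟩ := hytop.exists_eq_mul_mon hST hbS.lt_one hα
        (a := a k) (b := b k * ((∏ l ∈ I.erase k, aeval (fun t : T => x t) (N l)) * g))
        (hletop (ha k hk).1) (Subring.mul_mem _ (hletop (hb k)) (coordRing_le_top (hle
          (Subring.mul_mem _ (Subring.prod_mem _ fun l _ => aeval_mem_coordRing (N l)) hg))))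
        (coordRing_le_top hε) hε1 (by
          rw [← h, hP, ← Finset.mul_prod_erase I _ hk, ← hab k hk]; ring)
      exact ⟨β, η, fun _ => ⟨hβ, hη, hη1, hη'⟩⟩
    · exact ⟨0, 0, fun h => absurd h hk⟩
  choose β η hβη using hex
  exact ⟨β, η, hβη⟩

theorem isMonomializableOfOrder [IsAlgClosed M]
    (hM : ∀ i ∈ T, ∀ (x : σ → M) (D : σ → Derivation K M M), IsCoordSystem 𝒪 L x D →
      ∀ f ∈ coordRing 𝒪 L x (T.erase i), f ≠ 0 → IsMonomializable 𝒪 L (T.erase i) x f) (d : ℕ) :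
    IsMonomializableOfOrder 𝒪 L T d := by
  induction d using Nat.strong_induction_on with
  | _ d ih =>
  intro x D hx i hi f hf g hg hg0 hd
  by_cases hs : ∃ s < d, 𝒪.valuation ((D i)^[s] f) = 1
  · obtain ⟨s, hs, hs1⟩ := hs
    exact ih s hs hx hi f hf g hg hg0 hs1
  obtain _ | n := d
  · exact ((hM i hi x D hx g hg hg0).of_erase hi).unit_mul hf hd
  push Not at hs
  have hlt : ∀ k ≤ n, 𝒪.valuation ((D i)^[k] f) < 1 := fun k hk =>
    lt_of_le_of_ne (hx.valuation_le_one (hx.iterate_mem hf i k)) (hs k (by omega))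
  obtain ⟨I, a, c, hI, hcard, hac, hfe⟩ := exists_tschirnhausen_sum hx hi hf n hlt hd
  have hz := hx.iterate_mem hf i n
  have hDz : 𝒪.valuation (D i ((D i)^[n] f)) = 1 := by
    rw [← Function.iterate_succ_apply' (D i), hd]
  have hz1 := hlt n le_rfl
  set z := (D i)^[n] f
  have hx₁ := hx.update (j := i) (hx.coordRing_le hz) fun h0 => by simp [h0] at hDz
  have hR := hx.coordRing_update hi hz hDz
  have hRtop := (hx.of_le (le_top : L ≤ ⊤)).coordRing_update hi (coordRing_le_top hz) hDz
  have hx₁i : Function.update x i z i = z := Function.update_self _ _ _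
  have hx₁t : ∀ t, t ≠ i → Function.update x i z t = x t := fun t ht => Function.update_of_ne ht _ _
  set x₁ := Function.update x i z
  have hR₀ : ∀ L' : IntermediateField K M, coordRing 𝒪 L' x₁ (T.erase i) =
      coordRing 𝒪 L' x (T.erase i) := fun L' =>
    coordRing_congr fun t ht => hx₁t t (Finset.ne_of_mem_erase ht)
  obtain ⟨y, D', hy, hyx, hxy, S, hST, hb, ⟨β, hβ, ε, hε, hε1, hgε⟩, α, η, hαη⟩ :=
    hx₁.exists_simultaneous (T := T.erase i) (a := a) (hM i hi x₁ _ hx₁) I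
      (fun k hk => ⟨by rw [hR₀]; exact (hac k hk).1, (hac k hk).2.1⟩) (by rwa [hR₀]) hg0
  have hyi : y i = z := (hyx i (T.notMem_erase i)).trans hx₁i
  have hsub := T.erase_subset i
  have hxyT : ∀ t ∈ T, x₁ t ∈ coordRing 𝒪 L y T := by
    intro t ht
    by_cases hti : t = i
    · subst hti
      rw [hx₁i, ← hyi]
      exact apply_mem_coordRing hi
    · exact hy.coordRing_subset hsub (hxy t (Finset.mem_erase.2 ⟨hti, ht⟩))
  have hytop := hy.of_le (le_top : L ≤ ⊤)
  have hle : coordRing 𝒪 L x T ≤ coordRing 𝒪 L y T := hR ▸ hy.coordRing_le_coordRing hxyT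
  have hletop : coordRing 𝒪 (⊤ : IntermediateField K M) x T ≤
      coordRing 𝒪 (⊤ : IntermediateField K M) y T :=
    hRtop ▸ hytop.coordRing_le_coordRing fun t ht => coordRing_le_top (hxyT t ht)
  have hyf : IsMonomializable 𝒪 L T y (f * mon y S β) := by
    refine isMonomializable_of_eq_sum_pow hy hi (fun h => T.notMem_erase i (hST h))
      (hST.trans hsub) hb (by rwa [hyi]) hI (fun s hs => ih s (by omega)) (c := fun k => c k * η k)
      (α := α) (fun k hk => Subring.mul_mem _ (hletop (hac k hk).2.2.1)
        (hytop.coordRing_subset hsub (hαη k hk).2.1)) (fun k hk => ?_)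
      (fun k hk => (hαη k hk).1) (hle hf) ?_ hβ
    · rw [map_mul, (hac k hk).2.2.2, (hαη k hk).2.2.1, one_mul]
    · conv_lhs => rw [hfe]
      refine Finset.sum_congr rfl fun k hk => ?_
      rw [hyi, (hαη k hk).2.2.2]
      ring
  refine IsMonomializable.of_change (y := y) (fun t ht => ?_)
    (fun t ht => hle (apply_mem_coordRing ht)) ?_
  · rw [hyx t fun h => ht (hsub h), hx₁t t fun h => ht (h ▸ hi)]
  · rw [hgε, mul_left_comm]
    exact hyf.unit_mul (hy.coordRing_subset hsub hε) hε1

end Order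

section Monomialization

set_option linter.unusedSectionVars false

variable {K M : Type u} [Field K] [CharZero K] [Field M] [Algebra K M] {σ : Type} [DecidableEq σ]
  {𝒪 : ValuationSubring M} {L : IntermediateField K M} {x y : σ → M} {D D' : σ → Derivation K M M}
  {S T : Finset σ} {e : (σ → ℤ) ≃+ (σ → ℤ)} {f g : M}

theorem iterate_derivation_pow {Δ : Derivation K M M} {z : M} (hz : Δ z = 1) (k s : ℕ) :
    Δ^[s] (z ^ k) = k.descFactorial s * z ^ (k - s) := by
  induction s with
  | zero => simp
  | succ s ih =>
    rw [Function.iterate_succ_apply', ih, Nat.descFactorial_succ, Nat.cast_mul]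
    simp only [Derivation.leibniz, Derivation.leibniz_pow, hz, Derivation.map_natCast, smul_eq_mul,
      nsmul_eq_mul, mul_one, mul_zero, add_zero]
    rw [Nat.sub_sub]
    ring

theorem exists_eval₂_eq_aeval {i : σ} (p : MvPolynomial T K) :
    ∃ q : Polynomial (coordRing 𝒪 L x (T.erase i)),
      aeval (fun t : T => x t) p = q.eval₂ (coordRing 𝒪 L x (T.erase i)).subtype (x i) := by
  induction p using MvPolynomial.induction_on with
  | C c =>
    refine ⟨Polynomial.C ⟨algebraMap K M c, algebraMap_mem_coordRing c⟩, ?_⟩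
    rw [Polynomial.eval₂_C, MvPolynomial.algHom_C]
    rfl
  | add p q hp hq =>
    obtain ⟨p', hp⟩ := hp
    obtain ⟨q', hq⟩ := hq
    exact ⟨p' + q', by rw [map_add, hp, hq, Polynomial.eval₂_add]⟩
  | mul_X p t hp =>
    obtain ⟨p', hp⟩ := hp
    by_cases hti : t = i
    · exact ⟨p' * Polynomial.X, by
        rw [map_mul, hp, Polynomial.eval₂_mul_X, MvPolynomial.aeval_X, hti]⟩
    · refine ⟨p' * Polynomial.C ⟨x t, apply_mem_coordRing (Finset.mem_erase.2 ⟨hti, t.2⟩)⟩, ?_⟩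
      rw [map_mul, hp, MvPolynomial.aeval_X, Polynomial.eval₂_mul, Polynomial.eval₂_C]
      rfl

theorem isMonomializable_empty (hx : IsCoordSystem 𝒪 L x D)
    (hf : f ∈ coordRing 𝒪 L x ∅) (hf0 : f ≠ 0) : IsMonomializable 𝒪 L ∅ x f := by
  obtain ⟨b, hb, N, hN, h⟩ := hx.exists_mul_eq_aeval hf hf0
  have hf1 : 𝒪.valuation f = 1 := by
    obtain ⟨c, rfl⟩ := MvPolynomial.C_surjective _ N
    have hc : c ≠ 0 := by rintro rfl; exact hN (map_zero _)
    rw [MvPolynomial.algHom_C] at h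
    have h1 : 𝒪.valuation (f * (b * algebraMap K M c⁻¹)) = 1 := by
      rw [← mul_assoc, h, ← map_mul, mul_inv_cancel₀ hc, map_one, map_one]
    have h2 := hx.valuation_le_one hf
    have h3 := hx.valuation_le_one (Subring.mul_mem _ hb (algebraMap_mem_coordRing c⁻¹))
    rw [map_mul] at h1
    refine le_antisymm h2 ?_
    rw [← h1]
    exact mul_le_of_le_one_right' h3
  exact ⟨x, D, hx, fun _ _ => rfl, fun i hi => apply_mem_coordRing hi, ∅, subset_rfl,
    ⟨fun i hi => absurd hi (Finset.notMem_empty i), fun _ _ i hi => absurd hi (Finset.notMem_empty i)⟩,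
    0, fun i hi => absurd hi (Finset.notMem_empty i), f, hf, hf1, by simp [mon]⟩

theorem exists_iterate_of_eq_sum_pow (hx : IsCoordSystem 𝒪 L x D) {i : σ} {I : Finset ℕ} {b : ℕ → M}
    (hxi : 𝒪.valuation (x i) ≤ 1)
    (hb : ∀ k ∈ I, D i (b k) = 0) (hb1 : ∀ k ∈ I, 𝒪.valuation (b k) ≤ 1)
    {k₀ : ℕ} (hk₀ : k₀ ∈ I) (h1 : 𝒪.valuation (b k₀) = 1) :
    ∃ s, 𝒪.valuation ((D i)^[s] (∑ k ∈ I, b k * x i ^ k)) = 1 := by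
  classical
  have hne : (I.filter fun k => 𝒪.valuation (b k) = 1).Nonempty :=
    ⟨k₀, Finset.mem_filter.2 ⟨hk₀, h1⟩⟩
  obtain ⟨hsI, hs1⟩ := Finset.mem_filter.1 (Finset.max'_mem _ hne)
  have hmax := Finset.le_max' (I.filter fun k => 𝒪.valuation (b k) = 1)
  set s := (I.filter fun k => 𝒪.valuation (b k) = 1).max' hne
  refine ⟨s, ?_⟩
  have hD : D i (x i) = 1 := by rw [hx.apply_eq, if_pos rfl]
  rw [iterate_derivation_sum, ← Finset.add_sum_erase _ _ hsI]
  refine valuation_eq_one_of_sub (a := (D i)^[s] (b s * x i ^ s)) ?_ ?_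
  · rw [iterate_derivation_mul (hb s hsI), iterate_derivation_pow hD, Nat.sub_self, pow_zero,
      mul_one, Nat.descFactorial_self, map_mul, hs1, one_mul,
      valuation_natCast_eq_one hx.algebraMap_mem s.factorial_ne_zero]
  · rw [sub_add_cancel_left, Valuation.map_neg]
    refine valuation_sum_lt_one _ _ fun k hk => ?_
    obtain ⟨hks, hk⟩ := Finset.mem_erase.1 hk
    rw [iterate_derivation_mul (hb k hk), iterate_derivation_pow hD]
    rcases lt_or_gt_of_ne hks with hlt | hlt
    · rw [Nat.descFactorial_of_lt hlt, Nat.cast_zero, zero_mul, mul_zero, map_zero]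
      exact zero_lt_one
    · rw [map_mul]
      refine mul_lt_one_of_lt_of_le (lt_of_le_of_ne (hb1 k hk) fun h => ?_) ?_
      · exact absurd (hmax k (Finset.mem_filter.2 ⟨hk, h⟩)) (not_le.2 hlt)
      · rw [map_mul, map_pow]
        refine mul_le_one' ?_ (pow_le_one' hxi _)
        exact_mod_cast valuation_intCast_le_one (𝒪 := 𝒪) (k.descFactorial s : ℤ)

/-- **Monomialization.** Along a valuation, a nonzero function becomes a monomial in a block of
rationally independent parameters after a suitable change of coordinates. -/
theorem IsCoordSystem.isMonomializable [IsAlgClosed M] (T : Finset σ) :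
    ∀ {x : σ → M} {D : σ → Derivation K M M}, IsCoordSystem 𝒪 L x D → ∀ f ∈ coordRing 𝒪 L x T,
      f ≠ 0 → IsMonomializable 𝒪 L T x f := by
  induction T using Finset.strongInduction with
  | H T ih =>
  intro x D hx f hf hf0
  rcases T.eq_empty_or_nonempty with rfl | ⟨i, hi⟩
  · exact isMonomializable_empty hx hf hf0
  have hM : ∀ i ∈ T, ∀ (x : σ → M) (D : σ → Derivation K M M), IsCoordSystem 𝒪 L x D →
      ∀ f ∈ coordRing 𝒪 L x (T.erase i), f ≠ 0 → IsMonomializable 𝒪 L (T.erase i) x f :=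
    fun i hi x D hx f hf hf0 => ih _ (Finset.erase_ssubset hi) hx f hf hf0
  obtain ⟨b, hb, N, hN, hfb⟩ := hx.exists_mul_eq_aeval hf hf0
  refine IsMonomializable.of_mul hf hb ?_
  rw [hfb]
  have hF : aeval (fun t : T => x t) N ∈ coordRing 𝒪 L x T := aeval_mem_coordRing N
  have hF0 : aeval (fun t : T => x t) N ≠ 0 := fun h =>
    hN ((injective_iff_map_eq_zero _).1 hx.injective _ h)
  obtain ⟨q, hq⟩ := exists_eval₂_eq_aeval (𝒪 := 𝒪) (L := L) (x := x) (i := i) N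
  rw [Polynomial.eval₂_eq_sum, Polynomial.sum] at hq
  set F := aeval (fun t : T => x t) N
  have hI : q.support.Nonempty := by
    rw [Finset.nonempty_iff_ne_empty]
    intro h
    rw [h, Finset.sum_empty] at hq
    exact hF0 hq
  obtain ⟨y, D₁, hy, hyx, hxy, S, hST, hbS, -, α, η, hαη⟩ := hx.exists_simultaneous
    (g := 1) (a := fun k => (q.coeff k : M)) (hM i hi x D hx) q.support
    (fun k hk => ⟨coordRing_le_top (q.coeff k).2, fun h =>
      (Polynomial.mem_support_iff.1 hk) (Subtype.ext h)⟩) (Subring.one_mem _) one_ne_zero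
  obtain ⟨w, D₂, e, hw, ht, hbw, k₀, hk₀, hmin⟩ := hy.exists_forall_le hbS q.support hI α
  have hsub := T.erase_subset i
  have hwi : w i = x i := by
    rw [ht.eq_of_notMem i fun h => T.notMem_erase i (hST h), hyx i (T.notMem_erase i)]
  have hne : ∀ t ∈ S, w t ≠ 0 := fun t _ => hw.ne_zero t
  have hwtop := hw.of_le (le_top : L ≤ ⊤)
  have hxw : ∀ t ∈ T, x t ∈ coordRing 𝒪 L w T := by
    intro t htT
    by_cases hti : t = i
    · rw [hti, ← hwi]
      exact apply_mem_coordRing hi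
    · exact hw.coordRing_subset hsub
        (ht.coordRing_le hw hST (hxy t (Finset.mem_erase.2 ⟨hti, htT⟩)))
  have hle := hw.coordRing_le_coordRing hxw
  set c : ℕ → M := fun k => η k * mon w S (e (α k) - e (α k₀)) with hc
  have hcmem : ∀ k ∈ q.support, c k ∈ coordRing 𝒪 (⊤ : IntermediateField K M) w (T.erase i) :=
    fun k hk => Subring.mul_mem _ (ht.coordRing_le hwtop hST (hαη k hk).2.1)
      (mon_mem_coordRing hST fun t htS => sub_nonneg.2 (hmin k hk t htS))
  have hfe : F = mon w S (e (α k₀)) * ∑ k ∈ q.support, c k * w i ^ k := by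
    rw [hq, Finset.mul_sum]
    refine Finset.sum_congr rfl fun k hk => ?_
    have := mon_ne_zero hne (e (α k₀))
    rw [Subring.subtype_apply, (hαη k hk).2.2.2, ht.mon_eq, hwi, hc]
    simp only
    rw [mon_sub hne]
    field_simp
  have hm0 : mon w S (e (α k₀)) ∈ coordRing 𝒪 L w (T.erase i) :=
    mon_mem_coordRing hST (ht.nonneg _ (hαη k₀ hk₀).1)
  have hf'top : ∑ k ∈ q.support, c k * w i ^ k ∈ coordRing 𝒪 (⊤ : IntermediateField K M) w T :=
    Subring.sum_mem _ fun k hk => Subring.mul_mem _ (hwtop.coordRing_subset hsub (hcmem k hk))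
      (Subring.pow_mem _ (apply_mem_coordRing hi) k)
  have hf' := hw.mem_of_eq_mul (hle hF) (hw.coordRing_subset hsub hm0) (mon_ne_zero hne _)
    hf'top hfe
  obtain ⟨s, hs⟩ := exists_iterate_of_eq_sum_pow hw (i := i) (I := q.support) (b := c)
    (hw.valuation_le_one (T := T) (apply_mem_coordRing hi))
    (fun k hk => hwtop.apply_eq_zero (hcmem k hk) (T.notMem_erase i))
    (fun k hk => hwtop.valuation_le_one (hcmem k hk)) hk₀ (by
      rw [hc]
      simp only
      rw [sub_self, mon_zero, mul_one, (hαη k₀ hk₀).2.2.1])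
  refine IsMonomializable.of_change (y := w) (fun t htT => ?_) hxw ?_
  · rw [ht.eq_of_notMem t fun h => htT (hsub (hST h)), hyx t fun h => htT (hsub h)]
  · rw [hfe, mul_comm]
    exact isMonomializableOfOrder hM s hw hi _ hf' _ hm0 (mon_ne_zero hne _) hs

end Monomialization

section CompositeValuation

/-- Composition of valuations: if `B` is a valuation ring with a local homomorphism to the fraction
field of a valuation ring `V`, then the elements of `B` mapping into `V` form a valuation ring. -/
theorem exists_composite_valuationSubring {L N F B V : Type*} [Field L] [Field N] [Field F]
    [CommRing B] [IsDomain B] [ValuationRing B] [Algebra B N] [IsFractionRing B N]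
    [CommRing V] [IsDomain V] [ValuationRing V] [Algebra V F] [IsFractionRing V F]
    (ρ : B →+* F) [IsLocalHom ρ] (ψ : L →+* N) :
    ∃ (W : ValuationSubring L) (π : W →+* V), ∀ l b v, ψ l = algebraMap B N b →
      ρ b = algebraMap V F v → ∃ h : l ∈ W, π ⟨l, h⟩ = v := by
  have hN := IsFractionRing.injective B N
  have hF := IsFractionRing.injective V F
  have key : ∀ l b, ψ l = algebraMap B N b →
      (∃ b v, ψ l = algebraMap B N b ∧ ρ b = algebraMap V F v) ∨
      (∃ b v, ψ l⁻¹ = algebraMap B N b ∧ ρ b = algebraMap V F v) := by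
    intro l b hb
    by_cases h0 : ρ b = 0
    · exact Or.inl ⟨b, 0, hb, by simp [h0]⟩
    obtain ⟨u, rfl⟩ := isUnit_of_map_unit ρ b (isUnit_iff_ne_zero.2 h0)
    rcases ValuationRing.isInteger_or_isInteger V (ρ u) with ⟨v, hv⟩ | ⟨v, hv⟩
    · exact Or.inl ⟨_, v, hb, hv.symm⟩
    · refine Or.inr ⟨(u⁻¹ : Bˣ), v, ?_, ?_⟩
      · rw [map_inv₀, hb, inv_eq_iff_eq_inv, eq_comm]
        exact inv_eq_of_mul_eq_one_left (by rw [← map_mul, Units.mul_inv, map_one])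
      · rw [hv, eq_comm]
        exact inv_eq_of_mul_eq_one_left (by rw [← map_mul, Units.inv_mul, map_one])
  let W : ValuationSubring L :=
    { carrier := {l | ∃ b v, ψ l = algebraMap B N b ∧ ρ b = algebraMap V F v}
      zero_mem' := ⟨0, 0, by simp, by simp⟩
      one_mem' := ⟨1, 1, by simp, by simp⟩
      add_mem' := by
        rintro _ _ ⟨b, v, hb, hv⟩ ⟨b', v', hb', hv'⟩
        exact ⟨b + b', v + v', by simp [hb, hb'], by simp [hv, hv']⟩
      mul_mem' := by
        rintro _ _ ⟨b, v, hb, hv⟩ ⟨b', v', hb', hv'⟩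
        exact ⟨b * b', v * v', by simp [hb, hb'], by simp [hv, hv']⟩
      neg_mem' := by
        rintro _ ⟨b, v, hb, hv⟩
        exact ⟨-b, -v, by simp [hb], by simp [hv]⟩
      mem_or_inv_mem' := fun l => by
        rcases ValuationRing.isInteger_or_isInteger B (ψ l) with ⟨b, hb⟩ | ⟨b, hb⟩
        · exact key l b hb.symm
        · have := key l⁻¹ b (by rw [map_inv₀, hb])
          rw [inv_inv] at this
          exact this.symm }
  choose β ν hβ hν using fun w : W => w.2
  have uniq : ∀ (w : W) b v, ψ w = algebraMap B N b → ρ b = algebraMap V F v → ν w = v := by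
    intro w b v hb hv
    have : β w = b := hN (by rw [← hβ, hb])
    exact hF (by rw [← hν, this, hv])
  let π : W →+* V :=
    { toFun := ν
      map_zero' := uniq 0 0 0 (by simp) (by simp)
      map_one' := uniq 1 1 1 (by simp) (by simp)
      map_add' := fun a b => uniq _ (β a + β b) _ (by simp [← hβ]) (by simp [hν])
      map_mul' := fun a b => uniq _ (β a * β b) _ (by simp [← hβ]) (by simp [hν]) }
  exact ⟨W, π, fun l b v hb hv => ⟨⟨b, v, hb, hv⟩, uniq ⟨l, b, v, hb, hv⟩ b v hb hv⟩⟩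

/-- Valuation subrings extend along field extensions. -/
theorem exists_valuationSubring_extension {L M : Type*} [Field L] [Field M] (g : L →+* M)
    (W : ValuationSubring L) : ∃ 𝒪 : ValuationSubring M, ∀ l, g l ∈ 𝒪 ↔ l ∈ W := by
  obtain ⟨𝒪, h, hloc⟩ := IsLocalRing.exists_factor_valuationRing (g.comp W.subtype)
  refine ⟨𝒪, fun l => ⟨fun hl => ?_, fun hl => h ⟨l, hl⟩⟩⟩
  by_contra hlW
  have hinv := (W.mem_or_inv_mem l).resolve_left hlW
  have hl0 : l ≠ 0 := by
    rintro rfl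
    exact hlW W.zero_mem
  have hunit : IsUnit ((g.comp W.subtype).codRestrict 𝒪.toSubring h ⟨l⁻¹, hinv⟩) := by
    refine IsUnit.of_mul_eq_one (⟨g l, hl⟩ : 𝒪.toSubring) (Subtype.ext ?_)
    change g l⁻¹ * g l = 1
    rw [← map_mul, inv_mul_cancel₀ hl0, map_one]
  obtain ⟨v, hv⟩ := (isUnit_of_map_unit _ _ hunit).exists_right_inv
  have : l⁻¹ * v = 1 := congrArg Subtype.val hv
  have hlv : l = v := by
    rw [eq_inv_of_mul_eq_one_right this, inv_inv]
  exact hlW (hlv ▸ v.2)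

/-- The substitution `X ↦ y + t` of a generic point of the space of power series specializing
to `y` in the coordinate that is not in `τ`. -/
theorem exists_powerSeries_lift {K F : Type*} [Field K] [Field F] [Algebra K F] {τ : Type*}
    {x : τ → F} (hx : AlgebraicIndependent K x) (a : F) :
    ∃ g : MvPolynomial (Option τ) K →+* PowerSeries F, Function.Injective g ∧
      ∀ p, PowerSeries.constantCoeff (g p) = aeval (fun o : Option τ => o.elim a x) p := by
  let e := MvPolynomial.optionEquivLeft K τ
  let m : Polynomial (MvPolynomial τ K) →+* Polynomial F :=
    Polynomial.mapRingHom (aeval x : MvPolynomial τ K →ₐ[K] F).toRingHom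
  let s : Polynomial F →+* Polynomial F := (Polynomial.taylorAlgHom a).toRingHom
  let c : Polynomial F →+* PowerSeries F := Polynomial.coeToPowerSeries.ringHom
  refine ⟨(c.comp s).comp (m.comp e.toRingEquiv.toRingHom), ?_, fun p => ?_⟩
  · have hc : Function.Injective c := Polynomial.coe_injective F
    have hs : Function.Injective s := Polynomial.taylor_injective a
    have hm : Function.Injective m := Polynomial.map_injective _ hx
    exact (hc.comp hs).comp (hm.comp e.injective)
  · have : ((PowerSeries.constantCoeff (R := F)).comp
        ((c.comp s).comp (m.comp e.toRingEquiv.toRingHom))) =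
        (aeval (fun o : Option τ => o.elim a x) : MvPolynomial (Option τ) K →ₐ[K] F).toRingHom := by
      refine MvPolynomial.ringHom_ext (fun r => ?_) fun o => ?_
      · simp [c, s, m, e]
      · cases o <;> simp [c, s, m, e]
    exact RingHom.congr_fun this p

end CompositeValuation

section Specialization

theorem isAlgebraic_of_mem_etaleClosure {P R V : Type u} [CommRing P] [CommRing R] [IsDomain R]
    [CommRing V] [IsDomain V] [Algebra R V] [FaithfulSMul R V] {i : P →+* V} {κ : P →+* R}
    (hκ : (algebraMap R V).comp κ = i) {b : V} (hb : b ∈ etaleClosure i ⊤) : IsAlgebraic R b := by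
  obtain ⟨E, _, j, φ, hE, e, rfl⟩ := (mem_etaleClosure_iff fun _ => Subring.mem_top _).1 hb
  let k := FractionRing R
  let F := FractionRing V
  have : FaithfulSMul R F := by
    rw [faithfulSMul_iff_algebraMap_injective, IsScalarTower.algebraMap_eq R V F]
    exact (IsFractionRing.injective V F).comp (FaithfulSMul.algebraMap_injective R V)
  let : Algebra k F := FractionRing.liftAlgebra R F
  have : IsScalarTower R k F := FractionRing.isScalarTower_liftAlgebra R F
  let : Algebra P E := j.toAlgebra
  have : Algebra.Etale P E := hE.etale
  let : Algebra P k := ((algebraMap R k).comp κ).toAlgebra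
  let : Algebra P F := ((algebraMap V F).comp i).toAlgebra
  let α : k →ₐ[P] F := { algebraMap k F with
    commutes' := fun p => by
      change algebraMap k F (algebraMap R k (κ p)) = algebraMap V F (i p)
      rw [← IsScalarTower.algebraMap_apply R k F, IsScalarTower.algebraMap_apply R V F, ← hκ]
      rfl }
  let β : E →ₐ[P] F := { (algebraMap V F).comp φ with
    commutes' := fun p => by
      change algebraMap V F (φ (j p)) = algebraMap V F (i p)
      rw [← hE.comp_eq]
      rfl }
  let ψ : k ⊗[P] E →ₐ[P] F := Algebra.TensorProduct.productMap α β
  let ψ' : k ⊗[P] E →ₐ[k] F := { ψ.toRingHom with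
    commutes' := fun c => by
      change ψ (c ⊗ₜ 1) = α c
      simp [ψ] }
  have : Module.Finite k (k ⊗[P] E) := Algebra.FormallyUnramified.finite_of_free _ _
  have h1 : IsIntegral k (ψ' (1 ⊗ₜ e)) := (Algebra.IsIntegral.isIntegral (R := k) _).map ψ'
  have h2 : ψ' (1 ⊗ₜ e) = algebraMap V F (φ e) := by
    change ψ (1 ⊗ₜ e) = β e
    simp [ψ]
  rw [h2] at h1
  have h3 : IsAlgebraic R (algebraMap V F (φ e)) :=
    (IsFractionRing.isAlgebraic_iff R k F).2 h1.isAlgebraic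
  exact (isAlgebraic_algebraMap_iff (IsFractionRing.injective V F)).1 h3

theorem algebraicIndependent_of_mem_etaleClosure {K V : Type u} [Field K] [CommRing V] [IsDomain V]
    [Algebra K V] {τ τ' : Type} [Fintype τ] [Fintype τ'] {x : τ → V} {y : τ' → V}
    (hx : AlgebraicIndependent K x)
    (h : ∀ t, x t ∈ etaleClosure (aeval y : MvPolynomial τ' K →ₐ[K] V).toRingHom ⊤)
    (hcard : Fintype.card τ' ≤ Fintype.card τ) : AlgebraicIndependent K y := by
  let N := AlgebraicIndependent.matroid K V
  have hxy : Set.range x ⊆ N.closure (Set.range y) := by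
    rw [AlgebraicIndependent.matroid_closure_eq]
    rintro _ ⟨t, rfl⟩
    refine isAlgebraic_of_mem_etaleClosure (i := (aeval y : MvPolynomial τ' K →ₐ[K] V).toRingHom)
      (κ := ((aeval y : MvPolynomial τ' K →ₐ[K] V).codRestrict (Algebra.adjoin K (Set.range y))
        fun p => ?_).toRingHom) rfl (h t)
    rw [Algebra.adjoin_range_eq_range_aeval]
    exact ⟨p, rfl⟩
  have h1 : N.Indep (Set.range x) := hx.coe_range
  have h2 : ((Fintype.card τ : ℕ) : ℕ∞) ≤ N.eRk (Set.range y) := by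
    have h3 := N.eRk_mono hxy
    rw [h1.eRk_eq_encard, N.eRk_closure_eq, ← Set.image_univ, hx.injective.encard_image,
      Set.encard_univ, ENat.card_eq_coe_fintype_card] at h3
    exact h3
  have h4 : (Set.range y).encard ≤ (Fintype.card τ' : ℕ) := by
    rw [← ENat.card_eq_coe_fintype_card, ← Set.encard_univ, ← Set.image_univ]
    exact Set.encard_image_le _ _
  have h5 : ((Fintype.card τ' : ℕ) : ℕ∞) ≤ Fintype.card τ := by exact_mod_cast hcard
  have h6 : N.eRk (Set.range y) = (Set.range y).encard :=
    le_antisymm (N.eRk_le_encard _) (h4.trans (h5.trans h2))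
  have h7 : N.Indep (Set.range y) :=
    (Matroid.indep_iff_eRk_eq_encard_of_finite (Set.finite_range y)).2 h6
  have hinj : Function.Injective y := by
    have h8 : Fintype.card τ' ≤ (Set.range y).ncard := by
      have := (h5.trans h2).trans (N.eRk_le_encard _)
      rw [← (Set.finite_range y).cast_ncard_eq] at this
      exact_mod_cast this
    rw [← Set.injOn_univ, ← Set.ncard_image_iff (Set.finite_univ), Set.image_univ]
    refine le_antisymm ?_ ?_
    · rw [← Set.image_univ]
      exact Set.ncard_image_le Set.finite_univ
    · rwa [Set.ncard_univ, Nat.card_eq_fintype_card]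
  exact (algebraicIndependent_subtype_range hinj).1 h7

set_option linter.unusedSectionVars false

variable {K M V : Type u} [Field K] [CharZero K] [Field M] [Algebra K M] {σ : Type} [DecidableEq σ]
  {𝒪 : ValuationSubring M} {L : IntermediateField K M} {x y : σ → M} {D : σ → Derivation K M M}
  {T : Finset σ} [CommRing V] [Algebra K V]

theorem IsCoordSystem.apply_mem_etaleClosure (hy : IsCoordSystem 𝒪 L y D)
    (π : valRing 𝒪 L →+* V) (hπ : ∀ c h, π ⟨algebraMap K M c, h⟩ = algebraMap K V c)
    {i : σ} (hi : i ∈ T) (hi0 : π ⟨y i, hy.mem i⟩ = 0) {b : M} (hb : b ∈ coordRing 𝒪 L y T)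
    (hb' : b ∈ valRing 𝒪 L) :
    π ⟨b, hb'⟩ ∈ etaleClosure (aeval (fun t : (T.erase i : Finset σ) => π ⟨y t, hy.mem t⟩) :
      MvPolynomial (T.erase i : Finset σ) K →ₐ[K] V).toRingHom ⊤ := by
  obtain ⟨E, _, j, φ, hE, e, rfl⟩ := (mem_etaleClosure_iff hy.aeval_mem).1 hb
  have hf' := Set.inclusion_injective (Finset.coe_subset.2 (T.erase_subset i))
  obtain ⟨F, _, j₀, q, hj₀, -, hq, -, huniv⟩ := exists_etale_specialization
    (ι := (MvPolynomial.rename (Set.inclusion (Finset.coe_subset.2 (T.erase_subset i))) :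
      MvPolynomial (T.erase i : Finset σ) K →ₐ[K] MvPolynomial T K).toRingHom)
    (ε := (MvPolynomial.killCompl hf').toRingHom)
    (congrArg AlgHom.toRingHom (MvPolynomial.killCompl_comp_rename hf'))
    (X_dvd_of_killCompl_eq_zero hi) hE.etale
  let g : E →+* V := π.comp (φ.codRestrict (valRing 𝒪 L) hE.mem)
  obtain ⟨h, hh, hhq⟩ := huniv V
    (aeval (fun t : (T.erase i : Finset σ) => π ⟨y t, hy.mem t⟩)).toRingHom g (by
      refine MvPolynomial.ringHom_ext (fun c => ?_) fun t => ?_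
      · have h1 : φ (j (.C c)) = algebraMap K M c := by
          have := RingHom.congr_fun hE.comp_eq (.C c)
          simpa using this
        have h2 : g (j (.C c)) = π ⟨algebraMap K M c, h1 ▸ hE.mem _⟩ :=
          congrArg π (Subtype.ext h1)
        simp [h2, hπ]
      · have h1 : φ (j (.X t)) = y t := by
          have := RingHom.congr_fun hE.comp_eq (.X t)
          simpa using this
        have h2 : g (j (.X t)) = π ⟨y t, hy.mem t⟩ := congrArg π (Subtype.ext h1)
        by_cases ht : (t : σ) = i
        · have h0 : MvPolynomial.killCompl hf' (.X t : MvPolynomial T K) = 0 := by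
            rw [MvPolynomial.killCompl, MvPolynomial.aeval_X, dif_neg]
            rintro ⟨s, hs⟩
            exact Finset.ne_of_mem_erase s.2 ((congrArg Subtype.val hs).trans ht)
          have h3 : g (j (.X t)) = 0 := by
            rw [h2, ← hi0]
            exact congrArg π (Subtype.ext (congrArg y ht))
          simp [h3, h0]
        · obtain ⟨s, rfl⟩ : ∃ s, Set.inclusion (Finset.coe_subset.2 (T.erase_subset i)) s = t :=
            ⟨⟨t, Finset.mem_erase.2 ⟨ht, t.2⟩⟩, rfl⟩
          have h0 : MvPolynomial.killCompl hf' (.X (Set.inclusion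
              (Finset.coe_subset.2 (T.erase_subset i)) s) : MvPolynomial T K) = .X s := by
            rw [← MvPolynomial.rename_X, MvPolynomial.killCompl_rename_app]
          simp [h2, h0])
  refine (mem_etaleClosure_iff fun _ => Subring.mem_top _).2
    ⟨F, _, j₀, h, ⟨hj₀, hh, fun _ => Subring.mem_top _⟩, q e, ?_⟩
  exact RingHom.congr_fun hhq e

end Specialization

section Insertion

variable {K V : Type u} [Field K] [CharZero K] [CommRing V] [IsDomain V] [ValuationRing V]
  [Algebra K V]

theorem exists_derivation_algebraicClosure {σ : Type} [DecidableEq σ] (i : σ) :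
    ∃ D : Derivation K (AlgebraicClosure (FractionRing (MvPolynomial σ K)))
        (AlgebraicClosure (FractionRing (MvPolynomial σ K))),
      ∀ j, D (algebraMap (MvPolynomial σ K) _ (.X j)) = if i = j then 1 else 0 := by
  let A := MvPolynomial σ K
  let L₀ := FractionRing A
  let M := AlgebraicClosure L₀
  have : Algebra.FormallyEtale A L₀ := .of_isLocalization (nonZeroDivisors A)
  have : Algebra.FormallyEtale L₀ M := .of_isSeparable _ _
  have : Algebra.FormallyEtale A M := .comp A L₀ M
  let d : Derivation K A M := MvPolynomial.mkDerivation K fun j => if i = j then 1 else 0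
  obtain ⟨D, hD⟩ := exists_derivation_extension (E := M) d
  exact ⟨D, fun j => (hD _).trans (MvPolynomial.mkDerivation_X _ _ _)⟩

/-- A point of affine space with values in a valuation ring, all but one of whose coordinates are
algebraically independent, lifts to a coordinate system of a valued field. -/
theorem exists_isCoordSystem_specialization {τ : Type} {x : τ → V} (hx : AlgebraicIndependent K x)
    (a : V) [DecidableEq τ] :
    ∃ (M : Type u) (_ : Field M) (_ : Algebra K M) (_ : IsAlgClosed M) (𝒪 : ValuationSubring M)
      (L : IntermediateField K M) (X : Option τ → M) (D : Option τ → Derivation K M M)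
      (π : valRing 𝒪 L →+* V), IsCoordSystem 𝒪 L X D ∧
      ∀ (p : MvPolynomial (Option τ) K) h, π ⟨aeval X p, h⟩ = aeval (fun o : Option τ => o.elim a x) p := by
  let F := FractionRing V
  let A := MvPolynomial (Option τ) K
  let L₀ := FractionRing A
  let B := PowerSeries F
  let N := FractionRing B
  let M := AlgebraicClosure L₀
  have hF : Function.Injective (algebraMap V F) := IsFractionRing.injective V F
  have hxF : AlgebraicIndependent K fun t => algebraMap V F (x t) :=
    hx.map' (f := IsScalarTower.toAlgHom K V F) hF
  obtain ⟨g, hg, hgc⟩ := exists_powerSeries_lift hxF (algebraMap V F a)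
  have hgN : Function.Injective ((algebraMap B N).comp g) := (IsFractionRing.injective B N).comp hg
  let ψ : L₀ →+* N := IsFractionRing.lift hgN
  have hψ : ∀ p : A, ψ (algebraMap A L₀ p) = algebraMap B N (g p) :=
    fun p => IsFractionRing.lift_algebraMap hgN p
  have hloc : IsLocalHom (PowerSeries.constantCoeff (R := F)) :=
    ⟨fun _ h => PowerSeries.isUnit_iff_constantCoeff.2 h⟩
  obtain ⟨W, π₀, hW⟩ := exists_composite_valuationSubring (V := V) (F := F)
    (PowerSeries.constantCoeff (R := F)) ψ
  have hWA : ∀ p : A, ∃ h : algebraMap A L₀ p ∈ W, π₀ ⟨algebraMap A L₀ p, h⟩ =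
      aeval (fun o : Option τ => o.elim a x) p := fun p => by
    refine hW _ (g p) _ (hψ p) ((hgc p).trans ?_)
    rw [← MvPolynomial.aeval_algebraMap_apply]
    congr 2
    funext o
    cases o <;> rfl
  obtain ⟨𝒪, h𝒪⟩ := exists_valuationSubring_extension (algebraMap L₀ M) W
  let L : IntermediateField K M := (IsScalarTower.toAlgHom K L₀ M).fieldRange
  let θ : W →+* valRing 𝒪 L := ((algebraMap L₀ M).comp W.subtype).codRestrict (valRing 𝒪 L)
    fun w => mem_valRing.2 ⟨(h𝒪 _).2 w.2, ⟨w, rfl⟩⟩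
  have hθ : Function.Bijective θ := by
    refine ⟨fun w w' h => Subtype.ext ((algebraMap L₀ M).injective (congrArg Subtype.val h)), ?_⟩
    rintro ⟨_, hm, l, rfl⟩
    exact ⟨⟨l, (h𝒪 l).1 hm⟩, rfl⟩
  let π : valRing 𝒪 L →+* V := π₀.comp (RingEquiv.ofBijective θ hθ).symm.toRingHom
  let X : Option τ → M := fun o => algebraMap A M (.X o)
  have hX : ∀ p : A, aeval X p = algebraMap L₀ M (algebraMap A L₀ p) := fun p => by
    rw [← IsScalarTower.algebraMap_apply A L₀ M]
    exact AlgHom.congr_fun (MvPolynomial.algHom_ext (f := aeval X)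
      (g := IsScalarTower.toAlgHom K A M) fun o => MvPolynomial.aeval_X X o) p
  choose D hD using exists_derivation_algebraicClosure (K := K) (σ := Option τ)
  have hmem : ∀ p : A, aeval X p ∈ valRing 𝒪 L := fun p => by
    rw [hX p]
    exact (θ ⟨_, (hWA p).1⟩).2
  refine ⟨M, inferInstance, inferInstance, inferInstance, 𝒪, L, X, D, π, ⟨?_, ?_, hD⟩, ?_⟩
  · intro c
    have := (hmem (.C c)).1
    rwa [MvPolynomial.aeval_C] at this
  · intro o
    have := hmem (.X o)
    rwa [MvPolynomial.aeval_X] at this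
  · intro p h
    obtain ⟨hp, hp'⟩ := hWA p
    have h1 : (⟨aeval X p, h⟩ : valRing 𝒪 L) = RingEquiv.ofBijective θ hθ ⟨_, hp⟩ :=
      Subtype.ext (hX p)
    change π₀ ((RingEquiv.ofBijective θ hθ).symm _) = _
    rw [h1, RingEquiv.symm_apply_apply, hp']

theorem exists_algebraicIndependent_insert {τ : Type} [Fintype τ] {x : τ → V}
    (hx : AlgebraicIndependent K x) (a : V) :
    ∃ (τ' : Type) (_ : Fintype τ') (y : τ' → V), AlgebraicIndependent K y ∧
      (∀ t, x t ∈ etaleClosure (aeval y : MvPolynomial τ' K →ₐ[K] V).toRingHom ⊤) ∧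
      a ∈ etaleClosure (aeval y : MvPolynomial τ' K →ₐ[K] V).toRingHom ⊤ := by
  classical
  set z : Option τ → V := fun o => o.elim a x with hz
  by_cases hind : AlgebraicIndependent K z
  · have hmem : ∀ o, z o ∈
        etaleClosure (aeval z : MvPolynomial (Option τ) K →ₐ[K] V).toRingHom ⊤ := fun o => by
      have := LocalUniformization.apply_mem_etaleClosure
        (aeval z : MvPolynomial (Option τ) K →ₐ[K] V).toRingHom ⊤ (.X o)
      simpa using this
    exact ⟨Option τ, inferInstance, z, hind, fun t => hmem (some t), hmem none⟩
  obtain ⟨p, hp, hp0⟩ : ∃ p : MvPolynomial (Option τ) K, aeval z p = 0 ∧ p ≠ 0 := by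
    by_contra! hc
    exact hind ((injective_iff_map_eq_zero _).2 hc)
  obtain ⟨M, _, _, _, 𝒪, L, X, D, π, hX, hπ⟩ := exists_isCoordSystem_specialization hx a
  have hf : aeval X p ∈ coordRing 𝒪 L X Finset.univ := by
    have := aeval_mem_coordRing (𝒪 := 𝒪) (L := L) (x := X) (T := Finset.univ)
      (MvPolynomial.rename (fun o => ⟨o, Finset.mem_univ o⟩) p)
    rwa [MvPolynomial.aeval_rename] at this
  have hf0 : aeval X p ≠ 0 := fun h => hp0 (hX.algebraicIndependent (by simpa using h))
  obtain ⟨y, D', hy, -, hXy, S, -, hS, α, hα, ε, hε, hε1, hfac⟩ := hX.isMonomializable _ _ hf hf0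
  have hπK : ∀ c h, π ⟨algebraMap K M c, h⟩ = algebraMap K V c := fun c h => by
    have := hπ (.C c) (by simpa using h)
    simpa using this
  have hXV : ∀ o, π ⟨X o, hX.mem o⟩ = z o := fun o => by
    have := hπ (.X o) (by simpa using hX.mem o)
    simpa using this
  have hεV : ε ∈ valRing 𝒪 L := hy.coordRing_le hε
  have hεi : ε⁻¹ ∈ valRing 𝒪 L := hy.coordRing_le (hy.inv_mem hε hε1)
  obtain ⟨i, -, hi⟩ : ∃ i ∈ S, π ⟨y i, hy.mem i⟩ = 0 := by
    have h1 : (⟨aeval X p, hX.coordRing_le hf⟩ : valRing 𝒪 L) =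
        ⟨ε, hεV⟩ * ∏ i ∈ S, ⟨y i, hy.mem i⟩ ^ (α i).toNat := by
      refine Subtype.ext (hfac.trans ?_)
      rw [Subring.coe_mul, SubmonoidClass.coe_finsetProd, mon]
      congr 1
      refine Finset.prod_congr rfl fun i hi => ?_
      rw [Subring.coe_pow, ← zpow_natCast, Int.toNat_of_nonneg (hα i hi)]
    have h2 : π ⟨ε, hεV⟩ ≠ 0 := by
      refine (IsUnit.map π (IsUnit.of_mul_eq_one ⟨ε⁻¹, hεi⟩ (Subtype.ext ?_))).ne_zero
      refine mul_inv_cancel₀ ?_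
      rintro rfl
      simp at hε1
    have h3 := hπ p (hX.coordRing_le hf)
    rw [hp, h1, map_mul, mul_eq_zero, or_iff_right h2, map_prod, Finset.prod_eq_zero_iff] at h3
    obtain ⟨i, hi, h4⟩ := h3
    rw [map_pow] at h4
    exact ⟨i, hi, eq_zero_of_pow_eq_zero h4⟩
  have hmem : ∀ o, z o ∈ etaleClosure (aeval (fun t : (Finset.univ.erase i : Finset (Option τ)) =>
      π ⟨y t, hy.mem t⟩) :
      MvPolynomial (Finset.univ.erase i : Finset (Option τ)) K →ₐ[K] V).toRingHom ⊤ := fun o => by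
    rw [← hXV o]
    exact hy.apply_mem_etaleClosure π hπK (Finset.mem_univ i) hi (hXy o (Finset.mem_univ o)) _
  refine ⟨_, inferInstance, fun t : (Finset.univ.erase i : Finset (Option τ)) =>
    π ⟨y t, hy.mem t⟩, ?_, fun t => hmem (some t), hmem none⟩
  refine algebraicIndependent_of_mem_etaleClosure hx (fun t => hmem (some t)) ?_
  simp

end Insertion

section SmoothSubalgebra

variable {K V : Type u} [Field K] [CharZero K] [CommRing V] [IsDomain V] [ValuationRing V]
  [Algebra K V]

theorem exists_algebraicIndependent_forall_mem (s : Finset V) :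
    ∃ (τ : Type) (_ : Fintype τ) (y : τ → V), AlgebraicIndependent K y ∧
      ∀ a ∈ s, a ∈ etaleClosure (aeval y : MvPolynomial τ K →ₐ[K] V).toRingHom ⊤ := by
  classical
  induction s using Finset.induction_on with
  | empty =>
    refine ⟨PEmpty, inferInstance, PEmpty.elim, ?_, by simp⟩
    rw [algebraicIndependent_empty_type_iff]
    exact FaithfulSMul.algebraMap_injective K V
  | insert a s _ ih =>
    obtain ⟨τ, _, x, hx, hs⟩ := ih
    obtain ⟨τ', _, y, hy, hxy, hay⟩ := exists_algebraicIndependent_insert hx a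
    refine ⟨τ', inferInstance, y, hy, fun b hb => ?_⟩
    rcases Finset.mem_insert.1 hb with rfl | hb
    · exact hay
    · exact etaleClosure_aeval_le x _ (fun _ => Subring.mem_top _) hxy (hs b hb)

theorem exists_smooth_subalgebra (s : Finset V) :
    ∃ A : Subalgebra K V, Algebra.Smooth K A ∧ ∀ a ∈ s, a ∈ A := by
  obtain ⟨τ, _, y, hy, hs⟩ := exists_algebraicIndependent_forall_mem (K := K) s
  obtain ⟨E, _, j, φ, hE, hsE⟩ := exists_etaleModel_of_finset (fun _ => Subring.mem_top _) s hs
  obtain ⟨e, he, hker⟩ := exists_isUnit_mul_ker_eq_zero j hE.etale φ (by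
    rw [hE.comp_eq]
    exact hy)
  let P := MvPolynomial τ K
  let : Algebra P E := j.toAlgebra
  let : Algebra K E := (j.comp (algebraMap K P)).toAlgebra
  have : IsScalarTower K P E := IsScalarTower.of_algebraMap_eq' rfl
  have : Algebra.Etale P E := hE.etale
  have : Algebra.Smooth K P := { }
  have : Algebra.Smooth K E := .comp K P E
  let E' := Localization.Away e
  have : Algebra.Smooth E E' := .of_isLocalization_Away e
  have : Algebra.Smooth K E' := .comp K E E'
  let φ' : E' →+* V := IsLocalization.Away.lift e he
  have hφ' : ∀ b, φ' (algebraMap E E' b) = φ b := fun b => IsLocalization.Away.lift_eq e he b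
  let ψ : E' →ₐ[K] V := { φ' with
    commutes' := fun c => by
      change φ' (algebraMap K E' c) = _
      rw [IsScalarTower.algebraMap_apply K E E', hφ']
      exact (RingHom.congr_fun hE.comp_eq (algebraMap K P c)).trans ((aeval y).commutes c) }
  have hψ : Function.Injective ψ := by
    refine (injective_iff_map_eq_zero φ').2 fun b hb => ?_
    obtain ⟨n, h, hn⟩ := IsLocalization.Away.surj e b
    have h0 : φ h = 0 := by rw [← hφ', ← hn, map_mul, hb, zero_mul]
    have h1 : algebraMap E E' h = 0 := by
      refine (IsLocalization.Away.algebraMap_isUnit (S := E') e).mul_right_eq_zero.1 ?_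
      rw [← map_mul, hker h h0, map_zero]
    rw [h1] at hn
    exact (((IsLocalization.Away.algebraMap_isUnit (S := E') e).pow n).mul_left_eq_zero).1 hn
  refine ⟨ψ.range, .of_equiv (AlgEquiv.ofInjective ψ hψ), fun a ha => ?_⟩
  obtain ⟨b, rfl⟩ := hsE a ha
  exact ⟨algebraMap E E' b, hφ' b⟩

end SmoothSubalgebra

end LocalUniformization

end LocalUniformization

/-- **Zariski's Uniformization Theorem.** A valuation ring `V` containing a field `K` of
characteristic zero is a filtered union of its smooth `K`-subalgebras. -/
theorem zariski_uniformization (K V : Type u) [Field K] [CharZero K]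
    [CommRing V] [IsDomain V] [ValuationRing V] [Algebra K V] :
    Subalgebra.IsFilteredUnion (fun A : Subalgebra K V => Algebra.Smooth K A) := by
  classical
  refine ⟨?_, fun A hA B hB => ?_, fun v => ?_⟩
  · obtain ⟨A, hA, -⟩ := LocalUniformization.exists_smooth_subalgebra (K := K) (∅ : Finset V)
    exact ⟨A, hA⟩
  · have hA' : Algebra.Smooth K A := hA
    have hB' : Algebra.Smooth K B := hB
    have hAfg : A.FG := A.fg_iff_finiteType.2 inferInstance
    have hBfg : B.FG := B.fg_iff_finiteType.2 inferInstance
    obtain ⟨s, rfl⟩ := hAfg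
    obtain ⟨t, rfl⟩ := hBfg
    obtain ⟨C, hC, hst⟩ := LocalUniformization.exists_smooth_subalgebra (K := K) (s ∪ t)
    exact ⟨C, hC, Algebra.adjoin_le fun a ha => hst a (Finset.mem_union_left _ ha),
      Algebra.adjoin_le fun a ha => hst a (Finset.mem_union_right _ ha)⟩
  · obtain ⟨A, hA, hv⟩ := LocalUniformization.exists_smooth_subalgebra (K := K) {v}
    exact ⟨A, hA, hv v (Finset.mem_singleton_self v)⟩
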